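/- Let M = {F = 0} be a germ of an irreducible singular real-analytic Levi-flat hypersurface at 0 ∈ ℂⁿ, n ≥ 2, with F(z) = Re(P(z)) + H(z, z̄), where P is a complex homogeneous polynomial of degree k with an isolated singularity at 0 ∈ ℂⁿ, the k-jet of H at 0 vanishes (H(z, z̄) = O(|z|^{k+1})), and H(z, z̄) = conj(H(z̄, z)). Then there exists a germ of holomorphic function f at 0 ∈ ℂⁿ with f(z) = P(z) + O(|z|^{k+1}) such that M = {Re(f) = 0} as germs of sets at 0. -/

import Mathlib

/-!
Let `FC(z, w) = P(z) + Ps(w) + …`, with `Ps(w) = conj (P (conj w))`, be the polarization of `2F`, so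
that `FC(z, z̄) = 2 F(z)` (`exists_polarization`). Blowing up the origin, `FC(r ξ) = r ^ k Φ(r, ξ)`
(`exists_blowup`), and the strict transform `{Φ = 0}` meets the exceptional divisor `r = 0` in the
cone `P(z) + Ps(w) = 0`. Away from `0` this cone is smooth, because `P` has an isolated singularity,
and connected, because `n ≥ 2` gives `P` and `Ps` nontrivial zeros (`cone_connected`). Hence an
analytic identity that holds on the strict transform near one point of the cone holds near all of
them (`Van.everywhere`); the data are collected in the structure `LeviSetup`.

Levi-flatness says that the Levi form vanishes at the real points `w = z̄`; these are a uniqueness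
set, so the polarized Levi form vanishes on the whole strict transform (`lev_van`). Equivalently, the
direction of `D_z FC` is constant along the fibres of the first projection. Near `(0, (0, m))`, where
`Ps m = 0`, the strict transform is a graph `w = m + τ(r, z) u`, and for small fixed `r ≠ 0` the
germ `f(z) = τ(r, z / r)` satisfies `df ∧ D_z FC = 0` (`first_integral`). It follows that `f(z) = g(w)`
on the hypersurface for some holomorphic germ `g` (`second_integral`).

The leading forms of `f - f(0)` and `g - g(0)` agree on the cone, which forces them to be `c P` and
`-c Ps` in degree `k`, with nothing in lower degree (`leading_pair`), and `c ≠ 0` for a suitable `r`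
(`frequently_order`). After normalisation `f = P + …` and `g = -Ps + …` (`exists_pair`). The germ
`(f(z) - conj (g (z̄))) / 2 = P + …` has real part zero on `M`. Its blow-up and that of `F` have a
common transversal direction at every zero of `Re P` on the unit sphere, so the inclusion of zero
sets is locally an equality (`zero_of_zero`, `local_iff`), and compactness of the sphere gives
equality of germs (`conclusion`).
-/

open Filter Topology

/-- Wirtinger derivative ∂/∂z_j of a (complex-valued) function at `p`:
`(1/2)(∂F/∂x_j − i ∂F/∂y_j)`. -/
noncomputable def wirtZ {n : ℕ} (F : (Fin n → ℂ) → ℂ) (j : Fin n) (p : Fin n → ℂ) : ℂ :=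
  (fderiv ℝ F p (Pi.single j 1) - Complex.I * fderiv ℝ F p (Pi.single j Complex.I)) / 2

/-- Wirtinger derivative ∂/∂z̄_j of a (complex-valued) function at `p`:
`(1/2)(∂F/∂x_j + i ∂F/∂y_j)`. -/
noncomputable def wirtZbar {n : ℕ} (F : (Fin n → ℂ) → ℂ) (j : Fin n) (p : Fin n → ℂ) : ℂ :=
  (fderiv ℝ F p (Pi.single j 1) + Complex.I * fderiv ℝ F p (Pi.single j Complex.I)) / 2

/-- The germ `M = {F = 0}` at `0` is Levi-flat: for every point `p` of `M* = M \ Sing(M)`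
near `0` and every `v` with `Σ_j F_{z_j}(p) v_j = 0` one has
`Σ_{i,j} F_{z_i z̄_j}(p) v_i conj(v_j) = 0`. -/
def LeviFlatGerm {n : ℕ} (F : (Fin n → ℂ) → ℝ) : Prop :=
  ∀ᶠ p in 𝓝 (0 : Fin n → ℂ), F p = 0 → fderiv ℝ F p ≠ 0 →
    ∀ v : Fin n → ℂ,
      (∑ j, wirtZ (fun z => ((F z : ℝ) : ℂ)) j p * v j) = 0 →
      (∑ i, ∑ j, wirtZbar (wirtZ (fun z => ((F z : ℝ) : ℂ)) i) j p * v i * (starRingEnd ℂ) (v j)) = 0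

/-- `F` is irreducible in the ring of germs at `0` of real-valued real-analytic functions:
in any factorization `F = g·h` one of the factors is a unit (i.e. does not vanish at `0`). -/
def IrreducibleRGerm {n : ℕ} (F : (Fin n → ℂ) → ℝ) : Prop :=
  ∀ g h : (Fin n → ℂ) → ℝ, AnalyticAt ℝ g 0 → AnalyticAt ℝ h 0 →
    (∀ᶠ z in 𝓝 (0 : Fin n → ℂ), F z = g z * h z) → g 0 ≠ 0 ∨ h 0 ≠ 0

/-- `φ` is a germ of biholomorphism `(ℂⁿ,0) → (ℂⁿ,0)` with local inverse `ι`. -/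
def IsGermBiholo {n : ℕ} (φ ι : (Fin n → ℂ) → (Fin n → ℂ)) : Prop :=
  AnalyticAt ℂ φ 0 ∧ AnalyticAt ℂ ι 0 ∧ φ 0 = 0 ∧ ι 0 = 0 ∧
  (∀ᶠ z in 𝓝 (0 : Fin n → ℂ), ι (φ z) = z) ∧ (∀ᶠ z in 𝓝 (0 : Fin n → ℂ), φ (ι z) = z)

/-- `φ` is volume-preserving (isochore): the determinant of its complex Jacobian is
identically `1` near `0`. -/
def IsVolumePreserving {n : ℕ} (φ : (Fin n → ℂ) → (Fin n → ℂ)) : Prop :=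
  ∀ᶠ z in 𝓝 (0 : Fin n → ℂ), LinearMap.det ((fderiv ℂ φ z).toLinearMap) = 1

/-- `ψ` is a germ of automorphism of `(ℂ,0)`. -/
def IsGermAuto (ψ : ℂ → ℂ) : Prop :=
  AnalyticAt ℂ ψ 0 ∧ ψ 0 = 0 ∧ deriv ψ 0 ≠ 0

/-! ### Order of vanishing and blow-up -/

/-- `g` is analytic at `0` and has a power series there whose terms of degree `< j` vanish. -/
def OrderGE (𝕜 : Type*) [NontriviallyNormedField 𝕜] {E G : Type*} [NormedAddCommGroup E]
    [NormedSpace 𝕜 E] [NormedAddCommGroup G] [NormedSpace 𝕜 G] (j : ℕ) (g : E → G) : Prop :=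
  ∃ p : FormalMultilinearSeries 𝕜 E G, HasFPowerSeriesAt g p 0 ∧ ∀ m < j, p m = 0

section Order
variable {𝕜 : Type*} [NontriviallyNormedField 𝕜] {E G : Type*} [NormedAddCommGroup E]
    [NormedSpace 𝕜 E] [NormedAddCommGroup G] [NormedSpace 𝕜 G]

lemma OrderGE.analyticAt {j : ℕ} {g : E → G} (h : OrderGE 𝕜 j g) : AnalyticAt 𝕜 g 0 := by
  obtain ⟨p, hp, -⟩ := h
  exact hp.analyticAt

/-- A term of a power series that vanishes on the diagonal can be replaced by zero. -/
lemma orderGE_succ_of_diag {g : E → G} {p : FormalMultilinearSeries 𝕜 E G} {j : ℕ}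
    (hp : HasFPowerSeriesAt g p 0) (h0 : ∀ m < j, p m = 0) (hj : ∀ x, p j (fun _ => x) = 0) :
    OrderGE 𝕜 (j + 1) g := by
  obtain ⟨r, hr⟩ := hp
  let q : FormalMultilinearSeries 𝕜 E G := fun m => if m = j then 0 else p m
  have hq1 : q j = 0 := if_pos rfl
  have hq2 : ∀ m, m ≠ j → q m = p m := fun m hm => if_neg hm
  refine ⟨q, ⟨r, ?_, hr.r_pos, ?_⟩, fun m hm => ?_⟩
  · refine hr.r_le.trans (FormalMultilinearSeries.radius_le_of_le fun m => ?_)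
    by_cases hm : m = j
    · rw [hm, hq1, norm_zero]; exact norm_nonneg _
    · rw [hq2 m hm]
  · intro y hy
    have h := hr.hasSum hy
    have heq : (fun m => q m (fun _ => y)) = fun m => p m (fun _ => y) := by
      funext m
      by_cases hm : m = j
      · rw [hm, hq1, hj y]; rfl
      · rw [hq2 m hm]
    rw [heq]; exact h
  · by_cases hmj : m = j
    · rw [hmj, hq1]
    · rw [hq2 m hmj]; exact h0 m (by omega)

lemma partialSum_of_order {p : FormalMultilinearSeries 𝕜 E G} {j : ℕ}
    (h0 : ∀ m < j, p m = 0) (x : E) : p.partialSum (j + 1) x = p j (fun _ => x) := by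
  rw [FormalMultilinearSeries.partialSum, Finset.sum_range_succ, Finset.sum_eq_zero, zero_add]
  intro i hi
  rw [h0 i (Finset.mem_range.1 hi)]; rfl

lemma orderGE_of_isBigO {g : E → G} (hg : AnalyticAt 𝕜 g 0) (j : ℕ)
    (hO : g =O[𝓝 0] fun x => ‖x‖ ^ j) : OrderGE 𝕜 j g := by
  suffices ∀ i ≤ j, OrderGE 𝕜 i g from this j le_rfl
  intro i
  induction i with
  | zero => intro _; obtain ⟨p, hp⟩ := hg; exact ⟨p, hp, by simp⟩
  | succ i ih =>
    intro hi
    obtain ⟨p, hp, h0⟩ := ih (by omega)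
    refine orderGE_succ_of_diag hp h0 fun x => ?_
    have h1 := hp.isBigO_sub_partialSum_pow (i + 1)
    simp only [zero_add, partialSum_of_order h0] at h1
    have h2 : g =O[𝓝 0] fun x => ‖x‖ ^ (i + 1) := by
      refine hO.trans ?_
      refine Asymptotics.IsBigO.of_bound 1 ?_
      filter_upwards [Metric.ball_mem_nhds (0 : E) one_pos] with y hy
      rw [one_mul, norm_pow, norm_pow, norm_norm]
      exact pow_le_pow_of_le_one (norm_nonneg _) (mem_ball_zero_iff.1 hy).le hi
    have h3 := h2.sub h1
    simp only [sub_sub_cancel] at h3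
    exact h3.continuousMultilinearMap_apply_eq_zero x

lemma OrderGE.isBigO {g : E → G} {j : ℕ} (h : OrderGE 𝕜 j g) :
    g =O[𝓝 0] fun x => ‖x‖ ^ j := by
  obtain ⟨p, hp, h0⟩ := h
  have h1 := hp.isBigO_sub_partialSum_pow j
  simp only [zero_add] at h1
  refine h1.congr_left fun x => ?_
  rw [FormalMultilinearSeries.partialSum, Finset.sum_eq_zero, sub_zero]
  intro i hi
  rw [h0 i (Finset.mem_range.1 hi)]; rfl

lemma orderGE_iff {g : E → G} {j : ℕ} :
    OrderGE 𝕜 j g ↔ AnalyticAt 𝕜 g 0 ∧ g =O[𝓝 0] fun x => ‖x‖ ^ j :=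
  ⟨fun h => ⟨h.analyticAt, h.isBigO⟩, fun h => orderGE_of_isBigO h.1 j h.2⟩

end Order

/-- Existence of the blow-up: `g(t x) = t ^ j B(t, x)`, with `B` analytic along `t = 0`, where it
is the leading form of `g`. -/
lemma exists_blowup {𝕜 : Type} [NontriviallyNormedField 𝕜] [CompleteSpace 𝕜] {E : Type}
    [NormedAddCommGroup E] [NormedSpace 𝕜 E] (j : ℕ) :
    ∀ {G : Type} [NormedAddCommGroup G] [NormedSpace 𝕜 G] [CompleteSpace G]
    {g : E → G} {p : FormalMultilinearSeries 𝕜 E G} (_ : HasFPowerSeriesAt g p 0)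
    (_ : ∀ m < j, p m = 0),
    ∃ B : 𝕜 × E → G, (∀ ξ, AnalyticAt 𝕜 B (0, ξ)) ∧
      (∀ ξ, ∀ᶠ y in 𝓝 ((0 : 𝕜), ξ), g (y.1 • y.2) = y.1 ^ j • B y) ∧
      (∀ ξ, B (0, ξ) = p j (fun _ => ξ)) := by
  have hsm : ∀ ξ : E, AnalyticAt 𝕜 (fun y : 𝕜 × E => y.1 • y.2) (0, ξ) := fun ξ =>
    analyticAt_fst.smul analyticAt_snd
  induction j with
  | zero =>
    intro G _ _ _ g p hp _
    refine ⟨fun y => g (y.1 • y.2), fun ξ => ?_, fun ξ => ?_, fun ξ => ?_⟩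
    · refine AnalyticAt.fun_comp ?_ (hsm ξ)
      simpa using hp.analyticAt
    · simp
    · simp only [zero_smul]; exact (hp.coeff_zero _).symm
  | succ j ih =>
    intro G _ _ _ g p hp h0
    obtain ⟨r, hr⟩ := hp
    set A : E → (E →L[𝕜] G) := p.shift.sum with hA
    have hrad : 0 < p.shift.radius := by
      rw [FormalMultilinearSeries.radius_shift]; exact hr.r_pos.trans_le hr.r_le
    have hAs := FormalMultilinearSeries.hasFPowerSeriesOnBall p.shift hrad
    have hgA : ∀ᶠ x in 𝓝 (0 : E), g x = A x x := by
      have h1 := hAs.unshift (z := (0 : G))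
      have h2 : p.shift.unshift (0 : G) = p := by
        funext m
        cases m with
        | zero => rw [h0 0 (by omega)]; ext v; simp [FormalMultilinearSeries.unshift]
        | succ m =>
          exact (continuousMultilinearCurryRightEquiv' 𝕜 m E G).symm_apply_apply (p (m + 1))
      rw [h2] at h1
      have h3 : r ≤ p.shift.radius := by
        rw [FormalMultilinearSeries.radius_shift]; exact hr.r_le
      have h4 := hr.unique (h1.mono hr.r_pos h3)
      filter_upwards [Metric.eball_mem_nhds (0 : E) hr.r_pos] with x hx
      simpa using h4 hx
    obtain ⟨B, hB1, hB2, hB3⟩ := ih hAs.hasFPowerSeriesAt (fun m hm => by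
      ext v w
      simp [FormalMultilinearSeries.shift, h0 (m + 1) (by omega)])
    refine ⟨fun y => B y y.2, fun ξ => ?_, fun ξ => ?_, fun ξ => ?_⟩
    · exact ((ContinuousLinearMap.id 𝕜 (E →L[𝕜] G)).analyticAt_bilinear (B (0, ξ), ξ)).comp₂
        (hB1 ξ) analyticAt_snd
    · have ht : Tendsto (fun y : 𝕜 × E => y.1 • y.2) (𝓝 (0, ξ)) (𝓝 0) := by
        have := (hsm ξ).continuousAt.tendsto
        simpa using this
      filter_upwards [ht.eventually hgA, hB2 ξ] with y h1 h2
      rw [h1, hA, h2, pow_succ]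
      simp [smul_smul, mul_comm]
    · simp only [hB3]
      refine (ContinuousMultilinearMap.curryRight_apply (p (j + 1)) _ _).trans ?_
      refine congrArg (p (j + 1)) (funext fun i => ?_)
      refine Fin.lastCases ?_ (fun i => ?_) i <;> simp

/-! ### Complexification and polarization -/

section Complexify
variable {ι : Type} [Fintype ι] [DecidableEq ι]

/-- The complexification of a power series with real coefficients. -/
noncomputable def complexifySeries (p : FormalMultilinearSeries ℝ (ι → ℝ) ℝ) :
    FormalMultilinearSeries ℂ (ι → ℂ) ℂ := fun m =>
  ∑ f : Fin m → ι, ((p m (fun a => Pi.single (f a) 1) : ℝ) : ℂ) •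
    (ContinuousMultilinearMap.mkPiAlgebra ℂ (Fin m) ℂ).compContinuousLinearMap
      (fun a => ContinuousLinearMap.proj (R := ℂ) (φ := fun _ : ι => ℂ) (f a))

lemma complexifySeries_apply (p : FormalMultilinearSeries ℝ (ι → ℝ) ℝ) (m : ℕ)
    (x : Fin m → ι → ℂ) : complexifySeries p m x =
      ∑ f : Fin m → ι, ((p m (fun a => Pi.single (f a) 1) : ℝ) : ℂ) * ∏ a, x a (f a) := by
  simp [complexifySeries]

lemma complexifySeries_ofReal (p : FormalMultilinearSeries ℝ (ι → ℝ) ℝ) (m : ℕ) (x : ι → ℝ) :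
    complexifySeries p m (fun _ i => (x i : ℂ)) = ((p m (fun _ => x) : ℝ) : ℂ) := by
  rw [complexifySeries_apply]
  have h1 : (p m (fun _ => x)) = ∑ f : Fin m → ι, (∏ a : Fin m, x (f a)) *
      p m (fun a => Pi.single (f a) 1) := by
    have h2 : x = ∑ i, x i • (Pi.single i 1 : ι → ℝ) := by
      rw [← pi_eq_sum_univ' x]
    conv_lhs => rw [h2]
    rw [ContinuousMultilinearMap.map_sum]
    refine Finset.sum_congr rfl fun f _ => ?_
    rw [ContinuousMultilinearMap.map_smul_univ, smul_eq_mul]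
  rw [h1]
  push_cast
  exact Finset.sum_congr rfl fun f _ => mul_comm _ _

lemma complexifySeries_star (p : FormalMultilinearSeries ℝ (ι → ℝ) ℝ) (m : ℕ) (x : ι → ℂ) :
    complexifySeries p m (fun _ => star x) = star (complexifySeries p m (fun _ => x)) := by
  rw [complexifySeries_apply, complexifySeries_apply, star_sum]
  refine Finset.sum_congr rfl fun f _ => ?_
  simp

lemma norm_complexifySeries_le (p : FormalMultilinearSeries ℝ (ι → ℝ) ℝ) (m : ℕ) :
    ‖complexifySeries p m‖ ≤ (Fintype.card ι + 1 : ℝ) ^ m * ‖p m‖ := by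
  refine ContinuousMultilinearMap.opNorm_le_bound (by positivity) fun x => ?_
  rw [complexifySeries_apply]
  refine (norm_sum_le _ _).trans ?_
  have h1 : ∀ f ∈ (Finset.univ : Finset (Fin m → ι)),
      ‖((p m (fun a => Pi.single (f a) 1) : ℝ) : ℂ) * ∏ a, x a (f a)‖ ≤
        ‖p m‖ * ∏ a, ‖x a‖ := by
    intro f _
    rw [norm_mul, norm_prod, Complex.norm_real]
    gcongr with a
    · refine ((p m).le_opNorm _).trans ?_
      refine mul_le_of_le_one_right (norm_nonneg _) (Finset.prod_le_one (fun _ _ => norm_nonneg _) fun a _ => ?_)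
      refine (pi_norm_le_iff_of_nonneg zero_le_one).2 fun i => ?_
      by_cases hi : i = f a
      · subst hi; simp
      · simp [Pi.single_eq_of_ne hi]
    · exact norm_le_pi_norm _ _
  refine (Finset.sum_le_sum h1).trans ?_
  rw [Finset.sum_const, nsmul_eq_mul, ← mul_assoc]
  gcongr
  simp only [Finset.card_univ, Fintype.card_fun, Fintype.card_fin]
  push_cast
  gcongr
  linarith

/-- A real-analytic germ extends to a holomorphic germ of the same order commuting with
conjugation. -/
lemma exists_complexify {j : ℕ} {g : (ι → ℝ) → ℝ} (h : OrderGE ℝ j g) :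
    ∃ G : (ι → ℂ) → ℂ, OrderGE ℂ j G ∧
      (∀ᶠ x in 𝓝 (0 : ι → ℝ), G (fun i => (x i : ℂ)) = ((g x : ℝ) : ℂ)) ∧
      ∀ x, G (star x) = star (G x) := by
  obtain ⟨p, ⟨r, hr⟩, h0⟩ := h
  have hrad : 0 < (complexifySeries p).radius := by
    obtain ⟨s, hs0, hs⟩ := ENNReal.lt_iff_exists_nnreal_btwn.1 (hr.r_pos.trans_le hr.r_le)
    obtain ⟨C, hC, hb⟩ := p.norm_mul_pow_le_of_lt_radius hs
    have hs0' : 0 < s := by exact_mod_cast hs0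
    have : ((s / (Fintype.card ι + 1) : NNReal) : ENNReal) ≤ (complexifySeries p).radius := by
      refine FormalMultilinearSeries.le_radius_of_bound _ C fun m => ?_
      refine le_trans ?_ (hb m)
      refine (mul_le_mul_of_nonneg_right (norm_complexifySeries_le p m) (by positivity)).trans ?_
      push_cast
      rw [div_pow]
      apply le_of_eq
      field_simp
    refine lt_of_lt_of_le ?_ this
    have : 0 < s / (Fintype.card ι + 1) := by positivity
    exact_mod_cast this
  refine ⟨(complexifySeries p).sum, ⟨complexifySeries p,
    (FormalMultilinearSeries.hasFPowerSeriesOnBall _ hrad).hasFPowerSeriesAt, fun m hm => ?_⟩,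
    ?_, fun x => ?_⟩
  · ext x
    rw [complexifySeries_apply, h0 m hm]
    simp
  · filter_upwards [Metric.eball_mem_nhds (0 : ι → ℝ) hr.r_pos] with x hx
    have h1 := hr.hasSum hx
    rw [zero_add] at h1
    have h2 := Complex.hasSum_ofReal.2 h1
    rw [FormalMultilinearSeries.sum, ← h2.tsum_eq]
    exact tsum_congr fun m => complexifySeries_ofReal p m x
  · rw [FormalMultilinearSeries.sum, FormalMultilinearSeries.sum, tsum_star]
    exact tsum_congr fun m => complexifySeries_star p m x

end Complexify

lemma OrderGE.comp_clm {𝕜 : Type*} [NontriviallyNormedField 𝕜] {E E' G : Type*}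
    [NormedAddCommGroup E] [NormedSpace 𝕜 E] [NormedAddCommGroup E'] [NormedSpace 𝕜 E']
    [NormedAddCommGroup G] [NormedSpace 𝕜 G] {j : ℕ} {g : E → G} (h : OrderGE 𝕜 j g)
    (L : E' →L[𝕜] E) : OrderGE 𝕜 j (fun x => g (L x)) := by
  rw [orderGE_iff] at h ⊢
  constructor
  · refine AnalyticAt.fun_comp ?_ (L.analyticAt 0)
    simpa using h.1
  · have ht : Tendsto L (𝓝 0) (𝓝 0) := by
      simpa using (L.continuous.tendsto 0)
    refine (h.2.comp_tendsto ht).trans ?_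
    refine Asymptotics.IsBigO.pow ?_ j
    exact (L.isBigO_id (𝓝 0)).norm_norm

/-- `x + i y` as a function of the `2n` real coordinates `(x, y)`. -/
noncomputable def realCoord (n : ℕ) : (Fin n ⊕ Fin n → ℝ) →L[ℝ] (Fin n → ℂ) :=
  LinearMap.toContinuousLinearMap
    { toFun := fun u j => (u (Sum.inl j) : ℂ) + Complex.I * (u (Sum.inr j) : ℂ)
      map_add' := fun u v => by ext j; simp; ring
      map_smul' := fun c u => by ext j; simp; ring }

/-- The complexified real coordinates `((z + w) / 2, (z - w) / 2i)` of a point `(z, w)`. -/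
noncomputable def cplxCoord (n : ℕ) : ((Fin n → ℂ) × (Fin n → ℂ)) →L[ℂ] (Fin n ⊕ Fin n → ℂ) :=
  LinearMap.toContinuousLinearMap
    { toFun := fun ξ => Sum.elim (fun j => (ξ.1 j + ξ.2 j) / 2)
        (fun j => (ξ.1 j - ξ.2 j) / (2 * Complex.I))
      map_add' := fun u v => by ext (j | j) <;> simp <;> ring
      map_smul' := fun c u => by ext (j | j) <;> simp <;> ring }

/-- Polarization: a real-analytic germ `H(z, z̄)` on `ℂⁿ` extends to a holomorphic germ
`H(z, w)`. -/
lemma exists_polarization {n j : ℕ} {H : (Fin n → ℂ) → ℝ} (hH : AnalyticAt ℝ H 0)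
    (hO : H =O[𝓝 0] fun z => ‖z‖ ^ j) :
    ∃ HC : (Fin n → ℂ) × (Fin n → ℂ) → ℂ, OrderGE ℂ j HC ∧
      (∀ᶠ z in 𝓝 (0 : Fin n → ℂ), HC (z, star z) = ((H z : ℝ) : ℂ)) ∧
      ∀ z w, HC (star w, star z) = star (HC (z, w)) := by
  have h1 := (orderGE_of_isBigO hH j hO).comp_clm (realCoord n)
  obtain ⟨G, hG1, hG2, hG3⟩ := exists_complexify h1
  refine ⟨fun ξ => G (cplxCoord n ξ), hG1.comp_clm _, ?_, fun z w => ?_⟩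
  · have ht : Tendsto (fun z : Fin n → ℂ => (Sum.elim (fun j => (z j).re) (fun j => (z j).im) :
        Fin n ⊕ Fin n → ℝ)) (𝓝 0) (𝓝 0) := by
      have hc : Continuous (fun z : Fin n → ℂ =>
          (Sum.elim (fun j => (z j).re) (fun j => (z j).im) : Fin n ⊕ Fin n → ℝ)) := by
        refine continuous_pi fun i => ?_
        rcases i with i | i <;> simp <;> fun_prop
      have := hc.tendsto 0
      convert this using 2
      ext (i | i) <;> simp
    filter_upwards [ht.eventually hG2] with z hz
    have e1 : (fun i => ((Sum.elim (fun j => (z j).re) (fun j => (z j).im) i : ℝ) : ℂ)) =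
        cplxCoord n (z, star z) := by
      ext (i | i)
      · simp [cplxCoord]
        apply Complex.ext <;> simp
      · simp [cplxCoord]
        rw [eq_div_iff (by simp)]
        apply Complex.ext <;> simp
        ring
    have e2 : realCoord n (Sum.elim (fun j => (z j).re) (fun j => (z j).im)) = z := by
      ext i
      simp [realCoord]
      rw [mul_comm]; exact Complex.re_add_im _
    rw [e1, e2] at hz
    exact hz
  · rw [← hG3]
    refine congrArg G ?_
    ext (i | i)
    · simp [cplxCoord, add_comm]
    · simp [cplxCoord]
      field_simp
      ring

lemma analyticAt_conj_conj {n : ℕ} {g : (Fin n → ℂ) → ℂ} (hg : AnalyticAt ℂ g 0) :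
    AnalyticAt ℂ (fun z => star (g (star z))) 0 := by
  obtain ⟨p, r, hr⟩ := hg
  let q : FormalMultilinearSeries ℂ (Fin n → ℂ) ℂ := fun m =>
    MultilinearMap.mkContinuous
      { toFun := fun x => star (p m (fun a => star (x a)))
        map_update_add' := fun x a u v => by
          have h : ∀ u : Fin n → ℂ, (fun b => star (Function.update x a u b)) =
              Function.update (fun b => star (x b)) a (star u) := fun u => by
            funext b
            by_cases hb : b = a
            · subst hb; simp
            · simp [Function.update_of_ne hb]
          rw [h, h, h, star_add, ContinuousMultilinearMap.map_update_add, star_add]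
        map_update_smul' := fun x a c u => by
          have h : ∀ u : Fin n → ℂ, (fun b => star (Function.update x a u b)) =
              Function.update (fun b => star (x b)) a (star u) := fun u => by
            funext b
            by_cases hb : b = a
            · subst hb; simp
            · simp [Function.update_of_ne hb]
          rw [h, h, star_smul, ContinuousMultilinearMap.map_update_smul, star_smul, star_star] }
      ‖p m‖ (fun x => by
        simp only [MultilinearMap.coe_mk, norm_star]
        refine ((p m).le_opNorm _).trans ?_
        simp)
  refine ⟨q, r, ?_, hr.r_pos, fun {y} hy => ?_⟩
  · refine hr.r_le.trans (FormalMultilinearSeries.radius_le_of_le fun m => ?_)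
    exact MultilinearMap.mkContinuous_norm_le _ (norm_nonneg _) _
  · have hy' : star y ∈ Metric.eball (0 : Fin n → ℂ) r := by
      simpa [enorm_eq_nnnorm] using hy
    have h1 := (hr.hasSum hy').star
    simp only [zero_add] at h1 ⊢
    exact h1

/-! ### Homogeneous polynomials with an isolated singularity -/

/-- A holomorphic function on `ℂⁿ`, homogeneous of degree `k > 0`, with an isolated critical point at
`0` and with a nontrivial zero. -/
structure IsHomSing {n : ℕ} (k : ℕ) (p : (Fin n → ℂ) → ℂ) : Prop where
  pos : 0 < k
  an : ∀ z, AnalyticAt ℂ p z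
  hom : ∀ (s : ℂ) z, p (s • z) = s ^ k * p z
  reg : ∀ z, z ≠ 0 → ∃ h, fderiv ℂ p z h ≠ 0
  zero : ∃ l, l ≠ 0 ∧ p l = 0

section Poly
open MvPolynomial

lemma hasFDerivAt_eval {n : ℕ} (P : MvPolynomial (Fin n) ℂ) (z : Fin n → ℂ) :
    HasFDerivAt (fun z => eval z P) (∑ i, eval z (pderiv i P) •
      ContinuousLinearMap.proj (R := ℂ) (φ := fun _ : Fin n => ℂ) i) z := by
  induction P using MvPolynomial.induction_on with
  | C a =>
    simp only [eval_C]
    refine (hasFDerivAt_const (𝕜 := ℂ) a z).congr_fderiv ?_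
    ext v; simp
  | add p q hp hq =>
    simp only [map_add]
    refine (hp.fun_add hq).congr_fderiv ?_
    ext v; simp [add_mul, Finset.sum_add_distrib]
  | mul_X p i hp =>
    have h1 := hp.mul (ContinuousLinearMap.proj (R := ℂ) (φ := fun _ : Fin n => ℂ) i).hasFDerivAt
    simp only [map_mul, eval_X]
    refine h1.congr_fderiv ?_
    ext v
    simp only [add_apply, smul_apply,
      ContinuousLinearMap.proj_apply, sum_apply, smul_eq_mul, pderiv_mul,
      map_add, map_mul, eval_X, pderiv_X, add_mul, Finset.sum_add_distrib, Finset.mul_sum]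
    rw [add_comm]
    congr 1
    · refine Finset.sum_congr rfl fun j _ => ?_
      ring
    · rw [Finset.sum_eq_single i]
      · simp
      · intro j _ hj
        simp [Pi.single_eq_of_ne hj.symm]
      · simp

lemma eval_smul_of_hom {n k : ℕ} {P : MvPolynomial (Fin n) ℂ} (hP : P.IsHomogeneous k) (s : ℂ)
    (z : Fin n → ℂ) : eval (s • z) P = s ^ k * eval z P := by
  rw [eval_eq, eval_eq, Finset.mul_sum]
  refine Finset.sum_congr rfl fun d hd => ?_
  have hd' := hP (mem_support_iff.1 hd)
  rw [Finsupp.weight_apply] at hd'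
  simp only [Pi.smul_apply, smul_eq_mul, mul_pow, Finset.prod_mul_distrib, Finset.prod_pow_eq_pow_sum]
  have : ∑ i ∈ d.support, d i = k := by
    rw [← hd', Finsupp.sum]; simp
  rw [this]; ring

/-- Only the nontrivial zero requires `n ≥ 2`: the restriction of `P` to the affine line `e₀ + s e₁` has
a root unless it is constant, and in that case homogeneity gives `P e₁ = 0`. -/
lemma isHomSing_of_poly {n k : ℕ} (hn : 2 ≤ n) (hk : 0 < k) {P : MvPolynomial (Fin n) ℂ}
    (hPhom : P.IsHomogeneous k)
    (hPsing : ∀ᶠ z in 𝓝 (0 : Fin n → ℂ), (∀ i, eval z (pderiv i P) = 0) → z = 0) :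
    IsHomSing k (fun z => eval z P) where
  pos := hk
  an z := AnalyticOnNhd.eval_mvPolynomial P z (Set.mem_univ _)
  hom s z := eval_smul_of_hom hPhom s z
  reg z hz := by
    have ht : Tendsto (fun s : ℂ => s • z) (𝓝[≠] 0) (𝓝 0) := by
      have : Continuous (fun s : ℂ => s • z) := by fun_prop
      simpa using (this.tendsto 0).mono_left nhdsWithin_le_nhds
    obtain ⟨s, hs, hs0⟩ := ((ht.eventually hPsing).and self_mem_nhdsWithin).exists
    have hs0 : s ≠ 0 := hs0
    have h1 : ∃ i, eval z (pderiv i P) ≠ 0 := by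
      by_contra! hcon
      have : s • z = 0 := hs fun i => by
        rw [eval_smul_of_hom hPhom.pderiv, hcon i, mul_zero]
      exact (smul_ne_zero hs0 hz) this
    obtain ⟨i, hi⟩ := h1
    refine ⟨Pi.single i 1, ?_⟩
    rw [(hasFDerivAt_eval P z).fderiv]
    simpa [Pi.single_apply] using hi
  zero := by
    let e0 : Fin n → ℂ := Pi.single ⟨0, by omega⟩ 1
    let e1 : Fin n → ℂ := Pi.single ⟨1, by omega⟩ 1
    let q : Polynomial ℂ := aeval (fun i => Polynomial.C (e0 i) + Polynomial.C (e1 i) * Polynomial.X) P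
    have hq : ∀ s, q.eval s = eval (e0 + s • e1) P := by
      intro s
      have : (Polynomial.evalRingHom s) q = eval (e0 + s • e1) P := by
        simp only [q]
        rw [aeval_def, hom_eval₂, ← coe_eval₂Hom, eval]
        congr 1
        · ext <;> simp <;> ring
      exact this
    by_cases hd : q.degree = 0
    · refine ⟨e1, ?_, ?_⟩
      · simp [e1]
      · rw [Polynomial.eq_C_of_degree_eq_zero hd] at hq
        simp only [Polynomial.eval_C] at hq
        have hc : Continuous (fun t : ℂ => eval (t • e0 + e1) P) := by
          have := (AnalyticOnNhd.eval_mvPolynomial (𝕜 := ℂ) P).continuousOn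
          rw [← continuousOn_univ] at *
          exact this.comp (by fun_prop) (fun _ _ => Set.mem_univ _)
        have h1 : Tendsto (fun t : ℂ => eval (t • e0 + e1) P) (𝓝[≠] 0) (𝓝 (eval e1 P)) := by
          simpa using (hc.tendsto 0).mono_left nhdsWithin_le_nhds
        have h2 : Tendsto (fun t : ℂ => t ^ k * q.coeff 0) (𝓝[≠] 0) (𝓝 0) := by
          have : Continuous (fun t : ℂ => t ^ k * q.coeff 0) := by fun_prop
          simpa [hk.ne'] using (this.tendsto 0).mono_left nhdsWithin_le_nhds
        refine tendsto_nhds_unique (h1.congr' ?_) h2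
        filter_upwards [self_mem_nhdsWithin] with t ht
        have ht : t ≠ 0 := ht
        rw [hq t⁻¹, ← eval_smul_of_hom hPhom, smul_add, smul_smul, mul_inv_cancel₀ ht, one_smul]
    · obtain ⟨s, hs⟩ := IsAlgClosed.exists_root q hd
      refine ⟨e0 + s • e1, fun h => ?_, by rw [← hq]; exact hs⟩
      have := congrFun h ⟨0, by omega⟩
      simp [e0, e1] at this

lemma eval_map_conj {n : ℕ} (P : MvPolynomial (Fin n) ℂ) (w : Fin n → ℂ) :
    eval w (map (starRingEnd ℂ) P) = star (eval (star w) P) := by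
  induction P using MvPolynomial.induction_on with
  | C a => simp
  | add p q hp hq => simp [hp, hq]
  | mul_X p i hp => simp [hp]

lemma isHomSing_conj {n k : ℕ} (hn : 2 ≤ n) (hk : 0 < k) {P : MvPolynomial (Fin n) ℂ}
    (hPhom : P.IsHomogeneous k)
    (hPsing : ∀ᶠ z in 𝓝 (0 : Fin n → ℂ), (∀ i, eval z (pderiv i P) = 0) → z = 0) :
    IsHomSing k (fun w => star (eval (star w) P)) := by
  have h := isHomSing_of_poly hn hk (P := map (starRingEnd ℂ) P) (hPhom.map _) ?_
  · simpa only [eval_map_conj] using h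
  · have ht : Tendsto (star : (Fin n → ℂ) → (Fin n → ℂ)) (𝓝 0) (𝓝 0) := by
      simpa using (continuous_star.tendsto (0 : Fin n → ℂ))
    filter_upwards [ht.eventually hPsing] with z hz h
    have h1 : star z = 0 := hz fun i => by
      have := h i
      rwa [pderiv_map, eval_map_conj, star_eq_zero] at this
    exact star_eq_zero.1 h1
end Poly

section HomSing
variable {n k : ℕ} {p : (Fin n → ℂ) → ℂ}

lemma IsHomSing.apply_zero (h : IsHomSing k p) : p 0 = 0 := by
  have := h.hom 0 0
  simpa [h.pos.ne'] using this

lemma IsHomSing.surj (h : IsHomSing k p) (c : ℂ) : ∃ z, p z = c := by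
  obtain ⟨z, hz⟩ : ∃ z, p z ≠ 0 := by
    by_contra! hcon
    obtain ⟨l, hl, -⟩ := h.zero
    obtain ⟨v, hv⟩ := h.reg l hl
    have : p = fun _ => 0 := funext hcon
    simp [this] at hv
  obtain ⟨s, hs⟩ := IsAlgClosed.exists_pow_nat_eq (c / p z) h.pos
  exact ⟨s • z, by rw [h.hom, hs]; field_simp⟩

end HomSing

/-! ### Regular hypersurfaces: charts, implicit functions, continuation -/

open scoped ContDiff

/-- Straightening of a regular hypersurface: with `L = DΦ(y₀)` and `L v = 1`, the map
`x ↦ y₀ + x + κ(x) v` is an analytic chart in which `Φ` becomes the linear form `L`; its inverse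
is `y ↦ (y - y₀) + (Φ(y) - L (y - y₀)) v`. -/
lemma exists_chart {𝕜 Y : Type*} [RCLike 𝕜] [NormedAddCommGroup Y] [NormedSpace 𝕜 Y]
    [CompleteSpace Y] {Φ : Y → 𝕜} {y₀ v : Y} {L : Y →L[𝕜] 𝕜} (hΦ : AnalyticAt 𝕜 Φ y₀)
    (h0 : Φ y₀ = 0) (hL : fderiv 𝕜 Φ y₀ = L) (hv : L v = 1) :
    ∃ κ : Y → 𝕜, AnalyticAt 𝕜 κ 0 ∧ κ 0 = 0 ∧
      (∀ᶠ x in 𝓝 0, Φ (y₀ + x + κ x • v) = L x) ∧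
      (∀ᶠ y in 𝓝 y₀, y₀ + (y - y₀ + (Φ y - L (y - y₀)) • v) +
        κ (y - y₀ + (Φ y - L (y - y₀)) • v) • v = y) := by
  set Θ : Y → Y := fun y => y - y₀ + (Φ y - L (y - y₀)) • v with hΘdef
  have hsub : AnalyticAt 𝕜 (fun y : Y => y - y₀) y₀ := analyticAt_id.sub analyticAt_const
  have hLs : AnalyticAt 𝕜 (fun y : Y => L (y - y₀)) y₀ := (L.analyticAt _).fun_comp hsub
  have hΘa : AnalyticAt 𝕜 Θ y₀ := hsub.add ((hΦ.sub hLs).smul analyticAt_const)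
  have hΘ : ContDiffAt 𝕜 ω Θ y₀ := hΘa.contDiffAt
  have hf' : HasFDerivAt Θ ((ContinuousLinearEquiv.refl 𝕜 Y : Y ≃L[𝕜] Y) : Y →L[𝕜] Y) y₀ := by
    have h1 : HasFDerivAt Φ L y₀ := hL ▸ hΦ.differentiableAt.hasFDerivAt
    have h2 : HasFDerivAt (fun y : Y => y - y₀) (ContinuousLinearMap.id 𝕜 Y) y₀ :=
      (hasFDerivAt_id y₀).sub_const y₀
    have h3 : HasFDerivAt (fun y : Y => L (y - y₀)) (L.comp (ContinuousLinearMap.id 𝕜 Y)) y₀ :=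
      L.hasFDerivAt.comp y₀ h2
    refine (h2.add ((h1.sub h3).smul_const v)).congr_fderiv ?_
    ext w; simp
  have hn : (ω : WithTop ℕ∞) ≠ 0 := by simp
  have hΘ0 : Θ y₀ = 0 := by simp [hΘdef, h0]
  set Ψ : Y → Y := hΘ.localInverse hf' hn with hΨ
  have hΨa : AnalyticAt 𝕜 Ψ 0 := by
    have := (hΘ.to_localInverse hf' hn).analyticAt
    rwa [hΘ0] at this
  have hr : ∀ᶠ x in 𝓝 (0 : Y), Θ (Ψ x) = x := by
    have := (hΘ.hasStrictFDerivAt' hf' hn).eventually_right_inverse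
    rwa [hΘ0] at this
  have hl : ∀ᶠ y in 𝓝 y₀, Ψ (Θ y) = y := (hΘ.hasStrictFDerivAt' hf' hn).eventually_left_inverse
  have hΨ0 : Ψ 0 = y₀ := by
    have := hl.self_of_nhds
    rwa [hΘ0] at this
  have hLΘ : ∀ y, L (Θ y) = Φ y := fun y => by simp [hΘdef, hv]
  have key : ∀ x, Θ (Ψ x) = x → y₀ + x + L (Ψ x - y₀ - x) • v = Ψ x := by
    intro x hx
    have h1 : Φ (Ψ x) = L x := by rw [← hLΘ, hx]
    have h2 : Ψ x - y₀ + (Φ (Ψ x) - L (Ψ x - y₀)) • v = x := hx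
    rw [h1] at h2
    have h3 : L (Ψ x - y₀ - x) = -(L x - L (Ψ x - y₀)) := by
      rw [map_sub]; ring
    rw [h3, neg_smul]
    nth_rewrite 1 [← h2]
    abel
  refine ⟨fun x => L (Ψ x - y₀ - x), ?_, by simp [hΨ0], ?_, ?_⟩
  · exact (L.analyticAt _).fun_comp ((hΨa.sub analyticAt_const).sub analyticAt_id)
  · filter_upwards [hr] with x hx
    rw [key x hx, ← hLΘ, hx]
  · filter_upwards [hl] with y hy
    have h1 : Θ (Ψ (Θ y)) = Θ y := by rw [hy]
    exact (key (Θ y) h1).trans hy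

/-- Implicit function theorem, in the direction `v`. -/
lemma exists_implicit {𝕜 Y Z : Type*} [RCLike 𝕜] [NormedAddCommGroup Y] [NormedSpace 𝕜 Y]
    [CompleteSpace Y] [NormedAddCommGroup Z] [NormedSpace 𝕜 Z] {Φ : Y → 𝕜} {y₀ v : Y}
    (hΦ : AnalyticAt 𝕜 Φ y₀) (h0 : Φ y₀ = 0) (hv : fderiv 𝕜 Φ y₀ v = 1) (j : Z →L[𝕜] Y) :
    ∃ τ : Z → 𝕜, AnalyticAt 𝕜 τ 0 ∧ τ 0 = 0 ∧ ∀ᶠ p in 𝓝 0, Φ (y₀ + j p + τ p • v) = 0 := by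
  obtain ⟨κ, hκ, hκ0, h1, -⟩ := exists_chart hΦ h0 rfl hv
  set L := fderiv 𝕜 Φ y₀
  let x : Z →L[𝕜] Y := j - (L.comp j).smulRight v
  have hx : ∀ p, x p = j p - L (j p) • v := fun p => by simp [x]
  refine ⟨fun p => -L (j p) + κ (x p), ?_, by simp [hκ0], ?_⟩
  · refine (((L.comp j).analyticAt 0).neg).add (AnalyticAt.fun_comp ?_ (x.analyticAt 0))
    simpa using hκ
  · have ht : Tendsto x (𝓝 0) (𝓝 0) := by simpa using x.continuous.tendsto 0
    filter_upwards [ht.eventually h1] with p hp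
    have e : y₀ + j p + (-L (j p) + κ (x p)) • v = y₀ + x p + κ (x p) • v := by
      rw [hx p, add_smul, neg_smul]; abel
    rw [e, hp, hx p]
    simp [hv]

/-- Unique continuation along a regular hypersurface `{Φ = 0}`: in a neighbourhood `W₁` of `y₀` that
does not depend on the function `h` nor on the convex cylinder `C` (invariant in the direction `v`)
on which `h` is defined, vanishing near any point of the
hypersurface implies vanishing near `y₀`. -/
lemma continuation {Y : Type*} [NormedAddCommGroup Y] [NormedSpace ℂ Y]
    [CompleteSpace Y] {Φ : Y → ℂ} {y₀ v : Y}
    (hΦ : AnalyticAt ℂ Φ y₀) (h0 : Φ y₀ = 0) (hv : fderiv ℂ Φ y₀ v = 1) {W₀ : Set Y}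
    (hW₀ : W₀ ∈ 𝓝 y₀) :
    ∃ W₁ ∈ 𝓝 y₀, ∀ C ∈ 𝓝 y₀, Convex ℝ C → (∀ y ∈ C, ∀ t : ℂ, y + t • v ∈ C) →
      ∀ h : Y → ℂ, (∀ y ∈ W₀ ∩ C, AnalyticAt ℂ h y) → ∀ y₁ ∈ W₁ ∩ C, Φ y₁ = 0 →
      (∀ᶠ y in 𝓝 y₁, Φ y = 0 → h y = 0) → ∀ᶠ y in 𝓝 y₀, Φ y = 0 → h y = 0 := by
  obtain ⟨κ, hκ, hκ0, h1, h2⟩ := exists_chart hΦ h0 rfl hv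
  set L := fderiv ℂ Φ y₀ with hL
  set Θ : Y → Y := fun y => y - y₀ + (Φ y - L (y - y₀)) • v with hΘ
  have hLΘ : ∀ y, L (Θ y) = Φ y := fun y => by simp [hΘ, hv]
  have hΨc : Tendsto (fun x => y₀ + x + κ x • v) (𝓝 0) (𝓝 y₀) := by
    have : ContinuousAt (fun x => y₀ + x + κ x • v) 0 := by
      have := hκ.continuousAt
      fun_prop
    simpa [ContinuousAt, hκ0] using this
  obtain ⟨ρ, hρ, hb⟩ := Metric.eventually_nhds_iff_ball.1
    ((h1.and (hκ.eventually_analyticAt)).and (hΨc.eventually hW₀))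
  have hΘc : Tendsto Θ (𝓝 y₀) (𝓝 0) := by
    have : ContinuousAt Θ y₀ := by
      have := hΦ.continuousAt
      simp only [hΘ]
      fun_prop
    simpa [ContinuousAt, hΘ, h0] using this
  refine ⟨_, h2.and (hΘc.eventually (Metric.ball_mem_nhds 0 hρ)), ?_⟩
  intro C hC hconv hinv h hh y₁ hy₁ hΦ₁ hev
  filter_upwards [h2.and (hΘc.eventually (Metric.ball_mem_nhds 0 hρ)), hC] with y hy hyC hΦy
  obtain ⟨⟨hy₁a, hy₁b⟩, hy₁C⟩ := hy₁
  obtain ⟨hya, hyb⟩ := hy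
  have hC' : ∀ y, y₀ + Θ y + κ (Θ y) • v = y → y ∈ C → y₀ + Θ y ∈ C := by
    intro y hy hyC
    have := hinv y hyC (-κ (Θ y))
    rw [neg_smul, ← sub_eq_add_neg] at this
    rwa [← eq_sub_of_add_eq hy] at this
  let x : ℝ → Y := fun s => Θ y₁ + s • (Θ y - Θ y₁)
  have hxs : ∀ s ∈ Set.Icc (0 : ℝ) 1, x s ∈ Metric.ball (0 : Y) ρ ∧ y₀ + x s ∈ C := by
    intro s hs
    constructor
    · exact (convex_ball (0 : Y) ρ).add_smul_sub_mem hy₁b hyb hs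
    · have := hconv.add_smul_sub_mem (hC' y₁ hy₁a hy₁C) (hC' y hya hyC) hs
      convert this using 1
      simp only [x, add_sub_add_left_eq_sub, add_assoc]
  have hLx : ∀ s, L (x s) = 0 := fun s => by
    simp only [x, map_add, hLΘ, hΦ₁]
    rw [show s • (Θ y - Θ y₁) = (s : ℂ) • (Θ y - Θ y₁) from (Complex.coe_smul s _).symm, map_smul,
      map_sub, hLΘ, hLΘ, hΦ₁, hΦy]
    simp
  let φ : ℝ → ℂ := fun s => h (y₀ + x s + κ (x s) • v)
  have hxa : ∀ s, AnalyticAt ℝ x s := fun s =>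
    analyticAt_const.add (analyticAt_id.smul analyticAt_const)
  have hφ : AnalyticOnNhd ℝ φ (Set.Icc 0 1) := by
    intro s hs
    obtain ⟨hs1, hs2⟩ := hxs s hs
    obtain ⟨⟨-, h4⟩, h5⟩ := hb _ hs1
    have hκs : AnalyticAt ℝ (fun s => κ (x s)) s :=
      AnalyticAt.fun_comp (g := κ) (f := x) h4.restrictScalars (hxa s)
    have hin : AnalyticAt ℝ (fun s => y₀ + x s + κ (x s) • v) s :=
      (analyticAt_const.add (hxa s)).add (hκs.smul analyticAt_const)
    exact AnalyticAt.fun_comp (g := h) (hh _ ⟨h5, hinv _ hs2 _⟩).restrictScalars hin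
  have hz : φ =ᶠ[𝓝 0] 0 := by
    have hx0 : x 0 = Θ y₁ := by simp [x]
    obtain ⟨⟨-, h4⟩, -⟩ := hb _ (hxs 0 ⟨le_rfl, zero_le_one⟩).1
    have hxt : Tendsto x (𝓝 0) (𝓝 (x 0)) := (hxa 0).continuousAt
    have hin : Tendsto (fun s => y₀ + x s + κ (x s) • v) (𝓝 0) (𝓝 y₁) := by
      have h5 : Tendsto (fun s => y₀ + x s + κ (x s) • v) (𝓝 0)
          (𝓝 (y₀ + x 0 + κ (x 0) • v)) :=
        (tendsto_const_nhds.add hxt).add ((h4.continuousAt.tendsto.comp hxt).smul_const v)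
      rwa [hx0, hy₁a] at h5
    filter_upwards [hin.eventually hev, hxt.eventually
      (Metric.isOpen_ball.mem_nhds (hxs 0 ⟨le_rfl, zero_le_one⟩).1)] with s hs1 hs2
    exact hs1 (by rw [(hb _ hs2).1.1, hLx])
  have := hφ.eqOn_zero_of_preconnected_of_eventuallyEq_zero isPreconnected_Icc
    (Set.left_mem_Icc.2 zero_le_one) hz (Set.right_mem_Icc.2 zero_le_one)
  have h6 : x 1 = Θ y := by simp [x]
  calc h y = φ 1 := by
        simp only [φ, h6]
        exact congrArg h hya.symm
    _ = 0 := this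

/-- A function analytic near a point `y₀` fixed by an antilinear involution `c` and vanishing on the
`c`-real points of a regular hypersurface `{Φ = 0}` defined over the reals vanishes on the
hypersurface. -/
lemma totally_real_continuation {Y : Type*} [NormedAddCommGroup Y] [NormedSpace ℂ Y]
    [CompleteSpace Y] {Φ : Y → ℂ} {y₀ v : Y}
    (hΦ : AnalyticAt ℂ Φ y₀) (h0 : Φ y₀ = 0) (hv : fderiv ℂ Φ y₀ v = 1)
    {c : Y → Y} (hcc : Continuous c) (hca : ∀ a b, c (a + b) = c a + c b)
    (hcs : ∀ (t : ℂ) a, c (t • a) = star t • c a) (hci : ∀ a, c (c a) = a)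
    (hcy : c y₀ = y₀) (hcv : c v = v) (hΦc : ∀ᶠ y in 𝓝 y₀, Φ (c y) = star (Φ y))
    {h : Y → ℂ} (hh : AnalyticAt ℂ h y₀)
    (hz : ∀ᶠ y in 𝓝 y₀, c y = y → Φ y = 0 → h y = 0) :
    ∀ᶠ y in 𝓝 y₀, Φ y = 0 → h y = 0 := by
  obtain ⟨κ, hκ, hκ0, h1, h2⟩ := exists_chart hΦ h0 rfl hv
  set L := fderiv ℂ Φ y₀ with hL
  have hcn : ∀ a, c (-a) = -c a := fun a => by
    have := hcs (-1) a
    simpa using this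
  have hcsub : ∀ a b, c (a - b) = c a - c b := fun a b => by
    rw [sub_eq_add_neg, hca, hcn, sub_eq_add_neg]
  have hc0 : c 0 = 0 := by simpa using hcs 0 0
  have hty : Tendsto c (𝓝 y₀) (𝓝 y₀) := by simpa [hcy] using hcc.tendsto y₀
  -- the differential is real, being a limit of difference quotients in a real parameter
  have hLc : ∀ x, L (c x) = star (L x) := by
    intro x
    have hd : ∀ x, HasDerivAt (fun t : ℝ => Φ (y₀ + (t : ℂ) • x)) (L x) 0 := by
      intro x
      have e1 : HasDerivAt (fun t : ℂ => y₀ + t • x) x 0 := by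
        simpa using ((hasDerivAt_id (0 : ℂ)).smul_const x).const_add y₀
      have e2 : HasFDerivAt Φ L (y₀ + (0 : ℂ) • x) := by
        simpa using hΦ.differentiableAt.hasFDerivAt
      have e3 : HasDerivAt (fun t : ℂ => Φ (y₀ + t • x)) (L x) ((0 : ℝ) : ℂ) := by
        rw [Complex.ofReal_zero]
        exact e2.comp_hasDerivAt (0 : ℂ) e1
      exact e3.comp_ofReal
    have e4 := (hd x).star
    refine (hd (c x)).unique (e4.congr_of_eventuallyEq ?_)
    have ht : Tendsto (fun t : ℝ => y₀ + (t : ℂ) • x) (𝓝 0) (𝓝 y₀) := by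
      have : Continuous (fun t : ℝ => y₀ + (t : ℂ) • x) := by fun_prop
      simpa using this.tendsto 0
    filter_upwards [ht.eventually hΦc] with t ht
    have e5 : c (y₀ + (t : ℂ) • x) = y₀ + (t : ℂ) • c x := by
      rw [hca, hcs, hcy]; simp
    rw [e5] at ht
    simpa using ht
  set Θ : Y → Y := fun y => y - y₀ + (Φ y - L (y - y₀)) • v with hΘ
  have hLΘ : ∀ y, L (Θ y) = Φ y := fun y => by simp [hΘ, hv]
  have hΨc : Tendsto (fun x => y₀ + x + κ x • v) (𝓝 0) (𝓝 y₀) := by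
    have : ContinuousAt (fun x => y₀ + x + κ x • v) 0 := by
      have := hκ.continuousAt
      fun_prop
    simpa [ContinuousAt, hκ0] using this
  have hΘc : Tendsto Θ (𝓝 y₀) (𝓝 0) := by
    have : ContinuousAt Θ y₀ := by
      have := hΦ.continuousAt
      simp only [hΘ]
      fun_prop
    simpa [ContinuousAt, hΘ, h0] using this
  -- the chart maps real points to real points
  have hreal : ∀ᶠ x in 𝓝 (0 : Y), c x = x → c (y₀ + x + κ x • v) = y₀ + x + κ x • v := by
    filter_upwards [h1, hΨc.eventually hΦc, hΨc.eventually (hty.eventually h2)] with x e1 e2 e3 hx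
    set y := y₀ + x + κ x • v with hy
    have e4 : c y - y₀ + (Φ (c y) - L (c y - y₀)) • v = x := by
      have e5 : y - y₀ + (Φ y - L (y - y₀)) • v = x := by
        rw [e1, hy]
        have : y₀ + x + κ x • v - y₀ = x + κ x • v := by abel
        rw [this, map_add, map_smul, hv, smul_eq_mul, mul_one]
        have : L x - (L x + κ x) = -κ x := by ring
        rw [this, neg_smul]; abel
      have e6 := congrArg c e5
      rw [hx, hca, hcsub, hcs, hcv, hcy, star_sub, ← hLc, hcsub, hcy, ← e2] at e6
      exact e6
    rw [e4] at e3
    exact e3.symm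
  obtain ⟨ρ, hρ, hb⟩ := Metric.eventually_nhds_iff_ball.1
    (((h1.and (hκ.eventually_analyticAt)).and (hΨc.eventually hh.eventually_analyticAt)).and
      (hreal.and (hΨc.eventually hz)))
  let a : Y → Y := fun x => (1 / 2 : ℂ) • (x + c x)
  let b : Y → Y := fun x => (1 / (2 * Complex.I) : ℂ) • (x - c x)
  have hac : Continuous a := by fun_prop
  have hbc : Continuous b := by fun_prop
  have ht : Tendsto (fun y => ‖a (Θ y)‖ + 2 * ‖b (Θ y)‖) (𝓝 y₀) (𝓝 0) := by
    have : Continuous (fun x => ‖a x‖ + 2 * ‖b x‖) := by fun_prop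
    have e := (this.tendsto 0).comp hΘc
    have e0 : ‖a 0‖ + 2 * ‖b 0‖ = 0 := by simp [a, b, hc0]
    rw [e0] at e
    exact e
  filter_upwards [h2, ht.eventually (gt_mem_nhds hρ)] with y hy hyb hΦy
  set x := Θ y with hx
  have hLx : L x = 0 := by rw [hx, hLΘ, hΦy]
  have hcax : c (a x) = a x := by
    simp only [a]; rw [hcs, hca, hci, add_comm]; simp
  have hcbx : c (b x) = b x := by
    simp only [b]; rw [hcs, hcsub, hci, ← neg_sub x (c x), smul_neg, ← neg_smul]
    congr 1
    simp
  have hLa : L (a x) = 0 := by simp [a, hLc, hLx]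
  have hLb : L (b x) = 0 := by simp [b, hLc, hLx]
  have hxab : a x + Complex.I • b x = x := by
    simp only [a, b, smul_smul]
    have : Complex.I * (1 / (2 * Complex.I)) = 1 / 2 := by field_simp
    rw [this, ← smul_add, show x + c x + (x - c x) = (2 : ℂ) • x by rw [two_smul]; abel, smul_smul]
    simp
  have hball : ∀ s ∈ Metric.ball (0 : ℂ) 2, a x + s • b x ∈ Metric.ball (0 : Y) ρ := by
    intro s hs
    rw [mem_ball_zero_iff] at hs ⊢
    calc ‖a x + s • b x‖ ≤ ‖a x‖ + ‖s‖ * ‖b x‖ := by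
          rw [← norm_smul]; exact norm_add_le _ _
      _ ≤ ‖a x‖ + 2 * ‖b x‖ := by gcongr
      _ < ρ := hyb
  let X : ℂ → Y := fun s => a x + s • b x
  let φ : ℂ → ℂ := fun s => h (y₀ + X s + κ (X s) • v)
  have hφ : AnalyticOnNhd ℂ φ (Metric.ball 0 2) := by
    intro s hs
    obtain ⟨⟨⟨-, e1⟩, e2⟩, -⟩ := hb _ (hball s hs)
    have hXa : AnalyticAt ℂ X s := analyticAt_const.add (analyticAt_id.smul analyticAt_const)
    have hκs : AnalyticAt ℂ (fun s => κ (X s)) s := AnalyticAt.fun_comp (g := κ) (f := X) e1 hXa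
    have hin : AnalyticAt ℂ (fun s => y₀ + X s + κ (X s) • v) s :=
      (analyticAt_const.add hXa).add (hκs.smul analyticAt_const)
    exact AnalyticAt.fun_comp (g := h) e2 hin
  have hfreq : ∃ᶠ s in 𝓝[≠] (0 : ℂ), φ s = 0 := by
    have ht : Tendsto (fun t : ℝ => (t : ℂ)) (𝓝[≠] 0) (𝓝[≠] 0) := by
      refine tendsto_nhdsWithin_iff.2 ⟨?_, ?_⟩
      · have := Complex.continuous_ofReal.tendsto 0
        simpa using this.mono_left nhdsWithin_le_nhds
      · filter_upwards [self_mem_nhdsWithin] with t ht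
        simpa using ht
    refine ht.frequently (Eventually.frequently ?_)
    have hb2 : ∀ᶠ t : ℝ in 𝓝[≠] 0, (t : ℂ) ∈ Metric.ball (0 : ℂ) 2 :=
      ht.eventually (nhdsWithin_le_nhds (Metric.ball_mem_nhds 0 two_pos))
    filter_upwards [hb2] with t ht2
    obtain ⟨⟨⟨e1, -⟩, -⟩, e3, e4⟩ := hb _ (hball t ht2)
    refine e4 (e3 ?_) ?_
    · rw [hca, hcax, hcs, hcbx]; simp
    · rw [e1]; simp [hLa, hLb]
  have hI : Complex.I ∈ Metric.ball (0 : ℂ) 2 := by simp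
  have := hφ.eqOn_zero_of_preconnected_of_frequently_eq_zero
    (convex_ball (0 : ℂ) 2).isPreconnected (Metric.mem_ball_self two_pos) hfreq hI
  calc h y = φ Complex.I := by
        simp only [φ, X, hxab]
        exact congrArg h hy.symm
    _ = 0 := this

/-- If, along a regular hypersurface `{Φ = 0}`, the differential of `q` kills the vectors tangent to
the fibres of `π`, then near `y₀` the value of `q` at a point of the hypersurface
depends only on its image under `π`. -/
lemma fibre_constant {Y V' : Type*} [NormedAddCommGroup Y] [NormedSpace ℂ Y]
    [CompleteSpace Y] [NormedAddCommGroup V'] [NormedSpace ℂ V'] {Φ q : Y → ℂ} {y₀ v : Y}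
    (hΦ : AnalyticAt ℂ Φ y₀) (h0 : Φ y₀ = 0) (hv : fderiv ℂ Φ y₀ v ≠ 0)
    (hq : AnalyticAt ℂ q y₀) (π : Y →L[ℂ] V') (hπ : π v = 0)
    (hd : ∀ᶠ y in 𝓝 y₀, Φ y = 0 → ∀ u, π u = 0 → fderiv ℂ Φ y u = 0 → fderiv ℂ q y u = 0) :
    ∃ U ∈ 𝓝 y₀, ∀ y ∈ U, ∀ y' ∈ U, Φ y = 0 → Φ y' = 0 → π y = π y' → q y = q y' := by
  wlog hv1 : fderiv ℂ Φ y₀ v = 1 generalizing v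
  · refine this (v := (fderiv ℂ Φ y₀ v)⁻¹ • v) ?_ ?_ ?_
    · simp [hv]
    · simp [hπ]
    · simp [hv]
  obtain ⟨κ, hκ, hκ0, h1, h2⟩ := exists_chart hΦ h0 rfl hv1
  set L := fderiv ℂ Φ y₀ with hL
  set Θ : Y → Y := fun y => y - y₀ + (Φ y - L (y - y₀)) • v with hΘ
  have hLΘ : ∀ y, L (Θ y) = Φ y := fun y => by simp [hΘ, hv1]
  have hΨc : Tendsto (fun x => y₀ + x + κ x • v) (𝓝 0) (𝓝 y₀) := by
    have : ContinuousAt (fun x => y₀ + x + κ x • v) 0 := by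
      have := hκ.continuousAt
      fun_prop
    simpa [ContinuousAt, hκ0] using this
  have hΘc : Tendsto Θ (𝓝 y₀) (𝓝 0) := by
    have : ContinuousAt Θ y₀ := by
      have := hΦ.continuousAt
      simp only [hΘ]
      fun_prop
    simpa [ContinuousAt, hΘ, h0] using this
  obtain ⟨ρ, hρ, hb⟩ := Metric.eventually_nhds_iff_ball.1
    ((h1.and hκ.eventually_analyticAt).and (hΨc.eventually
      ((hd.and hq.eventually_analyticAt).and hΦ.eventually_analyticAt)))
  refine ⟨_, h2.and (hΘc.eventually (Metric.ball_mem_nhds 0 hρ)), ?_⟩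
  rintro y ⟨hya, hyb⟩ y' ⟨hya', hyb'⟩ hΦy hΦy' hπy
  have hLd : L (Θ y' - Θ y) = 0 := by rw [map_sub, hLΘ, hLΘ, hΦy, hΦy', sub_zero]
  have hπd : π (Θ y' - Θ y) = 0 := by
    simp [hΘ, hπ, hπy]
  let x : ℝ → Y := fun s => Θ y + s • (Θ y' - Θ y)
  let γ : ℝ → Y := fun s => y₀ + x s + κ (x s) • v
  have hLx : ∀ s, L (x s) = 0 := fun s => by
    simp only [x, map_add, hLΘ, hΦy]
    rw [← Complex.coe_smul s (Θ y' - Θ y), map_smul, hLd]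
    simp
  have hxd : ∀ s, HasDerivAt x (Θ y' - Θ y) s := fun s => by
    have := ((hasDerivAt_id s).smul_const (Θ y' - Θ y)).const_add (Θ y)
    rw [one_smul] at this
    exact this
  have hmem : ∀ s ∈ Set.Icc (0 : ℝ) 1, x s ∈ Metric.ball (0 : Y) ρ := fun s hs =>
    (convex_ball (0 : Y) ρ).add_smul_sub_mem hyb hyb' hs
  have hqd : ∀ s ∈ Set.Icc (0 : ℝ) 1, HasDerivAt (fun s => q (γ s)) 0 s := by
    intro s hs
    obtain ⟨⟨e1, e2⟩, ⟨e3, e4⟩, e5⟩ := hb _ (hmem s hs)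
    have hκd : HasDerivAt (fun s => κ (x s)) (fderiv ℂ κ (x s) (Θ y' - Θ y)) s :=
      (e2.differentiableAt.hasFDerivAt.restrictScalars ℝ).comp_hasDerivAt s (hxd s)
    have hγ : HasDerivAt γ (Θ y' - Θ y + fderiv ℂ κ (x s) (Θ y' - Θ y) • v) s :=
      ((hxd s).const_add y₀).add (hκd.smul_const v)
    have hqγ := (e4.differentiableAt.hasFDerivAt.restrictScalars ℝ).comp_hasDerivAt s hγ
    have hΦγ := (e5.differentiableAt.hasFDerivAt.restrictScalars ℝ).comp_hasDerivAt s hγ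
    have hΦ0 : HasDerivAt (fun s => Φ (γ s)) 0 s := by
      refine (hasDerivAt_const s (0 : ℂ)).congr_of_eventuallyEq ?_
      filter_upwards [(hxd s).continuousAt.eventually
        (Metric.isOpen_ball.mem_nhds (hmem s hs))] with t ht
      exact (hb _ ht).1.1.trans (hLx t)
    have := e3 (e1.trans (hLx s)) _ (by simp [hπd, hπ]) (hΦγ.unique hΦ0)
    exact hqγ.congr_deriv this
  have := constant_of_has_deriv_right_zero (f := fun s => q (γ s)) (a := 0) (b := 1)
    (fun s hs => (hqd s hs).continuousAt.continuousWithinAt)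
    (fun s hs => (hqd s ⟨hs.1, hs.2.le⟩).hasDerivWithinAt) 1 ⟨zero_le_one, le_rfl⟩
  have g0 : γ 0 = y := by simp only [γ, x, zero_smul, add_zero]; exact hya
  have g1 : γ 1 = y' := by simp only [γ, x, one_smul, add_sub_cancel]; exact hya'
  rw [g0, g1] at this
  exact this.symm

/-! ### Connectedness of the cone -/

/-- The punctured cone `{p(z) + q(w) = 0} \ {0}`. -/
def cone {n : ℕ} (p q : (Fin n → ℂ) → ℂ) : Set ((Fin n → ℂ) × (Fin n → ℂ)) :=
  {ξ | ξ ≠ 0 ∧ p ξ.1 + q ξ.2 = 0}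

/-- A relatively clopen predicate is constant along a path. -/
lemma clopen_segment {X : Type*} [TopologicalSpace X] {S : Set X} {A : X → Prop}
    (h1 : ∀ x ∈ S, A x → ∀ᶠ y in 𝓝[S] x, A y) (h2 : ∀ x ∈ S, ¬ A x → ∀ᶠ y in 𝓝[S] x, ¬ A y)
    {γ : ℝ → X} (hγ : Continuous γ) (hS : ∀ u ∈ Set.Icc (0 : ℝ) 1, γ u ∈ S) :
    A (γ 0) ↔ A (γ 1) := by
  refine isPreconnected_Icc.induction₂ (fun u u' => A (γ u) ↔ A (γ u')) ?_ ?_ ?_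
    (Set.left_mem_Icc.2 zero_le_one) (Set.right_mem_Icc.2 zero_le_one)
  · intro u hu
    have ht : Tendsto γ (𝓝[Set.Icc 0 1] u) (𝓝[S] (γ u)) :=
      tendsto_nhdsWithin_of_tendsto_nhds_of_eventually_within _ (hγ.continuousWithinAt.tendsto)
        (by filter_upwards [self_mem_nhdsWithin] with t ht using hS t ht)
    by_cases hA : A (γ u)
    · filter_upwards [ht.eventually (h1 _ (hS u hu) hA)] with t ht using by simp [hA, ht]
    · filter_upwards [ht.eventually (h2 _ (hS u hu) hA)] with t ht using by simp [hA, ht]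
  · intro a b c _ _ _ hab hbc; exact hab.trans hbc
  · intro a b _ _ hab; exact hab.symm

section
variable {n k : ℕ} {p q : (Fin n → ℂ) → ℂ}

/-- All points of the cone with `p(z) = q(w) = 0` are joined inside it by segments. -/
lemma cone_basic (hp : IsHomSing k p) (hq : IsHomSing k q)
    {A : (Fin n → ℂ) × (Fin n → ℂ) → Prop}
    (h1 : ∀ x ∈ cone p q, A x → ∀ᶠ y in 𝓝[cone p q] x, A y)
    (h2 : ∀ x ∈ cone p q, ¬ A x → ∀ᶠ y in 𝓝[cone p q] x, ¬ A y)
    {m : Fin n → ℂ} (hm0 : m ≠ 0) (hm : q m = 0) {z w : Fin n → ℂ}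
    (hzw : (z, w) ≠ 0) (hz : p z = 0) (hw : q w = 0) : A (z, w) ↔ A (0, m) := by
  obtain ⟨l, hl0, hl⟩ := hp.zero
  have key : ∀ z w, z ≠ 0 → p z = 0 → q w = 0 → (A (z, w) ↔ A (0, m)) := by
    intro z w hz0 hz hw
    have e1 : A (z, (0 : ℝ) • w) ↔ A (z, (1 : ℝ) • w) :=
      clopen_segment h1 h2 (γ := fun u : ℝ => (z, u • w)) (by fun_prop) fun u _ => by
        refine ⟨by simp [Prod.ext_iff, hz0], ?_⟩
        have : (u • w : Fin n → ℂ) = (u : ℂ) • w := (Complex.coe_smul u w).symm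
        simp only [this, hq.hom, hw, hz]; simp
    have e2 : A (z, (0 : ℝ) • m) ↔ A (z, (1 : ℝ) • m) :=
      clopen_segment h1 h2 (γ := fun u : ℝ => (z, u • m)) (by fun_prop) fun u _ => by
        refine ⟨by simp [Prod.ext_iff, hz0], ?_⟩
        have : (u • m : Fin n → ℂ) = (u : ℂ) • m := (Complex.coe_smul u m).symm
        simp only [this, hq.hom, hm, hz]; simp
    have e3 : A ((0 : ℝ) • z, m) ↔ A ((1 : ℝ) • z, m) :=
      clopen_segment h1 h2 (γ := fun u : ℝ => (u • z, m)) (by fun_prop) fun u _ => by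
        refine ⟨by simp [Prod.ext_iff, hm0], ?_⟩
        have : (u • z : Fin n → ℂ) = (u : ℂ) • z := (Complex.coe_smul u z).symm
        simp only [this, hp.hom, hm, hz]; simp
    simp only [zero_smul, one_smul] at e1 e2 e3
    rw [← e1, e2, ← e3]
  by_cases hz0 : z = 0
  · subst hz0
    have hw0 : w ≠ 0 := by rintro rfl; exact hzw rfl
    have e : A ((0 : ℝ) • l, w) ↔ A ((1 : ℝ) • l, w) :=
      clopen_segment h1 h2 (γ := fun u : ℝ => (u • l, w)) (by fun_prop) fun u _ => by
        refine ⟨by simp [Prod.ext_iff, hw0], ?_⟩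
        have : (u • l : Fin n → ℂ) = (u : ℂ) • l := (Complex.coe_smul u l).symm
        simp only [this, hp.hom, hw, hl]; simp
    simp only [zero_smul, one_smul] at e
    rw [e]
    exact key l w hl0 hl hw
  · exact key z w hz0 hz hw

/-- The punctured cone is connected, in the form: a relatively clopen predicate on it that holds
somewhere holds everywhere. A point `(z, w)` with `p(z) ≠ 0` is moved to `p = q = 0` by following
the `k`-th root `s` along `s ^ k p(z) + q(w + u (m - w)) = 0`. -/
lemma cone_connected (hp : IsHomSing k p) (hq : IsHomSing k q)
    {A : (Fin n → ℂ) × (Fin n → ℂ) → Prop}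
    (h1 : ∀ x ∈ cone p q, A x → ∀ᶠ y in 𝓝[cone p q] x, A y)
    (h2 : ∀ x ∈ cone p q, ¬ A x → ∀ᶠ y in 𝓝[cone p q] x, ¬ A y)
    {ξ₀ : (Fin n → ℂ) × (Fin n → ℂ)} (hξ₀ : ξ₀ ∈ cone p q) (hA : A ξ₀) :
    ∀ ξ ∈ cone p q, A ξ := by
  obtain ⟨m, hm0, hm⟩ := hq.zero
  have main : ∀ B : (Fin n → ℂ) × (Fin n → ℂ) → Prop,
      (∀ x ∈ cone p q, B x → ∀ᶠ y in 𝓝[cone p q] x, B y) →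
      (∀ x ∈ cone p q, ¬ B x → ∀ᶠ y in 𝓝[cone p q] x, ¬ B y) →
      B (0, m) → ∀ ξ ∈ cone p q, B ξ := by
    intro B h1 h2 hB
    rintro ⟨z, w⟩ ⟨hξ0, hξ⟩
    by_contra hcon
    have hpz : p z ≠ 0 := by
      intro hpz
      have hqw : q w = 0 := by simpa [hpz] using hξ
      exact hcon ((cone_basic hp hq h1 h2 hm0 hm hξ0 hpz hqw).2 hB)
    have hqw : q w ≠ 0 := by
      intro h; apply hpz; simpa [h] using hξ
    let W : ℝ → (Fin n → ℂ) := fun u => w + (u : ℂ) • (m - w)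
    have hWc : Continuous W := by fun_prop
    have hW0 : ∀ u, W u ≠ 0 := by
      intro u hu
      by_cases hu1 : u = 1
      · subst hu1; simp [W] at hu; exact hm0 hu
      · have hu1' : (1 - u : ℂ) ≠ 0 := by
          intro h; apply hu1
          have := sub_eq_zero.1 h
          exact_mod_cast this.symm
        have e1 : (1 - u : ℂ) • w = (-u : ℂ) • m := by
          have : w + (u : ℂ) • (m - w) = 0 := hu
          rw [sub_smul, one_smul, neg_smul, ← sub_eq_zero, ← this, smul_sub]; abel
        have e2 := congrArg q e1
        rw [hq.hom, hq.hom, hm, mul_zero] at e2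
        exact (mul_ne_zero (pow_ne_zero _ hu1') hqw) e2
    have hpc : Continuous p := continuous_iff_continuousAt.2 fun z => (hp.an z).continuousAt
    have hqc : Continuous q := continuous_iff_continuousAt.2 fun z => (hq.an z).continuousAt
    let g : ℂ × ℝ → (Fin n → ℂ) × (Fin n → ℂ) := fun x => (x.1 • z, W x.2)
    have hgc : Continuous g := by fun_prop
    have hg0 : ∀ x, g x ≠ 0 := fun x h => hW0 x.2 (congrArg Prod.snd h)
    let T : Set (ℂ × ℝ) := {x | x.2 ∈ Set.Icc (0 : ℝ) 1 ∧ g x ∈ cone p q}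
    have hgT : ∀ x, g x ∈ cone p q ↔ x.1 ^ k * p z + q (W x.2) = 0 := fun x => by
      simp [cone, hg0, g, hp.hom]
    have hTc : IsCompact T := by
      obtain ⟨M, hM⟩ := (isCompact_Icc (a := (0 : ℝ)) (b := 1)).exists_bound_of_continuousOn
        (f := fun u => q (W u)) (by fun_prop)
      have hTclosed : IsClosed T := by
        have : T = {x | x.2 ∈ Set.Icc (0 : ℝ) 1} ∩ {x | x.1 ^ k * p z + q (W x.2) = 0} := by
          ext x; simp only [T, hgT]; rfl
        rw [this]
        exact (isClosed_Icc.preimage continuous_snd).inter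
          (isClosed_eq (by fun_prop) continuous_const)
      refine ((isCompact_closedBall (0 : ℂ) (max 1 (M / ‖p z‖))).prod
        (isCompact_Icc (a := (0 : ℝ)) (b := 1))).of_isClosed_subset hTclosed ?_
      rintro ⟨s, u⟩ ⟨hu, hs⟩
      refine ⟨?_, hu⟩
      rw [mem_closedBall_zero_iff]
      have hs' := (hgT _).1 hs
      simp only at hs' hu ⊢
      by_cases hs1 : ‖s‖ ≤ 1
      · exact hs1.trans (le_max_left _ _)
      · refine le_trans ?_ (le_max_right _ _)
        rw [le_div_iff₀ (norm_pos_iff.2 hpz)]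
        calc ‖s‖ * ‖p z‖ ≤ ‖s‖ ^ k * ‖p z‖ := by
              gcongr
              exact le_self_pow₀ (not_le.1 hs1).le hp.pos.ne'
          _ = ‖q (W u)‖ := by
              rw [← norm_pow, ← norm_mul, eq_neg_of_add_eq_zero_left hs', norm_neg]
          _ ≤ M := hM u hu
    let K : Set (ℂ × ℝ) := {x ∈ T | ¬ B (g x)}
    have htend : ∀ x ∈ T, Tendsto g (𝓝[T] x) (𝓝[cone p q] (g x)) := fun x hx =>
      tendsto_nhdsWithin_of_tendsto_nhds_of_eventually_within _ (hgc.continuousWithinAt.tendsto)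
        (by filter_upwards [self_mem_nhdsWithin] with t ht using ht.2)
    have hKc : IsCompact K := by
      refine hTc.of_isClosed_subset ?_ (fun x hx => hx.1)
      refine isClosed_of_closure_subset fun x hx => ?_
      have hxT : x ∈ T := hTc.isClosed.closure_subset_iff.2 (fun x hx => hx.1) hx
      refine ⟨hxT, fun hB' => ?_⟩
      have e := (htend x hxT).eventually (h1 _ hxT.2 hB')
      rw [eventually_nhdsWithin_iff] at e
      obtain ⟨y, hy1, hy2⟩ := (mem_closure_iff_frequently.1 hx).and_eventually e |>.exists
      exact hy1.2 (hy2 hy1.1)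
    have hK0 : ((1 : ℂ), (0 : ℝ)) ∈ K := by
      refine ⟨⟨⟨le_rfl, zero_le_one⟩, ?_⟩, ?_⟩
      · rw [hgT]; simpa [W] using hξ
      · simpa [g, W] using hcon
    obtain ⟨⟨s, u⟩, hsK, hmax⟩ := hKc.exists_isMaxOn ⟨_, hK0⟩ continuous_snd.continuousOn
    have hs0 : s ≠ 0 := by
      rintro rfl
      apply hsK.2
      have e := (hgT _).1 hsK.1.2
      simp only [zero_pow hp.pos.ne', zero_mul, zero_add] at e
      have : g (0, u) = (0, W u) := by simp [g]
      rw [this]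
      exact (cone_basic hp hq h1 h2 hm0 hm (by simpa [this] using hg0 (0, u)) hp.apply_zero e).2 hB
    have hqW : q (W u) ≠ 0 := by
      intro h
      have e := (hgT _).1 hsK.1.2
      simp only [h, add_zero] at e
      exact (mul_ne_zero (pow_ne_zero _ hs0) hpz) e
    have hu1 : u < 1 := by
      refine lt_of_le_of_ne hsK.1.1.2 ?_
      rintro rfl
      apply hqW; simp [W, hm]
    -- continue the root past `u`
    let S : ℝ → ℂ := fun t => s * (q (W t) / q (W u)) ^ ((k : ℂ)⁻¹)
    have hS : ∀ t, S t ^ k * p z + q (W t) = 0 := by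
      intro t
      have e := (hgT _).1 hsK.1.2
      simp only at e
      simp only [S, mul_pow]
      rw [Complex.cpow_nat_inv_pow _ hp.pos.ne', mul_right_comm, eq_neg_of_add_eq_zero_left e]
      field_simp
      ring
    have hSu : S u = s := by simp [S, div_self hqW]
    have hSc : ContinuousAt S u := by
      have : ContinuousAt (fun t => q (W t) / q (W u)) u := by fun_prop
      refine continuousAt_const.mul (this.cpow continuousAt_const ?_)
      rw [div_self hqW]; exact Complex.one_mem_slitPlane
    have hev : ∀ᶠ t in 𝓝[>] u, (S t, t) ∈ K := by
      have ht : Tendsto (fun t => (S t, t)) (𝓝[>] u) (𝓝[T] (s, u)) := by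
        refine tendsto_nhdsWithin_of_tendsto_nhds_of_eventually_within _ ?_ ?_
        · have : ContinuousAt (fun t => (S t, t)) u := hSc.prodMk continuousAt_id
          have e := this.tendsto.mono_left (nhdsWithin_le_nhds (s := Set.Ioi u))
          rwa [hSu] at e
        · filter_upwards [Ioo_mem_nhdsGT hu1] with t ht
          exact ⟨⟨hsK.1.1.1.trans ht.1.le, ht.2.le⟩, (hgT _).2 (hS t)⟩
      have e1 := ht.eventually ((htend _ hsK.1).eventually (h2 _ hsK.1.2 hsK.2))
      have e2 := ht.eventually self_mem_nhdsWithin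
      filter_upwards [e1, e2] with t h h' using ⟨h', h⟩
    obtain ⟨t, htK, htu⟩ := (hev.and self_mem_nhdsWithin).exists
    exact absurd (hmax htK) (not_le.2 htu)
  by_cases hB : A (0, m)
  · exact main A h1 h2 hB
  · exact absurd hA (main (fun x => ¬ A x) (fun x hx h => h2 x hx h)
      (fun x hx h => by simpa using h1 x hx (not_not.1 h)) hB ξ₀ hξ₀)
end

/-! ### The complexified hypersurface and its strict transform -/

/-- The complexified picture of a germ `{F = 0}`, `F = Re P + H`. `FC` is the polarization of `2F`
(so `FC (z, z̄) = 2 F z`), with leading part `P(z) + Ps(w)`, where `Ps(w) = conj (P (conj w))`;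
`Φ` is its strict transform `Φ(r, ξ) = FC(r ξ) / r ^ k`. -/
structure LeviSetup (n k : ℕ) where
  P : (Fin n → ℂ) → ℂ
  Ps : (Fin n → ℂ) → ℂ
  F : (Fin n → ℂ) → ℝ
  FC : (Fin n → ℂ) × (Fin n → ℂ) → ℂ
  Φ : ℂ × (Fin n → ℂ) × (Fin n → ℂ) → ℂ
  hP : IsHomSing k P
  hPs : IsHomSing k Ps
  conjP : ∀ w, Ps w = star (P (star w))
  anF : AnalyticAt ℂ FC 0
  anΦ : ∀ ξ, AnalyticAt ℂ Φ (0, ξ)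
  rel : ∀ ξ, ∀ᶠ y in 𝓝 ((0 : ℂ), ξ), FC (y.1 • y.2) = y.1 ^ k * Φ y
  Φ0 : ∀ ξ, Φ (0, ξ) = P ξ.1 + Ps ξ.2
  Fconj : ∀ z w, FC (star w, star z) = star (FC (z, w))
  Φconj : ∀ ξ, ∀ᶠ y in 𝓝 ((0 : ℂ), ξ), Φ (star y.1, star y.2.2, star y.2.1) = star (Φ y)
  real : ∀ᶠ z in 𝓝 (0 : Fin n → ℂ), FC (z, star z) = ((2 * F z : ℝ) : ℂ)
  levi : LeviFlatGerm F

namespace LeviSetup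

variable {n k : ℕ} (S : LeviSetup n k)

/-- `G` vanishes, near the point `(0, ξ)` of the exceptional divisor, on the strict transform of the
complexified hypersurface. -/
def Van (G : (Fin n → ℂ) × (Fin n → ℂ) → ℂ) (ξ : (Fin n → ℂ) × (Fin n → ℂ)) : Prop :=
  ∀ᶠ y in 𝓝 ((0 : ℂ), ξ), S.Φ y = 0 → G (y.1 • y.2) = 0

lemma fderiv_Φ (ξ η : (Fin n → ℂ) × (Fin n → ℂ)) :
    fderiv ℂ S.Φ (0, ξ) (0, η) = fderiv ℂ S.P ξ.1 η.1 + fderiv ℂ S.Ps ξ.2 η.2 := by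
  have h1 : HasFDerivAt (fun x => S.Φ (0, x))
      ((fderiv ℂ S.Φ (0, ξ)).comp (ContinuousLinearMap.inr ℂ ℂ ((Fin n → ℂ) × (Fin n → ℂ)))) ξ :=
    (S.anΦ ξ).differentiableAt.hasFDerivAt.comp ξ (hasFDerivAt_prodMk_right 0 ξ)
  have h2 : HasFDerivAt (fun x : (Fin n → ℂ) × (Fin n → ℂ) => S.P x.1 + S.Ps x.2)
      ((fderiv ℂ S.P ξ.1).comp (ContinuousLinearMap.fst ℂ _ _) +
        (fderiv ℂ S.Ps ξ.2).comp (ContinuousLinearMap.snd ℂ _ _)) ξ :=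
    ((S.hP.an ξ.1).differentiableAt.hasFDerivAt.comp ξ hasFDerivAt_fst).add
      ((S.hPs.an ξ.2).differentiableAt.hasFDerivAt.comp ξ hasFDerivAt_snd)
  have h3 : (fun x => S.Φ (0, x)) = fun x : (Fin n → ℂ) × (Fin n → ℂ) => S.P x.1 + S.Ps x.2 :=
    funext S.Φ0
  rw [h3] at h1
  have := congrArg (fun L => L η) (h1.unique h2)
  simpa using this

lemma exists_dir {ξ : (Fin n → ℂ) × (Fin n → ℂ)} (hξ : ξ ≠ 0) :
    ∃ η, fderiv ℂ S.Φ (0, ξ) (0, η) = 1 := by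
  have : ∃ η, fderiv ℂ S.Φ (0, ξ) (0, η) ≠ 0 := by
    by_cases h : ξ.1 = 0
    · have h2 : ξ.2 ≠ 0 := fun h2 => hξ (Prod.ext h h2)
      obtain ⟨u, hu⟩ := S.hPs.reg _ h2
      exact ⟨(0, u), by rw [S.fderiv_Φ]; simpa using hu⟩
    · obtain ⟨u, hu⟩ := S.hP.reg _ h
      exact ⟨(u, 0), by rw [S.fderiv_Φ]; simpa using hu⟩
  obtain ⟨η, hη⟩ := this
  refine ⟨(fderiv ℂ S.Φ (0, ξ) (0, η))⁻¹ • η, ?_⟩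
  have e : ((0 : ℂ), (fderiv ℂ S.Φ (0, ξ) (0, η))⁻¹ • η)
    = (fderiv ℂ S.Φ (0, ξ) (0, η))⁻¹ • ((0 : ℂ), η) := by simp
  rw [e, map_smul, smul_eq_mul, inv_mul_cancel₀ hη]

lemma analyticAt_smul (y : ℂ × (Fin n → ℂ) × (Fin n → ℂ)) :
    AnalyticAt ℂ (fun y : ℂ × (Fin n → ℂ) × (Fin n → ℂ) => y.1 • y.2) y :=
  analyticAt_fst.smul analyticAt_snd

lemma eventually_smul {p : (Fin n → ℂ) × (Fin n → ℂ) → Prop} (h : ∀ᶠ x in 𝓝 0, p x)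
    (ξ : (Fin n → ℂ) × (Fin n → ℂ)) : ∀ᶠ y in 𝓝 ((0 : ℂ), ξ), p (y.1 • y.2) := by
  have : Tendsto (fun y : ℂ × (Fin n → ℂ) × (Fin n → ℂ) => y.1 • y.2) (𝓝 ((0 : ℂ), ξ)) (𝓝 0) := by
    have := (analyticAt_smul ((0 : ℂ), ξ)).continuousAt.tendsto
    simpa using this
  exact this.eventually h

/-- Vanishing on the strict transform propagates along the whole (connected) exceptional cone. -/
lemma Van.everywhere {S : LeviSetup n k} {G : (Fin n → ℂ) × (Fin n → ℂ) → ℂ}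
    (hG : AnalyticAt ℂ G 0) {ξ₀ : (Fin n → ℂ) × (Fin n → ℂ)} (hξ₀ : ξ₀ ∈ cone S.P S.Ps)
    (h : S.Van G ξ₀) : ∀ ξ ∈ cone S.P S.Ps, S.Van G ξ := by
  have hc : ∀ x : (Fin n → ℂ) × (Fin n → ℂ),
      Tendsto (fun x => ((0 : ℂ), x)) (𝓝[cone S.P S.Ps] x) (𝓝 ((0 : ℂ), x)) := fun x =>
    (Continuous.prodMk_right (0 : ℂ)).continuousAt.tendsto.mono_left nhdsWithin_le_nhds
  refine cone_connected S.hP S.hPs ?_ ?_ hξ₀ h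
  · intro x _ hx
    exact (hc x).eventually hx.eventually_nhds
  · intro x hx hnx
    obtain ⟨η, hη⟩ := S.exists_dir hx.1
    have hΦ0 : S.Φ (0, x) = 0 := by rw [S.Φ0]; exact hx.2
    obtain ⟨W₁, hW₁, H⟩ := continuation (S.anΦ x) hΦ0 hη
      (eventually_smul hG.eventually_analyticAt x)
    filter_upwards [(hc x).eventually hW₁, self_mem_nhdsWithin] with x' hx' hx'c hV
    refine hnx (H Set.univ univ_mem convex_univ (fun _ _ _ => trivial) _ ?_ (0, x')
      ⟨hx', trivial⟩ (by rw [S.Φ0]; exact hx'c.2) hV)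
    intro y hy
    exact AnalyticAt.fun_comp (g := G) hy.1 (analyticAt_smul y)

/-- The derivative of `FC` in the direction `a` of the first group of variables. -/
noncomputable def dz (a : Fin n → ℂ) (ξ : (Fin n → ℂ) × (Fin n → ℂ)) : ℂ := fderiv ℂ S.FC ξ (a, 0)

/-- The derivative of `FC` in the direction `b` of the second group of variables. -/
noncomputable def dw (b : Fin n → ℂ) (ξ : (Fin n → ℂ) × (Fin n → ℂ)) : ℂ := fderiv ℂ S.FC ξ (0, b)

/-- The mixed second derivative of `FC`, in the directions `(a, 0)` and `(0, b)`. -/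
noncomputable def hes (a b : Fin n → ℂ) (ξ : (Fin n → ℂ) × (Fin n → ℂ)) : ℂ :=
  fderiv ℂ (S.dz a) ξ (0, b)

lemma analyticAt_dz {ξ : (Fin n → ℂ) × (Fin n → ℂ)} (h : AnalyticAt ℂ S.FC ξ) (a : Fin n → ℂ) :
    AnalyticAt ℂ (S.dz a) ξ :=
  ((ContinuousLinearMap.apply ℂ ℂ (a, (0 : Fin n → ℂ))).analyticAt _).fun_comp h.fderiv

lemma analyticAt_dw {ξ : (Fin n → ℂ) × (Fin n → ℂ)} (h : AnalyticAt ℂ S.FC ξ) (a : Fin n → ℂ) :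
    AnalyticAt ℂ (S.dw a) ξ :=
  ((ContinuousLinearMap.apply ℂ ℂ ((0 : Fin n → ℂ), a)).analyticAt _).fun_comp h.fderiv

lemma analyticAt_hes {ξ : (Fin n → ℂ) × (Fin n → ℂ)} (h : AnalyticAt ℂ S.FC ξ)
    (a b : Fin n → ℂ) : AnalyticAt ℂ (S.hes a b) ξ :=
  ((ContinuousLinearMap.apply ℂ ℂ ((0 : Fin n → ℂ), b)).analyticAt _).fun_comp
    (S.analyticAt_dz h a).fderiv

/-- The polarized Levi form of `FC` evaluated at `((D_z a) b - (D_z b) a, (D_w a') b' - (D_w b') a')`,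
two vectors tangent to the fibres of the two projections. -/
noncomputable def lev (a b a' b' : Fin n → ℂ) (ξ : (Fin n → ℂ) × (Fin n → ℂ)) : ℂ :=
  S.dz a ξ * S.dw a' ξ * S.hes b b' ξ - S.dz a ξ * S.dw b' ξ * S.hes b a' ξ
    - S.dz b ξ * S.dw a' ξ * S.hes a b' ξ + S.dz b ξ * S.dw b' ξ * S.hes a a' ξ

lemma analyticAt_lev {ξ : (Fin n → ℂ) × (Fin n → ℂ)} (h : AnalyticAt ℂ S.FC ξ)
    (a b a' b' : Fin n → ℂ) : AnalyticAt ℂ (S.lev a b a' b') ξ := by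
  have h1 := S.analyticAt_dz h
  have h2 := S.analyticAt_dw h
  have h3 := S.analyticAt_hes h
  exact (((((h1 a).mul (h2 a')).mul (h3 b b')).sub (((h1 a).mul (h2 b')).mul (h3 b a'))).sub
    (((h1 b).mul (h2 a')).mul (h3 a b'))).add (((h1 b).mul (h2 b')).mul (h3 a a'))

end LeviSetup

/-! ### The polarized Levi form -/

/-- The real-linear embedding `z ↦ (z, z̄)`. -/
noncomputable def iota (n : ℕ) : (Fin n → ℂ) →L[ℝ] (Fin n → ℂ) × (Fin n → ℂ) :=
  (ContinuousLinearMap.id ℝ _).prod ((starL' ℝ : (Fin n → ℂ) ≃L[ℝ] (Fin n → ℂ)) :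
    (Fin n → ℂ) →L[ℝ] (Fin n → ℂ))

lemma iota_apply {n : ℕ} (z : Fin n → ℂ) : iota n z = (z, star z) := rfl

lemma hasFDerivAt_iota {n : ℕ} {g : (Fin n → ℂ) → ℂ} {G : (Fin n → ℂ) × (Fin n → ℂ) → ℂ}
    {p : Fin n → ℂ} (hG : AnalyticAt ℂ G (p, star p)) (hg : ∀ᶠ z in 𝓝 p, g z = G (z, star z)) :
    HasFDerivAt g (((fderiv ℂ G (p, star p)).restrictScalars ℝ).comp (iota n)) p := by
  have h1 : HasFDerivAt (fun z => G (iota n z))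
      (((fderiv ℂ G (p, star p)).restrictScalars ℝ).comp (iota n)) p :=
    HasFDerivAt.comp p (hG.differentiableAt.hasFDerivAt.restrictScalars ℝ) (iota n).hasFDerivAt
  exact h1.congr_of_eventuallyEq hg

lemma wirt_iota {n : ℕ} {g : (Fin n → ℂ) → ℂ} {G : (Fin n → ℂ) × (Fin n → ℂ) → ℂ}
    {p : Fin n → ℂ} (hG : AnalyticAt ℂ G (p, star p)) (hg : ∀ᶠ z in 𝓝 p, g z = G (z, star z))
    (j : Fin n) :
    wirtZ g j p = fderiv ℂ G (p, star p) (Pi.single j 1, 0) ∧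
    wirtZbar g j p = fderiv ℂ G (p, star p) (0, Pi.single j 1) := by
  have h := (hasFDerivAt_iota hG hg).fderiv
  set D := fderiv ℂ G (p, star p)
  have e1 : fderiv ℝ g p (Pi.single j 1) = D (Pi.single j 1, 0) + D (0, Pi.single j 1) := by
    rw [h, ← map_add]
    simp only [ContinuousLinearMap.comp_apply, iota_apply, ContinuousLinearMap.coe_restrictScalars']
    congr 1
    ext i <;> simp [Pi.single_apply, apply_ite]
  have e2 : fderiv ℝ g p (Pi.single j Complex.I)
      = Complex.I * D (Pi.single j 1, 0) - Complex.I * D (0, Pi.single j 1) := by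
    rw [h, ← smul_eq_mul, ← smul_eq_mul, ← map_smul, ← map_smul, ← map_sub]
    simp only [ContinuousLinearMap.comp_apply, iota_apply, ContinuousLinearMap.coe_restrictScalars']
    congr 1
    ext i <;> by_cases hij : i = j <;> simp [hij]
  constructor
  · rw [wirtZ, e1, e2]
    linear_combination (D (0, Pi.single j 1) - D (Pi.single j 1, 0)) / 2 * Complex.I_mul_I
  · rw [wirtZbar, e1, e2]
    linear_combination (D (Pi.single j 1, 0) - D (0, Pi.single j 1)) / 2 * Complex.I_mul_I

namespace LeviSetup

variable {n k : ℕ} (S : LeviSetup n k)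

lemma hes_eq {ξ : (Fin n → ℂ) × (Fin n → ℂ)} (h : AnalyticAt ℂ S.FC ξ) (a b : Fin n → ℂ) :
    S.hes a b ξ = fderiv ℂ (fderiv ℂ S.FC) ξ (0, b) (a, 0) := by
  have h1 : HasFDerivAt (S.dz a) ((ContinuousLinearMap.apply ℂ ℂ (a, (0 : Fin n → ℂ))).comp
      (fderiv ℂ (fderiv ℂ S.FC) ξ)) ξ :=
    (ContinuousLinearMap.apply ℂ ℂ (a, (0 : Fin n → ℂ))).hasFDerivAt.comp ξ
      h.fderiv.differentiableAt.hasFDerivAt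
  rw [hes, h1.fderiv]; rfl

lemma dz_add (a b : Fin n → ℂ) (ξ) : S.dz (a + b) ξ = S.dz a ξ + S.dz b ξ := by
  rw [dz, dz, dz, ← map_add]; simp

lemma dz_smul (c : ℂ) (a : Fin n → ℂ) (ξ) : S.dz (c • a) ξ = c * S.dz a ξ := by
  rw [dz, dz, ← smul_eq_mul, ← map_smul]; simp

lemma dw_add (a b : Fin n → ℂ) (ξ) : S.dw (a + b) ξ = S.dw a ξ + S.dw b ξ := by
  rw [dw, dw, dw, ← map_add]; simp

lemma dw_smul (c : ℂ) (a : Fin n → ℂ) (ξ) : S.dw (c • a) ξ = c * S.dw a ξ := by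
  rw [dw, dw, ← smul_eq_mul, ← map_smul]; simp

lemma eq_sum_single (a : Fin n → ℂ) : a = ∑ i, a i • (Pi.single i 1 : Fin n → ℂ) := by
  ext i; simp [Finset.sum_apply, Pi.single_apply]

lemma dz_sum (a : Fin n → ℂ) (ξ) : S.dz a ξ = ∑ i, a i * S.dz (Pi.single i 1) ξ := by
  let L : (Fin n → ℂ) →ₗ[ℂ] ℂ := ⟨⟨fun a => S.dz a ξ, fun a b => S.dz_add a b ξ⟩,
    fun c a => S.dz_smul c a ξ⟩
  have : L a = ∑ i, a i * L (Pi.single i 1) := by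
    conv_lhs => rw [eq_sum_single a]
    simp only [map_sum, map_smul, smul_eq_mul]
  exact this

lemma dw_sum (a : Fin n → ℂ) (ξ) : S.dw a ξ = ∑ i, a i * S.dw (Pi.single i 1) ξ := by
  let L : (Fin n → ℂ) →ₗ[ℂ] ℂ := ⟨⟨fun a => S.dw a ξ, fun a b => S.dw_add a b ξ⟩,
    fun c a => S.dw_smul c a ξ⟩
  have : L a = ∑ i, a i * L (Pi.single i 1) := by
    conv_lhs => rw [eq_sum_single a]
    simp only [map_sum, map_smul, smul_eq_mul]
  exact this

/-- The mixed Hessian as a bilinear form. -/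
noncomputable def hesB (ξ : (Fin n → ℂ) × (Fin n → ℂ)) :
    (Fin n → ℂ) →ₗ[ℂ] (Fin n → ℂ) →ₗ[ℂ] ℂ :=
  LinearMap.mk₂ ℂ (fun a b => fderiv ℂ (fderiv ℂ S.FC) ξ (0, b) (a, 0))
    (fun a a' b => by rw [← map_add]; simp)
    (fun c a b => by rw [← map_smul]; simp)
    (fun a b b' => by rw [← add_apply, ← map_add]; simp)
    (fun c a b => by rw [← smul_apply, ← map_smul]; simp)

lemma hes_eq_hesB {ξ : (Fin n → ℂ) × (Fin n → ℂ)} (h : AnalyticAt ℂ S.FC ξ) (a b : Fin n → ℂ) :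
    S.hes a b ξ = S.hesB ξ a b := S.hes_eq h a b

lemma dw_star {p : Fin n → ℂ} (h : AnalyticAt ℂ S.FC (p, star p)) (a : Fin n → ℂ) :
    S.dw (star a) (p, star p) = star (S.dz a (p, star p)) := by
  -- differentiate `FC (star w, star z) = star (FC (z, w))` along the real line `(p + t a, p̄)`
  have hd := h.differentiableAt.hasFDerivAt.restrictScalars ℝ
  have c1 : HasDerivAt (fun t : ℝ => (p + t • a, star p)) (a, 0) 0 := by
    have := ((hasDerivAt_id (0 : ℝ)).smul_const a).const_add p
    simpa using this.prodMk (hasDerivAt_const (0 : ℝ) (star p))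
  have c2 : HasDerivAt (fun t : ℝ => (p, star p + t • star a)) (0, star a) 0 := by
    have := ((hasDerivAt_id (0 : ℝ)).smul_const (star a)).const_add (star p)
    simpa using (hasDerivAt_const (0 : ℝ) p).prodMk this
  have d1 : HasDerivAt (fun t : ℝ => S.FC (p + t • a, star p)) (S.dz a (p, star p)) 0 :=
    HasFDerivAt.comp_hasDerivAt_of_eq 0 hd c1 (by simp)
  have d2 : HasDerivAt (fun t : ℝ => S.FC (p, star p + t • star a)) (S.dw (star a) (p, star p)) 0 :=
    HasFDerivAt.comp_hasDerivAt_of_eq 0 hd c2 (by simp)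
  have d3 : HasDerivAt (fun t : ℝ => star (S.FC (p + t • a, star p)))
    (star (S.dz a (p, star p))) 0 := d1.star
  have : (fun t : ℝ => S.FC (p, star p + t • star a))
      = fun t : ℝ => star (S.FC (p + t • a, star p)) := by
    funext t
    rw [← S.Fconj]; simp
  rw [this] at d2
  exact d2.unique d3

lemma tendsto_iota : Tendsto (fun p : Fin n → ℂ => (p, star p)) (𝓝 0) (𝓝 0) := by
  have := (iota n).continuous.tendsto 0
  rwa [map_zero] at this

/-- Levi-flatness, read off on the polarization at a real point. -/
lemma levi_kernel : ∀ᶠ p in 𝓝 (0 : Fin n → ℂ), AnalyticAt ℂ S.FC (p, star p) ∧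
    (S.FC (p, star p) = 0 → ∀ a, S.dz a (p, star p) ≠ 0 →
      ∀ v, S.dz v (p, star p) = 0 → S.hesB (p, star p) v (star v) = 0) := by
  filter_upwards [S.levi, S.real, S.real.eventually_nhds,
    tendsto_iota.eventually S.anF.eventually_analyticAt,
    (tendsto_iota.eventually S.anF.eventually_analyticAt).eventually_nhds] with p hL hr hr' ha ha'
  refine ⟨ha, fun h0 a hda v hv => ?_⟩
  have hF0 : S.F p = 0 := by
    rw [hr] at h0
    have : (2 * S.F p : ℝ) = 0 := by exact_mod_cast h0
    linarith
  have hh : ∀ z, S.FC (z, star z) = ((2 * S.F z : ℝ) : ℂ) →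
      ((S.F z : ℝ) : ℂ) = (2 : ℂ)⁻¹ * S.FC (z, star z) := by
    intro z hz; rw [hz]; push_cast; ring
  have hFd : HasFDerivAt (fun z => ((S.F z : ℝ) : ℂ))
      (((fderiv ℂ (fun ξ => (2 : ℂ)⁻¹ * S.FC ξ) (p, star p)).restrictScalars ℝ).comp (iota n)) p :=
    hasFDerivAt_iota (analyticAt_const.mul ha) (hr'.mono fun z hz => hh z hz)
  have hFd' : HasFDerivAt S.F (Complex.reCLM.comp
      (((fderiv ℂ (fun ξ => (2 : ℂ)⁻¹ * S.FC ξ) (p, star p)).restrictScalars ℝ).comp (iota n))) p :=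
    Complex.reCLM.hasFDerivAt.comp p hFd
  have hhalf : ∀ ξ η, AnalyticAt ℂ S.FC ξ → fderiv ℂ (fun ξ => (2 : ℂ)⁻¹ * S.FC ξ) ξ η
      = (2 : ℂ)⁻¹ * fderiv ℂ S.FC ξ η := by
    intro ξ η hξ
    rw [fderiv_const_mul hξ.differentiableAt]; simp
  have hne : fderiv ℝ S.F p ≠ 0 := by
    intro h
    rw [hFd'.fderiv] at h
    have key : ∀ b, (S.dz b (p, star p)).re = 0 := by
      intro b
      have e := congrArg (fun L => L b) h
      have e2 : fderiv ℂ S.FC (p, star p) (b, star b)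
          = S.dz b (p, star p) + star (S.dz b (p, star p)) := by
        rw [← S.dw_star ha, dz, dw, ← map_add]; simp
      simp only [ContinuousLinearMap.comp_apply, iota_apply,
        ContinuousLinearMap.coe_restrictScalars', hhalf _ _ ha, e2, zero_apply] at e
      simpa using e
    have k1 := key a
    have k2 := key (Complex.I • a)
    rw [dz_smul] at k2
    apply hda
    apply Complex.ext
    · simpa using k1
    · simpa using k2
  have hz : ∀ i, ∀ᶠ q in 𝓝 p, wirtZ (fun z => ((S.F z : ℝ) : ℂ)) i q
      = (2 : ℂ)⁻¹ * S.dz (Pi.single i 1) (q, star q) := by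
    intro i
    filter_upwards [ha', hr'.eventually_nhds] with q hq hrq
    rw [(wirt_iota (G := fun ξ => (2 : ℂ)⁻¹ * S.FC ξ) (analyticAt_const.mul hq) (hrq.mono fun z hz => hh z hz) i).1, hhalf _ _ hq]; rfl
  have hzz : ∀ i j, wirtZbar (wirtZ (fun z => ((S.F z : ℝ) : ℂ)) i) j p
      = (2 : ℂ)⁻¹ * S.hesB (p, star p) (Pi.single i 1) (Pi.single j 1) := by
    intro i j
    rw [(wirt_iota (G := fun ξ => (2 : ℂ)⁻¹ * S.dz (Pi.single i 1) ξ)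
      (analyticAt_const.mul (S.analyticAt_dz ha _)) (hz i) j).2,
      fderiv_const_mul (S.analyticAt_dz ha _).differentiableAt]
    rw [← S.hes_eq_hesB ha]; rfl
  have := hL hF0 hne v (by
    have e : ∀ j, wirtZ (fun z => ((S.F z : ℝ) : ℂ)) j p * v j
        = (2 : ℂ)⁻¹ * (v j * S.dz (Pi.single j 1) (p, star p)) := by
      intro j; rw [(hz j).self_of_nhds]; ring
    rw [Finset.sum_congr rfl fun j _ => e j, ← Finset.mul_sum, ← S.dz_sum, hv, mul_zero])
  have e3 : S.hesB (p, star p) v (star v) = ∑ i, ∑ j, v i * (star (v j) *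
      S.hesB (p, star p) (Pi.single i 1) (Pi.single j 1)) := by
    conv_lhs => rw [eq_sum_single (star v)]; enter [1]; rw [eq_sum_single v]
    simp only [map_sum, map_smul, LinearMap.sum_apply, LinearMap.smul_apply, smul_eq_mul,
      Finset.mul_sum, Pi.star_apply]
    rw [Finset.sum_comm]
    refine Finset.sum_congr rfl fun i _ => Finset.sum_congr rfl fun j _ => by ring
  have e4 : S.hesB (p, star p) v (star v) = 2 * ∑ i, ∑ j,
      wirtZbar (wirtZ (fun z => ((S.F z : ℝ) : ℂ)) i) j p * v i * (starRingEnd ℂ) (v j) := by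
    rw [e3]
    simp only [hzz, Finset.mul_sum]
    refine Finset.sum_congr rfl fun i _ => Finset.sum_congr rfl fun j _ => ?_
    simp only [starRingEnd_apply]
    ring
  rw [e4, this, mul_zero]

lemma lev_real : ∀ᶠ p in 𝓝 (0 : Fin n → ℂ), S.FC (p, star p) = 0 →
    ∀ a b a' b', S.lev a b a' b' (p, star p) = 0 := by
  filter_upwards [S.levi_kernel] with p ⟨ha, hp⟩ h0 a b a' b'
  set ξ := (p, star p) with hξ
  set B := S.hesB ξ with hB
  by_cases hd : ∀ a, S.dz a ξ = 0
  · simp [lev, hd]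
  push Not at hd
  obtain ⟨c, hc⟩ := hd
  have hK := hp h0 c hc
  have pol : ∀ v u, S.dz v ξ = 0 → S.dz u ξ = 0 → B v (star u) = 0 := by
    intro v u hv hu
    have h1 := hK (v + u) (by rw [dz_add, hv, hu, add_zero])
    have h2 := hK (v + Complex.I • u) (by rw [dz_add, dz_smul, hv, hu]; simp)
    have h3 := hK v hv
    have h4 := hK u hu
    simp only [star_add, star_smul, map_add, map_smul, LinearMap.add_apply, LinearMap.smul_apply,
      smul_eq_mul, h3, h4, Complex.star_def, Complex.conj_I] at h1 h2
    have h5 : Complex.I * (B u (star v) - B v (star u)) = 0 := by linear_combination h2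
    have h6 := (mul_eq_zero.1 h5).resolve_left Complex.I_ne_zero
    linear_combination (h1 - h6) / 2
  have e : S.lev a b a' b' ξ = B (S.dz a ξ • b + (- S.dz b ξ) • a)
      (S.dw a' ξ • b' + (- S.dw b' ξ) • a') := by
    simp only [lev, S.hes_eq_hesB ha, map_add, map_smul, LinearMap.add_apply, LinearMap.smul_apply,
      smul_eq_mul, ← hB]
    ring
  rw [e, ← star_star (S.dw a' ξ • b' + (- S.dw b' ξ) • a')]
  apply pol
  · rw [dz_add, dz_smul, dz_smul]; ring
  · have := S.dw_star ha (star (S.dw a' ξ • b' + (- S.dw b' ξ) • a'))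
    rw [star_star, dw_add, dw_smul, dw_smul] at this
    rw [← star_star (S.dz _ ξ), ← this, star_eq_zero]
    ring

end LeviSetup

namespace LeviSetup

variable {n k : ℕ} (S : LeviSetup n k)

lemma fderiv_Ps (l h : Fin n → ℂ) :
    fderiv ℂ S.Ps (star l) (star h) = star (fderiv ℂ S.P l h) := by
  have c1 : HasDerivAt (fun t : ℝ => l + t • h) h 0 := by
    simpa using ((hasDerivAt_id (0 : ℝ)).smul_const h).const_add l
  have c2 : HasDerivAt (fun t : ℝ => star l + t • star h) (star h) 0 := by
    simpa using ((hasDerivAt_id (0 : ℝ)).smul_const (star h)).const_add (star l)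
  have d1 : HasDerivAt (fun t : ℝ => S.P (l + t • h)) (fderiv ℂ S.P l h) 0 :=
    HasFDerivAt.comp_hasDerivAt_of_eq 0
      ((S.hP.an l).differentiableAt.hasFDerivAt.restrictScalars ℝ) c1 (by simp)
  have d2 : HasDerivAt (fun t : ℝ => S.Ps (star l + t • star h))
      (fderiv ℂ S.Ps (star l) (star h)) 0 :=
    HasFDerivAt.comp_hasDerivAt_of_eq 0
      ((S.hPs.an (star l)).differentiableAt.hasFDerivAt.restrictScalars ℝ) c2 (by simp)
  have d3 : HasDerivAt (fun t : ℝ => star (S.P (l + t • h))) (star (fderiv ℂ S.P l h)) 0 := d1.star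
  have : (fun t : ℝ => S.Ps (star l + t • star h)) = fun t : ℝ => star (S.P (l + t • h)) := by
    funext t
    rw [S.conjP]; simp
  rw [this] at d2
  exact d2.unique d3

/-- The polarized Levi form vanishes on the whole strict transform near the cone: at the real points
this is Levi-flatness, and the real points of a regular hypersurface are a uniqueness set. -/
lemma lev_van (a b a' b' : Fin n → ℂ) : ∀ ξ ∈ cone S.P S.Ps, S.Van (S.lev a b a' b') ξ := by
  obtain ⟨l, hl0, hl⟩ := S.hP.zero
  have hcone : (l, star l) ∈ cone S.P S.Ps := by
    refine ⟨fun h => hl0 (congrArg Prod.fst h), ?_⟩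
    simp only [S.conjP, star_star, hl]; simp
  have han := S.analyticAt_lev S.anF a b a' b'
  refine Van.everywhere han hcone ?_
  obtain ⟨h', hh'⟩ := S.hP.reg l hl0
  obtain ⟨h, hh⟩ : ∃ h, fderiv ℂ S.P l h = (2 : ℂ)⁻¹ := by
    refine ⟨((2 : ℂ)⁻¹ * (fderiv ℂ S.P l h')⁻¹) • h', ?_⟩
    rw [map_smul, smul_eq_mul, mul_assoc, inv_mul_cancel₀ hh', mul_one]
  have hv : fderiv ℂ S.Φ (0, (l, star l)) (0, (h, star h)) = 1 := by
    rw [S.fderiv_Φ]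
    simp only [S.fderiv_Ps, hh]
    simp
    norm_num
  have hΦ0 : S.Φ (0, (l, star l)) = 0 := by rw [S.Φ0]; exact hcone.2
  refine totally_real_continuation (S.anΦ (l, star l)) hΦ0 hv
    (c := fun y => (star y.1, star y.2.2, star y.2.1)) (by fun_prop) ?_ ?_ ?_ ?_ ?_
    (S.Φconj (l, star l)) (h := fun y => S.lev a b a' b' (y.1 • y.2)) ?_ ?_
  · intro x y; simp
  · intro t y; simp
  · intro y; simp
  · simp
  · simp
  · exact AnalyticAt.fun_comp_of_eq (g := S.lev a b a' b') han (analyticAt_smul _) (by simp)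
  · have ht : Tendsto (fun y : ℂ × (Fin n → ℂ) × (Fin n → ℂ) => y.1 • y.2.1)
        (𝓝 ((0 : ℂ), (l, star l))) (𝓝 0) := by
      have : Continuous (fun y : ℂ × (Fin n → ℂ) × (Fin n → ℂ) => y.1 • y.2.1) := by fun_prop
      have := this.tendsto ((0 : ℂ), (l, star l))
      simpa using this
    filter_upwards [S.rel (l, star l), ht.eventually S.lev_real] with y hy hlev hc hΦ
    have e1 : star y.1 = y.1 := congrArg Prod.fst hc
    have e2 : star y.2.1 = y.2.2 := congrArg (fun x => x.2.2) hc
    have e : y.1 • y.2 = (y.1 • y.2.1, star (y.1 • y.2.1)) := by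
      rw [star_smul, e1, e2]; rfl
    rw [hΦ, mul_zero] at hy
    rw [e] at hy ⊢
    exact hlev hy a b a' b'

end LeviSetup

/-! ### First integrals -/

namespace LeviSetup

variable {n k : ℕ} (S : LeviSetup n k)

/-- The 2-form `df ∧ D_z FC`, evaluated at `(a, b)`. -/
noncomputable def wedge (f : (Fin n → ℂ) → ℂ) (a b : Fin n → ℂ)
    (ξ : (Fin n → ℂ) × (Fin n → ℂ)) : ℂ :=
  fderiv ℂ f ξ.1 a * S.dz b ξ - fderiv ℂ f ξ.1 b * S.dz a ξ

lemma analyticAt_wedge {f : (Fin n → ℂ) → ℂ} {ξ : (Fin n → ℂ) × (Fin n → ℂ)}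
    (h : AnalyticAt ℂ S.FC ξ) (hf : AnalyticAt ℂ f ξ.1) (a b : Fin n → ℂ) :
    AnalyticAt ℂ (S.wedge f a b) ξ := by
  have h1 : ∀ a, AnalyticAt ℂ (fun ξ : (Fin n → ℂ) × (Fin n → ℂ) => fderiv ℂ f ξ.1 a) ξ := by
    intro a
    exact AnalyticAt.fun_comp (g := fun z => fderiv ℂ f z a)
      (((ContinuousLinearMap.apply ℂ ℂ a).analyticAt _).fun_comp hf.fderiv) analyticAt_fst
  exact ((h1 a).mul (S.analyticAt_dz h b)).sub ((h1 b).mul (S.analyticAt_dz h a))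

lemma lev_sum {ξ : (Fin n → ℂ) × (Fin n → ℂ)} (h : AnalyticAt ℂ S.FC ξ) (a b a' b' : Fin n → ℂ)
    (h0 : ∀ l, S.lev a b a' (Pi.single l 1) ξ = 0) : S.lev a b a' b' ξ = 0 := by
  let L : (Fin n → ℂ) →ₗ[ℂ] ℂ := ⟨⟨fun b' => S.lev a b a' b' ξ, fun x y => by
      simp only [lev, dw_add, S.hes_eq_hesB h, map_add]; ring⟩, fun c x => by
      simp only [lev, dw_smul, S.hes_eq_hesB h, map_smul, smul_eq_mul, RingHom.id_apply]; ring⟩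
  have : L b' = 0 := by
    rw [eq_sum_single b', map_sum]
    refine Finset.sum_eq_zero fun i _ => ?_
    rw [map_smul]
    exact smul_eq_zero_of_right _ (h0 i)
  exact this

/-- Local form of the integrability: if the graph of `Z ↦ W(Z) = r (m + f(Z) u)` lies in the
complexified hypersurface, then `df` is proportional to `D_z FC` on all of the hypersurface near a
point of the graph: on the graph this is the chain rule, and Levi-flatness says that the
direction of `D_z FC` is constant along the fibres of the first projection. -/
lemma wedge_local {f : (Fin n → ℂ) → ℂ} {u m Z₁ : Fin n → ℂ} {r : ℂ} (hr : r ≠ 0)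
    (hF : AnalyticAt ℂ S.FC (Z₁, r • (m + f Z₁ • u))) (hf : AnalyticAt ℂ f Z₁)
    (hlev : ∀ a b b', ∀ᶠ ξ in 𝓝 (Z₁, r • (m + f Z₁ • u)), S.FC ξ = 0 → S.lev a b u b' ξ = 0)
    (hu : S.dw u (Z₁, r • (m + f Z₁ • u)) ≠ 0)
    (hsec : ∀ᶠ Z in 𝓝 Z₁, S.FC (Z, r • (m + f Z • u)) = 0)
    (hd : fderiv ℂ f Z₁ ≠ 0) (a b : Fin n → ℂ) :
    ∀ᶠ ξ in 𝓝 (Z₁, r • (m + f Z₁ • u)), S.FC ξ = 0 → S.wedge f a b ξ = 0 := by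
  set W : (Fin n → ℂ) → (Fin n → ℂ) := fun Z => r • (m + f Z • u) with hW
  set ξ₁ := (Z₁, r • (m + f Z₁ • u)) with hξ₁
  have hWc : ContinuousAt (fun Z => (Z, W Z)) Z₁ := by
    have := hf.continuousAt
    fun_prop
  have hWt : Tendsto (fun Z => (Z, W Z)) (𝓝 Z₁) (𝓝 ξ₁) := hWc.tendsto
  have hch : ∀ᶠ Z in 𝓝 Z₁, ∀ a, S.dz a (Z, W Z) + r * fderiv ℂ f Z a * S.dw u (Z, W Z) = 0 := by
    filter_upwards [hsec.eventually_nhds, hf.eventually_analyticAt,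
      hWt.eventually hF.eventually_analyticAt] with Z hZ hfZ hFZ a
    have d1 : HasFDerivAt (fun Z => (Z, W Z)) ((ContinuousLinearMap.id ℂ (Fin n → ℂ)).prod
        (r • (fderiv ℂ f Z).smulRight u)) Z :=
      (hasFDerivAt_id Z).prodMk
        (((hfZ.differentiableAt.hasFDerivAt.smul_const u).const_add m).const_smul r)
    have d2 : HasFDerivAt (fun Z => S.FC (Z, W Z)) ((fderiv ℂ S.FC (Z, W Z)).comp
        ((ContinuousLinearMap.id ℂ (Fin n → ℂ)).prod (r • (fderiv ℂ f Z).smulRight u))) Z :=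
      hFZ.differentiableAt.hasFDerivAt.comp Z d1
    have d3 : HasFDerivAt (fun Z => S.FC (Z, W Z)) (0 : (Fin n → ℂ) →L[ℂ] ℂ) Z :=
      (hasFDerivAt_const (0 : ℂ) Z).congr_of_eventuallyEq hZ
    have e := congrArg (fun L => L a) (d2.unique d3)
    simp only [ContinuousLinearMap.comp_apply, zero_apply] at e
    rw [← e, dz, dw, ← smul_eq_mul, ← map_smul, ← map_add]
    congr 1
    ext i <;> simp [mul_assoc]
  obtain ⟨c, hc⟩ : ∃ c, fderiv ℂ f Z₁ c ≠ 0 := by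
    by_contra hcon
    push Not at hcon
    exact hd (ContinuousLinearMap.ext hcon)
  have hzc : S.dz c ξ₁ ≠ 0 := by
    intro h0
    have := hch.self_of_nhds c
    rw [show (Z₁, W Z₁) = ξ₁ from rfl, h0, zero_add] at this
    exact mul_ne_zero (mul_ne_zero hr hc) hu this
  -- `q = D_z a / D_z c` depends on `z` only, so its value can be computed on the graph.
  have key : ∀ a, ∀ᶠ ξ in 𝓝 ξ₁, S.FC ξ = 0 →
      S.dz a ξ * fderiv ℂ f ξ.1 c = fderiv ℂ f ξ.1 a * S.dz c ξ := by
    intro a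
    have hza := S.analyticAt_dz hF a
    have hzc' := S.analyticAt_dz hF c
    have hq : AnalyticAt ℂ (fun ξ => S.dz a ξ / S.dz c ξ) ξ₁ := hza.div hzc' hzc
    have hne : ∀ᶠ ξ in 𝓝 ξ₁, S.dz c ξ ≠ 0 := hzc'.continuousAt.eventually_ne hzc
    have hune : ∀ᶠ ξ in 𝓝 ξ₁, S.dw u ξ ≠ 0 := (S.analyticAt_dw hF u).continuousAt.eventually_ne hu
    obtain ⟨U, hU, hfib⟩ := fibre_constant hF hsec.self_of_nhds (v := (0, u)) hu hq
      (ContinuousLinearMap.fst ℂ _ _) (by simp) (by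
        filter_upwards [hne, hune, hF.eventually_analyticAt, hq.eventually_analyticAt,
          hne.eventually_nhds, eventually_all.2 fun l => hlev c a (Pi.single l 1)]
          with ξ hξ huξ hFξ hqξ hnξ hl h0 v hv1 hv2
        obtain ⟨v1, v2⟩ := v
        obtain rfl : v1 = 0 := by simpa using hv1
        have hw0 : S.dw v2 ξ = 0 := hv2
        have hlv := S.lev_sum hFξ c a u v2 fun l => hl l h0
        simp only [lev, hw0, mul_zero, zero_mul, sub_zero, add_zero] at hlv
        -- differentiate `q * D_z c = D_z a`
        have d1 := (hqξ.differentiableAt.hasFDerivAt.mul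
          (S.analyticAt_dz hFξ c).differentiableAt.hasFDerivAt)
        have d2 := (S.analyticAt_dz hFξ a).differentiableAt.hasFDerivAt
        have hEq : (fun ξ => S.dz a ξ / S.dz c ξ) * S.dz c =ᶠ[𝓝 ξ] S.dz a := by
          filter_upwards [hnξ] with x hx
          simp [div_mul_cancel₀ _ hx]
        have e := congrArg (fun L => L (0, v2)) (d1.unique (d2.congr_of_eventuallyEq hEq))
        simp only [add_apply, smul_apply, smul_eq_mul] at e
        set X := fderiv ℂ (fun ξ => S.dz a ξ / S.dz c ξ) ξ (0, v2) with hX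
        have e1 : fderiv ℂ (S.dz c) ξ (0, v2) = S.hes c v2 ξ := rfl
        have e2 : fderiv ℂ (S.dz a) ξ (0, v2) = S.hes a v2 ξ := rfl
        rw [e1, e2] at e
        field_simp at e
        have : S.dz c ξ * S.dz c ξ * S.dw u ξ * X = 0 := by
          linear_combination S.dw u ξ * e + hlv
        simpa [hξ, huξ] using this)
    have hfst : Tendsto (fun ξ : (Fin n → ℂ) × (Fin n → ℂ) => ξ.1) (𝓝 ξ₁) (𝓝 Z₁) :=
      continuousAt_fst.tendsto
    have hg : ContinuousAt (fun Z => fderiv ℂ f Z c) Z₁ :=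
      (((ContinuousLinearMap.apply ℂ ℂ c).analyticAt _).fun_comp hf.fderiv).continuousAt
    filter_upwards [hU, hfst.eventually (hWt.eventually hU), hfst.eventually hsec,
      hfst.eventually hch, hne, hfst.eventually (hWt.eventually hune),
      hfst.eventually (hg.eventually_ne hc)] with ξ h1 h2 h3 h4 h5 h6 h7 h0
    have e := hfib ξ h1 _ h2 h0 h3 rfl
    have ea := h4 a
    have ec := h4 c
    have hc' : S.dz c (ξ.1, W ξ.1) ≠ 0 := by
      intro h
      rw [h, zero_add] at ec
      exact mul_ne_zero (mul_ne_zero hr h7) h6 ec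
    rw [div_eq_div_iff h5 hc', eq_neg_of_add_eq_zero_left ea, eq_neg_of_add_eq_zero_left ec] at e
    have : r * S.dw u (ξ.1, W ξ.1) *
        (S.dz a ξ * fderiv ℂ f ξ.1 c - fderiv ℂ f ξ.1 a * S.dz c ξ) = 0 := by
      linear_combination -e
    exact sub_eq_zero.1 ((mul_eq_zero.1 this).resolve_left (mul_ne_zero hr h6))
  have hg : ContinuousAt (fun ξ : (Fin n → ℂ) × (Fin n → ℂ) => fderiv ℂ f ξ.1 c) ξ₁ :=
    ContinuousAt.comp (g := fun Z => fderiv ℂ f Z c)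
      (((ContinuousLinearMap.apply ℂ ℂ c).analyticAt _).fun_comp hf.fderiv).continuousAt
      continuousAt_fst
  filter_upwards [key a, key b, hg.eventually_ne hc] with ξ ha hb hne h0
  have : S.wedge f a b ξ * fderiv ℂ f ξ.1 c = 0 := by
    rw [wedge]
    linear_combination fderiv ℂ f ξ.1 a * hb h0 - fderiv ℂ f ξ.1 b * ha h0
  exact (mul_eq_zero.1 this).resolve_right hne

end LeviSetup

namespace LeviSetup

variable {n k : ℕ} (S : LeviSetup n k)

/-- The relation `FC (r ξ) = r ^ k Φ(r, ξ)`, differentiated in `ξ`. -/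
lemma rel_deriv (ξ₀ : (Fin n → ℂ) × (Fin n → ℂ)) : ∀ᶠ y in 𝓝 ((0 : ℂ), ξ₀), ∀ η,
    y.1 * fderiv ℂ S.FC (y.1 • y.2) η = y.1 ^ k * fderiv ℂ S.Φ y (0, η) := by
  filter_upwards [(S.rel ξ₀).eventually_nhds, eventually_smul S.anF.eventually_analyticAt ξ₀,
    (S.anΦ ξ₀).eventually_analyticAt] with y hy hF hΦ η
  obtain ⟨r, ξ⟩ := y
  have c : Tendsto (fun x => (r, x)) (𝓝 ξ) (𝓝 (r, ξ)) :=
    (Continuous.prodMk_right r).continuousAt.tendsto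
  have d1 : HasFDerivAt (fun x => S.FC (r • x)) ((fderiv ℂ S.FC (r • ξ)).comp
      (r • ContinuousLinearMap.id ℂ ((Fin n → ℂ) × (Fin n → ℂ)))) ξ :=
    HasFDerivAt.comp ξ hF.differentiableAt.hasFDerivAt ((hasFDerivAt_id ξ).const_smul r)
  have d2 : HasFDerivAt (fun x => r ^ k * S.Φ (r, x)) (r ^ k • ((fderiv ℂ S.Φ (r, ξ)).comp
      (ContinuousLinearMap.inr ℂ ℂ ((Fin n → ℂ) × (Fin n → ℂ))))) ξ :=
    (HasFDerivAt.comp ξ hΦ.differentiableAt.hasFDerivAt (hasFDerivAt_prodMk_right r ξ)).const_mul _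
  have e := congrArg (fun L => L η) (d1.unique (d2.congr_of_eventuallyEq (c.eventually hy)))
  simpa using e

/-- Off the exceptional divisor, vanishing on the strict transform descends to the hypersurface. -/
lemma down {G : (Fin n → ℂ) × (Fin n → ℂ) → ℂ} {y : ℂ × (Fin n → ℂ) × (Fin n → ℂ)}
    (hy : y.1 ≠ 0) (hr : ∀ᶠ y in 𝓝 y, S.FC (y.1 • y.2) = y.1 ^ k * S.Φ y)
    (h : ∀ᶠ y in 𝓝 y, S.Φ y = 0 → G (y.1 • y.2) = 0) :
    ∀ᶠ ξ in 𝓝 (y.1 • y.2), S.FC ξ = 0 → G ξ = 0 := by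
  have c : Tendsto (fun ξ => (y.1, y.1⁻¹ • ξ)) (𝓝 (y.1 • y.2)) (𝓝 y) := by
    have : Continuous (fun ξ : (Fin n → ℂ) × (Fin n → ℂ) => (y.1, y.1⁻¹ • ξ)) := by fun_prop
    have := this.tendsto (y.1 • y.2)
    rwa [inv_smul_smul₀ hy] at this
  filter_upwards [c.eventually hr, c.eventually h] with ξ h1 h2 h0
  simp only [smul_inv_smul₀ hy] at h1 h2
  rw [h0] at h1
  exact h2 ((mul_eq_zero.1 h1.symm).resolve_left (pow_ne_zero _ hy))

/-- Vanishing on the hypersurface lifts to the strict transform. -/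
lemma up {G : (Fin n → ℂ) × (Fin n → ℂ) → ℂ} {y : ℂ × (Fin n → ℂ) × (Fin n → ℂ)}
    (hr : ∀ᶠ y in 𝓝 y, S.FC (y.1 • y.2) = y.1 ^ k * S.Φ y)
    (h : ∀ᶠ ξ in 𝓝 (y.1 • y.2), S.FC ξ = 0 → G ξ = 0) :
    ∀ᶠ y in 𝓝 y, S.Φ y = 0 → G (y.1 • y.2) = 0 := by
  filter_upwards [hr, (analyticAt_smul y).continuousAt.eventually h] with y' h1 h2 h0
  exact h2 (by rw [h1, h0, mul_zero])

lemma lev_sum' {ξ : (Fin n → ℂ) × (Fin n → ℂ)} (h : AnalyticAt ℂ S.FC ξ) (a b a' b' : Fin n → ℂ)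
    (h0 : ∀ i j l, S.lev (Pi.single i 1) (Pi.single j 1) a' (Pi.single l 1) ξ = 0) :
    S.lev a b a' b' ξ = 0 := by
  refine S.lev_sum h a b a' b' fun l => ?_
  have h1 : ∀ i, S.lev (Pi.single i 1) b a' (Pi.single l 1) ξ = 0 := by
    intro i
    let L : (Fin n → ℂ) →ₗ[ℂ] ℂ :=
      ⟨⟨fun b => S.lev (Pi.single i 1) b a' (Pi.single l 1) ξ, fun x y => by
        simp only [lev, dz_add, S.hes_eq_hesB h, map_add, LinearMap.add_apply]; ring⟩, fun c x => by
        simp only [lev, dz_smul, S.hes_eq_hesB h, map_smul, smul_eq_mul, RingHom.id_apply,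
          LinearMap.smul_apply]; ring⟩
    have : L b = 0 := by
      rw [eq_sum_single b, map_sum]
      refine Finset.sum_eq_zero fun j _ => ?_
      rw [map_smul]
      exact smul_eq_zero_of_right _ (h0 i j l)
    exact this
  let L : (Fin n → ℂ) →ₗ[ℂ] ℂ :=
    ⟨⟨fun a => S.lev a b a' (Pi.single l 1) ξ, fun x y => by
      simp only [lev, dz_add, S.hes_eq_hesB h, map_add, LinearMap.add_apply]; ring⟩, fun c x => by
      simp only [lev, dz_smul, S.hes_eq_hesB h, map_smul, smul_eq_mul, RingHom.id_apply,
        LinearMap.smul_apply]; ring⟩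
  have : L a = 0 := by
    rw [eq_sum_single a, map_sum]
    refine Finset.sum_eq_zero fun j _ => ?_
    rw [map_smul]
    exact smul_eq_zero_of_right _ (h1 j)
  exact this

/-- The first integral `f(Z) = τ(r, Z / r)`, obtained from the graph `w = m + τ(r, z) u` of the strict
transform near `(0, (0, m))`, satisfies `df ∧ D_z FC = 0` on the strict transform. -/
lemma first_integral {m u : Fin n → ℂ} (hm : m ≠ 0) (hm0 : S.Ps m = 0)
    (hu : fderiv ℂ S.Ps m u = 1) {τ : ℂ × (Fin n → ℂ) → ℂ} (hτ : AnalyticAt ℂ τ 0) (hτ0 : τ 0 = 0)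
    (hsec : ∀ᶠ p in 𝓝 (0 : ℂ × (Fin n → ℂ)), S.Φ (p.1, (p.2, m + τ p • u)) = 0) :
    ∀ᶠ r in 𝓝[≠] (0 : ℂ), AnalyticAt ℂ (fun Z => τ (r, r⁻¹ • Z)) 0 ∧
      ∀ a b, ∀ ξ ∈ cone S.P S.Ps, S.Van (S.wedge (fun Z => τ (r, r⁻¹ • Z)) a b) ξ := by
  have hcone : ((0 : Fin n → ℂ), m) ∈ cone S.P S.Ps := by
    refine ⟨fun h => hm (congrArg Prod.snd h), ?_⟩
    simp only [S.hP.apply_zero, hm0, add_zero]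
  have hΦ0 : S.Φ (0, (0, m)) = 0 := by rw [S.Φ0]; exact hcone.2
  have hv : fderiv ℂ S.Φ (0, (0, m)) (0, (0, u)) = 1 := by
    rw [S.fderiv_Φ]; simp [hu]
  obtain ⟨W₁, hW₁, hcont⟩ := continuation (S.anΦ (0, m)) hΦ0 hv
      (eventually_smul S.anF.eventually_analyticAt (0, m))
  set sec : ℂ × (Fin n → ℂ) → ℂ × (Fin n → ℂ) × (Fin n → ℂ) :=
    fun p => (p.1, (p.2, m + τ p • u)) with hsecdef
  have hsect : Tendsto sec (𝓝 0) (𝓝 (0, (0, m))) := by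
    have h1 : ContinuousAt sec 0 := by
      have := hτ.continuousAt
      fun_prop
    have := h1.tendsto
    simpa [sec, hτ0] using this
  have hdv : ∀ᶠ y in 𝓝 ((0 : ℂ), ((0 : Fin n → ℂ), m)), fderiv ℂ S.Φ y (0, (0, u)) ≠ 0 := by
    have : ContinuousAt (fun y => fderiv ℂ S.Φ y (0, (0, u))) (0, (0, m)) :=
      (((ContinuousLinearMap.apply ℂ ℂ ((0 : ℂ), ((0 : Fin n → ℂ), u))).analyticAt _).fun_comp
        (S.anΦ (0, m)).fderiv).continuousAt
    exact this.eventually_ne (by rw [hv]; exact one_ne_zero)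
  have hlevb : ∀ᶠ y in 𝓝 ((0 : ℂ), ((0 : Fin n → ℂ), m)), S.Φ y = 0 → ∀ i j l : Fin n,
      S.lev (Pi.single i 1) (Pi.single j 1) u (Pi.single l 1) (y.1 • y.2) = 0 := by
    have := eventually_all.2 fun i : Fin n => eventually_all.2 fun j : Fin n =>
      eventually_all.2 fun l : Fin n =>
        S.lev_van (Pi.single i 1) (Pi.single j 1) u (Pi.single l 1) _ hcone
    filter_upwards [this] with y hy h0 i j l using hy i j l h0
  have hgood : ∀ᶠ p in 𝓝 (0 : ℂ × (Fin n → ℂ)), AnalyticAt ℂ τ p ∧ S.Φ (sec p) = 0 ∧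
      sec p ∈ W₁ ∧ (∀ᶠ y in 𝓝 (sec p), S.FC (y.1 • y.2) = y.1 ^ k * S.Φ y) ∧
      (∀ᶠ y in 𝓝 (sec p), S.Φ y = 0 → ∀ i j l : Fin n,
      S.lev (Pi.single i 1) (Pi.single j 1) u (Pi.single l 1) (y.1 • y.2) = 0) ∧
      AnalyticAt ℂ S.FC ((sec p).1 • (sec p).2) ∧ (p.1 ≠ 0 → S.dw u ((sec p).1 • (sec p).2) ≠ 0) := by
    filter_upwards [hτ.eventually_analyticAt, hsec, hsect.eventually hW₁,
      hsect.eventually (S.rel (0, m)).eventually_nhds, hsect.eventually hlevb.eventually_nhds,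
      hsect.eventually (eventually_smul S.anF.eventually_analyticAt (0, m)),
      hsect.eventually hdv, hsect.eventually (S.rel_deriv (0, m))] with p h1 h2 h3 h4 h5 h6 h7 h8
    refine ⟨h1, h2, h3, h4, h5, h6, fun hp h0 => ?_⟩
    have e := h8 (0, u)
    rw [dw] at h0
    rw [h0, mul_zero] at e
    exact mul_ne_zero (pow_ne_zero _ hp) h7 e.symm
  obtain ⟨δ, hδ, hball⟩ := Metric.eventually_nhds_iff_ball.1 hgood
  have hr : ∀ᶠ r in 𝓝[≠] (0 : ℂ), ‖r‖ < δ := by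
    have : ∀ᶠ r in 𝓝 (0 : ℂ), ‖r‖ < δ := by
      filter_upwards [Metric.ball_mem_nhds (0 : ℂ) hδ] with r hr using mem_ball_zero_iff.1 hr
    exact this.filter_mono nhdsWithin_le_nhds
  filter_upwards [hr, self_mem_nhdsWithin] with r hrδ hr0
  have hr0 : r ≠ 0 := hr0
  have hrn : 0 < ‖r‖ := norm_pos_iff.2 hr0
  set f : (Fin n → ℂ) → ℂ := fun Z => τ (r, r⁻¹ • Z) with hf
  have hmem : ∀ Z : Fin n → ℂ, ‖Z‖ < ‖r‖ * δ → (r, r⁻¹ • Z) ∈ Metric.ball (0 : ℂ × (Fin n → ℂ)) δ := by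
    intro Z hZ
    rw [mem_ball_zero_iff, Prod.norm_def, max_lt_iff]
    refine ⟨hrδ, ?_⟩
    rw [norm_smul, norm_inv, inv_mul_lt_iff₀ hrn]
    exact hZ
  have hfan : ∀ Z, ‖Z‖ < ‖r‖ * δ → AnalyticAt ℂ f Z := by
    intro Z hZ
    exact AnalyticAt.fun_comp (g := τ) (f := fun Z : Fin n → ℂ => (r, r⁻¹ • Z)) (hball _ (hmem Z hZ)).1
      (AnalyticAt.prod analyticAt_const
        ((r⁻¹ • ContinuousLinearMap.id ℂ (Fin n → ℂ)).analyticAt Z))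
  have hf0 : AnalyticAt ℂ f 0 := hfan 0 (by rw [norm_zero]; positivity)
  refine ⟨hf0, fun a b => Van.everywhere (S.analyticAt_wedge S.anF hf0 a b) hcone ?_⟩
  by_cases htriv : ∀ᶠ Z in 𝓝 (0 : Fin n → ℂ), fderiv ℂ f Z = 0
  · have : ∀ᶠ ξ in 𝓝 (0 : (Fin n → ℂ) × (Fin n → ℂ)), fderiv ℂ f ξ.1 = 0 :=
      (continuousAt_fst (p := (0 : (Fin n → ℂ) × (Fin n → ℂ)))).eventually htriv
    filter_upwards [eventually_smul this (0, m)] with y hy _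
    rw [wedge, hy]; simp
  have hball0 : ∀ᶠ Z in 𝓝 (0 : Fin n → ℂ), ‖Z‖ < ‖r‖ * (δ / 2) := by
    have h2 : 0 < ‖r‖ * (δ / 2) := by positivity
    filter_upwards [Metric.ball_mem_nhds (0 : Fin n → ℂ) h2] with r hr using mem_ball_zero_iff.1 hr
  obtain ⟨Z₁, hZd, hZn⟩ := ((not_eventually.1 htriv).and_eventually hball0).exists
  have hZn' : ‖Z₁‖ < ‖r‖ * δ := hZn.trans (by nlinarith)
  set z₁ := r⁻¹ • Z₁ with hz₁
  have hz₁n : ‖z₁‖ < δ / 2 := by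
    rw [hz₁, norm_smul, norm_inv, inv_mul_lt_iff₀ hrn]; exact hZn
  obtain ⟨hg1, hg2, hg3, hg4, hg5, hg6, hg7⟩ := hball _ (hmem Z₁ hZn')
  have hsm : (sec (r, z₁)).1 • (sec (r, z₁)).2 = (Z₁, r • (m + f Z₁ • u)) := by
    simp only [sec, Prod.smul_mk, hf, hz₁, smul_inv_smul₀ hr0]
  refine hcont (Metric.ball (0 : ℂ) (2 * ‖r‖) ×ˢ (Metric.ball (0 : Fin n → ℂ) (δ / 2) ×ˢ Set.univ))
    ?_ ((convex_ball _ _).prod ((convex_ball _ _).prod convex_univ)) ?_ _ ?_ (sec (r, z₁)) ⟨hg3, ?_⟩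
    hg2 ?_
  · exact prod_mem_nhds (Metric.ball_mem_nhds _ (by positivity))
      (prod_mem_nhds (Metric.ball_mem_nhds _ (by positivity)) univ_mem)
  · rintro ⟨y1, y2, y3⟩ ⟨h1, h2, -⟩ t
    exact ⟨by simpa using h1, by simpa using h2, trivial⟩
  · rintro y ⟨hy, h1, h2, -⟩
    refine AnalyticAt.fun_comp (g := S.wedge f a b) (S.analyticAt_wedge hy (hfan _ ?_) a b)
      (analyticAt_smul y)
    rw [mem_ball_zero_iff] at h1 h2
    change ‖y.1 • y.2.1‖ < _
    rw [norm_smul]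
    have := norm_nonneg y.1
    have := norm_nonneg y.2.1
    nlinarith
  · exact ⟨by simp [sec, hrn], by simpa [sec] using hz₁n, trivial⟩
  · refine S.up hg4 ?_
    rw [hsm]
    rw [hsm] at hg6 hg7
    refine S.wedge_local hr0 hg6 (hfan _ hZn') ?_ (hg7 hr0) ?_ hZd a b
    · intro a b b'
      rw [← hsm]
      refine S.down hr0 hg4 ?_
      rw [← hsm] at hg6
      filter_upwards [hg5, (analyticAt_smul _).continuousAt.eventually hg6.eventually_analyticAt]
        with y hy hFy h0
      exact S.lev_sum' hFy a b u b' (hy h0)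
    · have h3 : ∀ᶠ Z in 𝓝 Z₁, ‖Z‖ < ‖r‖ * δ := continuous_norm.continuousAt.eventually_lt_const hZn'
      filter_upwards [h3] with Z hZ
      have h4 := hball _ (hmem Z hZ)
      have h5 := h4.2.2.2.1.self_of_nhds
      rw [h4.2.1, mul_zero] at h5
      have h6 : (sec (r, r⁻¹ • Z)).1 • (sec (r, r⁻¹ • Z)).2 = (Z, r • (m + f Z • u)) := by
        simp only [sec, Prod.smul_mk, hf, smul_inv_smul₀ hr0]
      rwa [h6] at h5

end LeviSetup

namespace LeviSetup

variable {n k : ℕ} (S : LeviSetup n k)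

lemma wedge_sum (f : (Fin n → ℂ) → ℂ) (a b : Fin n → ℂ) (ξ)
    (h : ∀ i, S.wedge f (Pi.single i 1) b ξ = 0) : S.wedge f a b ξ = 0 := by
  let L : (Fin n → ℂ) →ₗ[ℂ] ℂ := ⟨⟨fun a => S.wedge f a b ξ, fun x y => by
      simp only [wedge, dz_add, map_add]; ring⟩, fun c x => by
      simp only [wedge, dz_smul, map_smul, smul_eq_mul, RingHom.id_apply]; ring⟩
  have : L a = 0 := by
    rw [eq_sum_single a, map_sum]
    refine Finset.sum_eq_zero fun j _ => ?_
    rw [map_smul]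
    exact smul_eq_zero_of_right _ (h j)
  exact this

/-- If `df ∧ D_z FC = 0` on the strict transform, then on it `f(z)` is a function `g(w)` of the
other group of variables. -/
lemma second_integral {f : (Fin n → ℂ) → ℂ} (hf : AnalyticAt ℂ f 0)
    (hw : ∀ a b, ∀ ξ ∈ cone S.P S.Ps, S.Van (S.wedge f a b) ξ) :
    ∃ g : (Fin n → ℂ) → ℂ, AnalyticAt ℂ g 0 ∧
      ∀ ξ ∈ cone S.P S.Ps, S.Van (fun ξ => f ξ.1 - g ξ.2) ξ := by
  obtain ⟨l, hl, hl0⟩ := S.hP.zero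
  obtain ⟨u, hu⟩ : ∃ u, fderiv ℂ S.P l u = 1 := by
    obtain ⟨h, hh⟩ := S.hP.reg l hl
    exact ⟨(fderiv ℂ S.P l h)⁻¹ • h, by rw [map_smul, smul_eq_mul, inv_mul_cancel₀ hh]⟩
  have hcone : (l, (0 : Fin n → ℂ)) ∈ cone S.P S.Ps := by
    refine ⟨fun h => hl (congrArg Prod.fst h), ?_⟩
    simp only [S.hPs.apply_zero, hl0, add_zero]
  have hΦ0 : S.Φ (0, (l, 0)) = 0 := by rw [S.Φ0]; exact hcone.2
  have hv : fderiv ℂ S.Φ (0, (l, 0)) (0, (u, 0)) = 1 := by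
    rw [S.fderiv_Φ]; simp [hu]
  obtain ⟨σ, hσ, hσ0, hsec⟩ := exists_implicit (S.anΦ (l, 0)) hΦ0 hv
    ((ContinuousLinearMap.fst ℂ ℂ (Fin n → ℂ)).prod
      ((0 : ℂ × (Fin n → ℂ) →L[ℂ] (Fin n → ℂ)).prod (ContinuousLinearMap.snd ℂ ℂ (Fin n → ℂ))))
  have hfst : ∀ᶠ ξ in 𝓝 (0 : (Fin n → ℂ) × (Fin n → ℂ)), AnalyticAt ℂ f ξ.1 :=
    (continuousAt_fst (p := (0 : (Fin n → ℂ) × (Fin n → ℂ)))).eventually hf.eventually_analyticAt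
  obtain ⟨W₁, hW₁, hcont⟩ := continuation (S.anΦ (l, 0)) hΦ0 hv (eventually_smul hfst (l, 0))
  set sec : ℂ × (Fin n → ℂ) → ℂ × (Fin n → ℂ) × (Fin n → ℂ) :=
    fun p => (p.1, (l + σ p • u, p.2)) with hsecdef
  have hsec : ∀ᶠ p in 𝓝 0, S.Φ (sec p) = 0 := by
    filter_upwards [hsec] with p hp
    simpa [sec] using hp
  have hsect : Tendsto sec (𝓝 0) (𝓝 (0, (l, 0))) := by
    have h1 : ContinuousAt sec 0 := by
      have := hσ.continuousAt
      fun_prop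
    have := h1.tendsto
    simpa [sec, hσ0] using this
  have hdv : ∀ᶠ y in 𝓝 ((0 : ℂ), (l, (0 : Fin n → ℂ))), fderiv ℂ S.Φ y (0, (u, 0)) ≠ 0 := by
    have : ContinuousAt (fun y => fderiv ℂ S.Φ y (0, (u, 0))) (0, (l, 0)) :=
      (((ContinuousLinearMap.apply ℂ ℂ ((0 : ℂ), (u, (0 : Fin n → ℂ)))).analyticAt _).fun_comp
        (S.anΦ (l, 0)).fderiv).continuousAt
    exact this.eventually_ne (by rw [hv]; exact one_ne_zero)
  have hwb : ∀ᶠ y in 𝓝 ((0 : ℂ), (l, (0 : Fin n → ℂ))), ∀ i : Fin n, S.Φ y = 0 →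
      S.wedge f (Pi.single i 1) u (y.1 • y.2) = 0 :=
    eventually_all.2 fun i : Fin n => hw (Pi.single i 1) u _ hcone
  have hgood : ∀ᶠ p in 𝓝 (0 : ℂ × (Fin n → ℂ)), AnalyticAt ℂ σ p ∧ S.Φ (sec p) = 0 ∧
      sec p ∈ W₁ ∧ (∀ᶠ y in 𝓝 (sec p), S.FC (y.1 • y.2) = y.1 ^ k * S.Φ y) ∧
      (∀ᶠ y in 𝓝 (sec p), ∀ i : Fin n, S.Φ y = 0 →
        S.wedge f (Pi.single i 1) u (y.1 • y.2) = 0) ∧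
      AnalyticAt ℂ S.FC ((sec p).1 • (sec p).2) ∧
      (p.1 ≠ 0 → S.dz u ((sec p).1 • (sec p).2) ≠ 0) ∧
      AnalyticAt ℂ f ((sec p).1 • (sec p).2).1 := by
    filter_upwards [hσ.eventually_analyticAt, hsec, hsect.eventually hW₁,
      hsect.eventually (S.rel (l, 0)).eventually_nhds, hsect.eventually hwb.eventually_nhds,
      hsect.eventually (eventually_smul S.anF.eventually_analyticAt (l, 0)),
      hsect.eventually hdv, hsect.eventually (S.rel_deriv (l, 0)),
      hsect.eventually (eventually_smul hfst (l, 0))] with p h1 h2 h3 h4 h5 h6 h7 h8 h9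
    refine ⟨h1, h2, h3, h4, h5, h6, fun hp h0 => ?_, h9⟩
    have e := h8 (u, 0)
    rw [dz] at h0
    rw [h0, mul_zero] at e
    exact mul_ne_zero (pow_ne_zero _ hp) h7 e.symm
  obtain ⟨δ, hδ, hball⟩ := Metric.eventually_nhds_iff_ball.1 hgood
  obtain ⟨r, hr0, hrδ⟩ : ∃ r : ℂ, r ≠ 0 ∧ ‖r‖ < δ := by
    obtain ⟨r, hr, hr'⟩ := NormedField.exists_norm_lt ℂ hδ
    exact ⟨r, norm_pos_iff.1 hr, hr'⟩
  have hrn : 0 < ‖r‖ := norm_pos_iff.2 hr0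
  set g : (Fin n → ℂ) → ℂ := fun W => f (r • (l + σ (r, r⁻¹ • W) • u)) with hg
  have hmem : ∀ Z : Fin n → ℂ, ‖Z‖ < ‖r‖ * δ → (r, r⁻¹ • Z) ∈ Metric.ball (0 : ℂ × (Fin n → ℂ)) δ := by
    intro Z hZ
    rw [mem_ball_zero_iff, Prod.norm_def, max_lt_iff]
    refine ⟨hrδ, ?_⟩
    rw [norm_smul, norm_inv, inv_mul_lt_iff₀ hrn]
    exact hZ
  have hgan : ∀ Z, ‖Z‖ < ‖r‖ * δ → AnalyticAt ℂ g Z := by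
    intro Z hZ
    have h := hball _ (hmem Z hZ)
    have h1 : AnalyticAt ℂ (fun Z => σ (r, r⁻¹ • Z)) Z :=
      AnalyticAt.fun_comp (g := σ) (f := fun Z : Fin n → ℂ => (r, r⁻¹ • Z)) h.1
        (AnalyticAt.prod analyticAt_const
          ((r⁻¹ • ContinuousLinearMap.id ℂ (Fin n → ℂ)).analyticAt Z))
    have h2 : AnalyticAt ℂ (fun Z => r • (l + σ (r, r⁻¹ • Z) • u)) Z :=
      analyticAt_const.fun_smul (analyticAt_const.fun_add (h1.fun_smul analyticAt_const))
    exact AnalyticAt.fun_comp (g := f) h.2.2.2.2.2.2.2 h2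
  have hr0' : ‖(0 : Fin n → ℂ)‖ < ‖r‖ * δ := by rw [norm_zero]; positivity
  have hg0 : AnalyticAt ℂ g 0 := hgan 0 hr0'
  have han : ∀ ξ : (Fin n → ℂ) × (Fin n → ℂ), AnalyticAt ℂ f ξ.1 → AnalyticAt ℂ g ξ.2 →
      AnalyticAt ℂ (fun ξ : (Fin n → ℂ) × (Fin n → ℂ) => f ξ.1 - g ξ.2) ξ := fun ξ h1 h2 =>
    (AnalyticAt.fun_comp (g := f) h1 analyticAt_fst).sub
      (AnalyticAt.fun_comp (g := g) h2 analyticAt_snd)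
  refine ⟨g, hg0, Van.everywhere (han 0 hf hg0) hcone ?_⟩
  have hsm : ∀ Z, (sec (r, r⁻¹ • Z)).1 • (sec (r, r⁻¹ • Z)).2
      = (r • (l + σ (r, r⁻¹ • Z) • u), Z) := by
    intro Z
    simp only [sec, Prod.smul_mk, smul_inv_smul₀ hr0]
  obtain ⟨hg1, hg2, hg3, hg4, hg5, hg6, hg7, hg8⟩ := hball _ (hmem 0 hr0')
  refine hcont (Metric.ball (0 : ℂ) (2 * ‖r‖) ×ˢ (Set.univ ×ˢ Metric.ball (0 : Fin n → ℂ) (δ / 2)))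
    ?_ ((convex_ball _ _).prod (convex_univ.prod (convex_ball _ _))) ?_
    (fun y => (fun ξ : (Fin n → ℂ) × (Fin n → ℂ) => f ξ.1 - g ξ.2) (y.1 • y.2)) ?_
    (sec (r, r⁻¹ • 0)) ⟨hg3, ?_⟩ hg2 ?_
  · exact prod_mem_nhds (Metric.ball_mem_nhds _ (by positivity))
      (prod_mem_nhds univ_mem (Metric.ball_mem_nhds _ (by positivity)))
  · rintro ⟨y1, y2, y3⟩ ⟨h1, -, h2⟩ t
    exact ⟨by simpa using h1, trivial, by simpa using h2⟩
  · rintro y ⟨hy, h1, -, h2⟩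
    refine AnalyticAt.fun_comp (g := fun ξ : (Fin n → ℂ) × (Fin n → ℂ) => f ξ.1 - g ξ.2)
      (han _ hy (hgan _ ?_)) (analyticAt_smul y)
    rw [mem_ball_zero_iff] at h1 h2
    change ‖y.1 • y.2.2‖ < _
    rw [norm_smul]
    have := norm_nonneg y.1
    have := norm_nonneg y.2.2
    nlinarith
  · exact ⟨by simp [sec, hrn], trivial, by simpa [sec] using hδ⟩
  · refine S.up (G := fun ξ => f ξ.1 - g ξ.2) hg4 ?_
    have hF0 : S.FC ((sec (r, r⁻¹ • 0)).1 • (sec (r, r⁻¹ • 0)).2) = 0 := by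
      rw [hg4.self_of_nhds, hg2, mul_zero]
    set ξ₁ := (sec (r, r⁻¹ • 0)).1 • (sec (r, r⁻¹ • 0)).2 with hξ₁
    have hwd : ∀ᶠ ξ in 𝓝 ξ₁, ∀ i : Fin n, S.FC ξ = 0 → S.wedge f (Pi.single i 1) u ξ = 0 :=
      eventually_all.2 fun i => S.down hr0 hg4 (hg5.mono fun y hy => hy i)
    have hqan : ∀ ξ : (Fin n → ℂ) × (Fin n → ℂ), AnalyticAt ℂ f ξ.1 →
        AnalyticAt ℂ (fun ξ : (Fin n → ℂ) × (Fin n → ℂ) => f ξ.1) ξ := fun ξ h =>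
      AnalyticAt.fun_comp (g := f) h analyticAt_fst
    obtain ⟨U, hU, hfib⟩ := fibre_constant hg6 hF0 (v := (u, 0)) (hg7 hr0) (hqan ξ₁ hg8)
      (ContinuousLinearMap.snd ℂ _ _) (by simp) (by
        filter_upwards [hwd, (S.analyticAt_dz hg6 u).continuousAt.eventually_ne (hg7 hr0),
          (continuousAt_fst (p := ξ₁)).eventually hg8.eventually_analyticAt]
          with ξ h1 h2 h3 h0 v hv1 hv2
        obtain ⟨a, v2⟩ := v
        obtain rfl : v2 = 0 := by simpa using hv1
        have hz0 : S.dz a ξ = 0 := hv2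
        have h4 := S.wedge_sum f a u ξ fun i => h1 i h0
        rw [wedge, hz0, mul_zero, sub_zero] at h4
        have h5 : HasFDerivAt (fun ξ : (Fin n → ℂ) × (Fin n → ℂ) => f ξ.1)
          ((fderiv ℂ f ξ.1).comp (ContinuousLinearMap.fst ℂ _ _)) ξ :=
          h3.differentiableAt.hasFDerivAt.comp ξ hasFDerivAt_fst
        rw [h5.fderiv]
        exact (mul_eq_zero.1 h4).resolve_right h2)
    have hsnd : Tendsto (fun ξ : (Fin n → ℂ) × (Fin n → ℂ) => ξ.2) (𝓝 ξ₁) (𝓝 0) := by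
      have := (continuousAt_snd (p := ξ₁)).tendsto
      rwa [show ξ₁.2 = 0 by rw [hξ₁, hsm]] at this
    have hsc : Tendsto (fun Z => (r • (l + σ (r, r⁻¹ • Z) • u), Z)) (𝓝 (0 : Fin n → ℂ)) (𝓝 ξ₁) := by
      have h1 : AnalyticAt ℂ (fun Z => σ (r, r⁻¹ • Z)) 0 :=
        AnalyticAt.fun_comp (g := σ) (f := fun Z : Fin n → ℂ => (r, r⁻¹ • Z)) hg1
          (AnalyticAt.prod analyticAt_const
            ((r⁻¹ • ContinuousLinearMap.id ℂ (Fin n → ℂ)).analyticAt 0))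
      have h2 := h1.continuousAt
      have h3 : ContinuousAt (fun Z => (r • (l + σ (r, r⁻¹ • Z) • u), Z)) 0 := by fun_prop
      have := h3.tendsto
      rwa [hξ₁, hsm]
    have hZ : ∀ᶠ Z in 𝓝 (0 : Fin n → ℂ), S.FC (r • (l + σ (r, r⁻¹ • Z) • u), Z) = 0 := by
      filter_upwards [continuous_norm.continuousAt.eventually_lt_const hr0'] with Z hZ
      have h := hball _ (hmem Z hZ)
      have h5 := h.2.2.2.1.self_of_nhds
      rwa [h.2.1, mul_zero, hsm] at h5
    filter_upwards [hU, hsnd.eventually (hsc.eventually hU), hsnd.eventually hZ] with ξ h1 h2 h3 h0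
    exact sub_eq_zero.2 (hfib ξ h1 _ h2 h0 h3 rfl)

end LeviSetup

/-! ### Leading terms of the first integrals -/

lemma diag_smul {V : Type} [NormedAddCommGroup V] [NormedSpace ℂ V] {j : ℕ}
    (q : ContinuousMultilinearMap ℂ (fun _ : Fin j => V) ℂ) (t : ℂ) (x : V) :
    q (fun _ => t • x) = t ^ j * q (fun _ => x) := by
  have := q.map_smul_univ (fun _ => t) (fun _ => x)
  simpa using this

/-- Among the terms of degree `j ≤ k` of the Taylor series of a function `p` homogeneous of degree
`k`, the first that is not known to vanish is `0` if `j < k` and `p` if `j = k`; the factor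
`0 ^ (k - j)` covers both cases. -/
lemma diag_of_hom {n k j : ℕ} {p : (Fin n → ℂ) → ℂ} (hp : IsHomSing k p)
    {q : FormalMultilinearSeries ℂ (Fin n → ℂ) ℂ} (hq : HasFPowerSeriesAt p q 0) (hj : j ≤ k)
    (h0 : ∀ m < j, q m = 0) (z : Fin n → ℂ) : q j (fun _ => z) = 0 ^ (k - j) * p z := by
  obtain ⟨B, hB, hrel, hB0⟩ := exists_blowup j hq h0
  rw [← hB0]
  have hc : Tendsto (fun r : ℂ => (r, z)) (𝓝 0) (𝓝 (0, z)) := by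
    have : ContinuousAt (fun r : ℂ => (r, z)) 0 := by fun_prop
    exact this.tendsto
  have h1 : Tendsto (fun r : ℂ => B (r, z)) (𝓝[≠] 0) (𝓝 (B (0, z))) :=
    ((hB z).continuousAt.tendsto.comp hc).mono_left nhdsWithin_le_nhds
  have h2 : Tendsto (fun r : ℂ => r ^ (k - j) * p z) (𝓝[≠] 0) (𝓝 (0 ^ (k - j) * p z)) := by
    have : ContinuousAt (fun r : ℂ => r ^ (k - j) * p z) 0 := by fun_prop
    exact this.tendsto.mono_left nhdsWithin_le_nhds
  refine tendsto_nhds_unique h1 (h2.congr' ?_)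
  filter_upwards [nhdsWithin_le_nhds (hc.eventually (hrel z)), self_mem_nhdsWithin] with r hr hr0
  have hr0 : r ≠ 0 := hr0
  simp only [hp.hom, smul_eq_mul] at hr
  apply mul_left_cancel₀ (pow_ne_zero j hr0)
  rw [← hr, ← mul_assoc, ← pow_add, Nat.add_sub_cancel' hj]

lemma orderGE_of_hom {n k : ℕ} {p : (Fin n → ℂ) → ℂ} (hp : IsHomSing k p) :
    OrderGE ℂ k p := by
  suffices ∀ j ≤ k, OrderGE ℂ j p from this k le_rfl
  intro j
  induction j with
  | zero =>
    intro _
    obtain ⟨q, hq⟩ := hp.an 0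
    exact ⟨q, hq, fun m hm => absurd hm (by simp)⟩
  | succ j ih =>
    intro hj
    obtain ⟨q, hq, h0⟩ := ih (by omega)
    refine orderGE_succ_of_diag hq h0 fun z => ?_
    rw [diag_of_hom hp hq (by omega) h0, zero_pow (by omega), zero_mul]

/-- If the degree `k` part of `f` is `c · p`, then `f - c · p` has order at least `k + 1`. -/
lemma orderGE_sub_hom {n k : ℕ} {p f : (Fin n → ℂ) → ℂ} (hp : IsHomSing k p)
    {q : FormalMultilinearSeries ℂ (Fin n → ℂ) ℂ} (hq : HasFPowerSeriesAt f q 0)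
    (h0 : ∀ m < k, q m = 0) {c : ℂ} (hc : ∀ z, q k (fun _ => z) = c * p z) :
    OrderGE ℂ (k + 1) (fun z => f z - c * p z) := by
  obtain ⟨s, hs, hs0⟩ := orderGE_of_hom hp
  have h := hq.sub (hs.const_smul (c := c))
  refine orderGE_succ_of_diag (p := q - c • s) h (fun m hm => ?_) fun z => ?_
  · have : (q - c • s) m = q m - c • s m := rfl
    rw [this, h0 m hm, hs0 m hm]; simp
  · have : (q - c • s) k (fun _ => z) = q k (fun _ => z) - c * s k (fun _ => z) := rfl
    rw [this, hc, diag_of_hom hp hs le_rfl hs0]; simp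

namespace LeviSetup

variable {n k : ℕ} (S : LeviSetup n k)

/-- Every point of the cone is the limit of a curve in the strict transform that leaves the
exceptional divisor. -/
lemma exists_curve {ξ : (Fin n → ℂ) × (Fin n → ℂ)} (hξ : ξ ∈ cone S.P S.Ps) :
    ∃ γ : ℂ → (Fin n → ℂ) × (Fin n → ℂ), Tendsto (fun r => (r, γ r)) (𝓝 0) (𝓝 (0, ξ)) ∧
      ∀ᶠ r in 𝓝 0, S.Φ (r, γ r) = 0 := by
  obtain ⟨η, hη⟩ := S.exists_dir hξ.1
  have hΦ0 : S.Φ (0, ξ) = 0 := by rw [S.Φ0]; exact hξ.2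
  obtain ⟨τ, hτ, hτ0, h⟩ := exists_implicit (S.anΦ ξ) hΦ0 hη
    (ContinuousLinearMap.inl ℂ ℂ ((Fin n → ℂ) × (Fin n → ℂ)))
  refine ⟨fun r => ξ + τ r • η, ?_, ?_⟩
  · have : ContinuousAt (fun r => (r, ξ + τ r • η)) 0 := by
      have := hτ.continuousAt
      fun_prop
    have := this.tendsto
    simpa [hτ0] using this
  · filter_upwards [h] with r hr
    simpa using hr

/-- If `f(z) = g(w)` on the strict transform, the degree `j` leading forms of `f` and `g` agree on the
cone. -/
lemma leading_eq {f g : (Fin n → ℂ) → ℂ}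
    (hV : ∀ ξ ∈ cone S.P S.Ps, S.Van (fun ξ => f ξ.1 - g ξ.2) ξ)
    {pf pg : FormalMultilinearSeries ℂ (Fin n → ℂ) ℂ} (hf : HasFPowerSeriesAt f pf 0)
    (hg : HasFPowerSeriesAt g pg 0) {j : ℕ} (hf0 : ∀ m < j, pf m = 0) (hg0 : ∀ m < j, pg m = 0)
    {z w : Fin n → ℂ} (hξ : (z, w) ∈ cone S.P S.Ps) :
    pf j (fun _ => z) = pg j (fun _ => w) := by
  obtain ⟨γ, hγ, hΦ⟩ := S.exists_curve hξ
  obtain ⟨B, hB, hBrel, hB0⟩ := exists_blowup j hf hf0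
  obtain ⟨C, hC, hCrel, hC0⟩ := exists_blowup j hg hg0
  rw [← hB0, ← hC0]
  have hz : Tendsto (fun r => (r, (γ r).1)) (𝓝 0) (𝓝 ((0 : ℂ), z)) := by
    have : ContinuousAt (fun y : ℂ × (Fin n → ℂ) × (Fin n → ℂ) => (y.1, y.2.1)) (0, (z, w)) := by
      fun_prop
    exact this.tendsto.comp hγ
  have hw : Tendsto (fun r => (r, (γ r).2)) (𝓝 0) (𝓝 ((0 : ℂ), w)) := by
    have : ContinuousAt (fun y : ℂ × (Fin n → ℂ) × (Fin n → ℂ) => (y.1, y.2.2)) (0, (z, w)) := by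
      fun_prop
    exact this.tendsto.comp hγ
  have h1 := ((hB z).continuousAt.tendsto.comp hz).mono_left (nhdsWithin_le_nhds (s := {0}ᶜ))
  have h2 := ((hC w).continuousAt.tendsto.comp hw).mono_left (nhdsWithin_le_nhds (s := {0}ᶜ))
  refine tendsto_nhds_unique h1 (h2.congr' ?_)
  filter_upwards [nhdsWithin_le_nhds (hz.eventually (hBrel z)),
    nhdsWithin_le_nhds (hw.eventually (hCrel w)), nhdsWithin_le_nhds hΦ,
    nhdsWithin_le_nhds (hγ.eventually (hV _ hξ)), self_mem_nhdsWithin] with r e1 e2 e3 e4 hr0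
  have hr0 : r ≠ 0 := hr0
  have e := e4 e3
  simp only [Prod.smul_fst, Prod.smul_snd, sub_eq_zero] at e
  simp only [smul_eq_mul] at e1 e2
  apply mul_left_cancel₀ (pow_ne_zero j hr0)
  simp only [Function.comp]
  rw [← e1, ← e2, e]

lemma exists_snd (z : Fin n → ℂ) : ∃ w, w ≠ 0 ∧ S.P z + S.Ps w = 0 := by
  by_cases h : S.P z = 0
  · obtain ⟨w, hw, h0⟩ := S.hPs.zero
    exact ⟨w, hw, by rw [h, h0, add_zero]⟩
  · obtain ⟨w, hw⟩ := S.hPs.surj (-S.P z)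
    refine ⟨w, ?_, by rw [hw, add_neg_cancel]⟩
    rintro rfl
    rw [S.hPs.apply_zero] at hw
    exact h (neg_eq_zero.1 hw.symm)

lemma exists_fst (w : Fin n → ℂ) : ∃ z, z ≠ 0 ∧ S.P z + S.Ps w = 0 := by
  by_cases h : S.Ps w = 0
  · obtain ⟨z, hz, h0⟩ := S.hP.zero
    exact ⟨z, hz, by rw [h, h0, add_zero]⟩
  · obtain ⟨z, hz⟩ := S.hP.surj (-S.Ps w)
    refine ⟨z, ?_, by rw [hz, neg_add_cancel]⟩
    rintro rfl
    rw [S.hP.apply_zero] at hz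
    exact h (neg_eq_zero.1 hz.symm)

/-- A pair of first integrals without constant term has order at least `k`: the lower order
homogeneous parts are invariant under multiplication by a primitive `k`-th root of unity, hence
vanish. -/
lemma order_pair {f g : (Fin n → ℂ) → ℂ} (hf : AnalyticAt ℂ f 0) (hg : AnalyticAt ℂ g 0)
    (hf0 : f 0 = 0) (hg0 : g 0 = 0)
    (hV : ∀ ξ ∈ cone S.P S.Ps, S.Van (fun ξ => f ξ.1 - g ξ.2) ξ) :
    OrderGE ℂ k f ∧ OrderGE ℂ k g := by
  have hk := S.hP.pos
  suffices ∀ j, 1 ≤ j → j ≤ k → OrderGE ℂ j f ∧ OrderGE ℂ j g from this k hk le_rfl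
  intro j hj
  induction j, hj using Nat.le_induction with
  | base =>
    intro _
    obtain ⟨pf, hpf⟩ := hf
    obtain ⟨pg, hpg⟩ := hg
    refine ⟨orderGE_succ_of_diag hpf (fun m hm => absurd hm (by simp)) fun x => ?_,
      orderGE_succ_of_diag hpg (fun m hm => absurd hm (by simp)) fun x => ?_⟩
    · rw [hpf.coeff_zero, hf0]
    · rw [hpg.coeff_zero, hg0]
  | succ j hj ih =>
    intro hjk
    obtain ⟨⟨pf, hpf, h1⟩, ⟨pg, hpg, h2⟩⟩ := ih (by omega)
    have hζ := Complex.isPrimitiveRoot_exp k (by omega)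
    set ζ := Complex.exp (2 * Real.pi * Complex.I / k)
    have hζj : ζ ^ j ≠ 1 := hζ.pow_ne_one_of_pos_of_lt (by omega) (by omega)
    have hfix : ∀ a : ℂ, a = ζ ^ j * a → a = 0 := fun a ha => by
      have : (ζ ^ j - 1) * a = 0 := by linear_combination -ha
      exact (mul_eq_zero.1 this).resolve_left (sub_ne_zero.2 hζj)
    refine ⟨orderGE_succ_of_diag hpf h1 fun z => ?_, orderGE_succ_of_diag hpg h2 fun w => ?_⟩
    · obtain ⟨w, hw, e⟩ := S.exists_snd z
      apply hfix
      rw [← diag_smul, S.leading_eq hV hpf hpg h1 h2 (z := z) (w := w)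
        ⟨fun h => hw (congrArg Prod.snd h), e⟩]
      refine (S.leading_eq hV hpf hpg h1 h2 ⟨fun h => hw (congrArg Prod.snd h), ?_⟩).symm
      simp only [S.hP.hom, hζ.pow_eq_one, one_mul, e]
    · obtain ⟨z, hz, e⟩ := S.exists_fst w
      apply hfix
      rw [← diag_smul, ← S.leading_eq hV hpf hpg h1 h2 (z := z) (w := w)
        ⟨fun h => hz (congrArg Prod.fst h), e⟩]
      refine S.leading_eq hV hpf hpg h1 h2 ⟨fun h => hz (congrArg Prod.fst h), ?_⟩
      simp only [S.hPs.hom, hζ.pow_eq_one, one_mul, e]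

/-- The leading part of a pair of first integrals is a multiple of `(P, -Ps)`. -/
lemma leading_pair {f g : (Fin n → ℂ) → ℂ} (hf : AnalyticAt ℂ f 0) (hg : AnalyticAt ℂ g 0)
    (hf0 : f 0 = 0) (hg0 : g 0 = 0)
    (hV : ∀ ξ ∈ cone S.P S.Ps, S.Van (fun ξ => f ξ.1 - g ξ.2) ξ) :
    ∃ c : ℂ, OrderGE ℂ (k + 1) (fun z => f z - c * S.P z) ∧
      OrderGE ℂ (k + 1) (fun w => g w - (-c) * S.Ps w) := by
  have hk := S.hP.pos
  obtain ⟨⟨pf, hpf, h1⟩, ⟨pg, hpg, h2⟩⟩ := S.order_pair hf hg hf0 hg0 hV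
  obtain ⟨z₁, hz₁⟩ := S.hP.surj 1
  have hF : ∀ z, pf k (fun _ => z) = pf k (fun _ => z₁) * S.P z := by
    intro z
    obtain ⟨w, hw, e⟩ := S.exists_snd z
    obtain ⟨t, ht⟩ := IsAlgClosed.exists_pow_nat_eq (S.P z) hk
    rw [S.leading_eq hV hpf hpg h1 h2 (z := z) (w := w) ⟨fun h => hw (congrArg Prod.snd h), e⟩,
      ← ht, mul_comm, ← diag_smul]
    refine (S.leading_eq hV hpf hpg h1 h2 ⟨fun h => hw (congrArg Prod.snd h), ?_⟩).symm
    simp only [S.hP.hom, ht, hz₁, mul_one, e]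
  refine ⟨pf k (fun _ => z₁), orderGE_sub_hom S.hP hpf h1 hF, orderGE_sub_hom S.hPs hpg h2 ?_⟩
  intro w
  obtain ⟨z, hz, e⟩ := S.exists_fst w
  rw [← S.leading_eq hV hpf hpg h1 h2 (z := z) (w := w) ⟨fun h => hz (congrArg Prod.fst h), e⟩, hF]
  linear_combination pf k (fun _ => z₁) * e

end LeviSetup

/-- Iterated derivatives in the second variable depend analytically on both variables. -/
lemma exists_iteratedDeriv_snd {T : ℂ × ℂ → ℂ} (hT : AnalyticAt ℂ T 0) (i : ℕ) :
    ∃ D : ℂ × ℂ → ℂ, AnalyticAt ℂ D 0 ∧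
      ∀ᶠ y in 𝓝 (0 : ℂ × ℂ), iteratedDeriv i (fun s => T (y.1, s)) y.2 = D y := by
  induction i with
  | zero => exact ⟨T, hT, by simp⟩
  | succ i ih =>
    obtain ⟨D, hD, h⟩ := ih
    refine ⟨fun y => fderiv ℂ D y (0, 1),
      ((ContinuousLinearMap.apply ℂ ℂ ((0 : ℂ), (1 : ℂ))).analyticAt _).fun_comp hD.fderiv, ?_⟩
    filter_upwards [h.eventually_nhds, hD.eventually_analyticAt] with y h1 h2
    rw [iteratedDeriv_succ]
    have hc : HasDerivAt (fun s : ℂ => (y.1, s)) (0, 1) y.2 :=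
      (hasDerivAt_const _ _).prodMk (hasDerivAt_id _)
    have hd : HasDerivAt (fun s : ℂ => D (y.1, s)) (fderiv ℂ D y (0, 1)) y.2 :=
      h2.differentiableAt.hasFDerivAt.comp_hasDerivAt_of_eq _ hc rfl
    refine (hd.congr_of_eventuallyEq ?_).deriv
    exact hc.continuousAt.eventually h1

/-- The order of vanishing in `s` is upper semicontinuous in the parameter `r`. -/
lemma le_order_of_eventually {T : ℂ × ℂ → ℂ} (hT : AnalyticAt ℂ T 0) (N : ℕ)
    (h : ∀ᶠ r in 𝓝[≠] (0 : ℂ), (N : ℕ∞) ≤ analyticOrderAt (fun s => T (r, s)) 0) :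
    (N : ℕ∞) ≤ analyticOrderAt (fun s => T (0, s)) 0 := by
  have hr : Tendsto (fun r : ℂ => (r, (0 : ℂ))) (𝓝 0) (𝓝 0) := by
    have : ContinuousAt (fun r : ℂ => (r, (0 : ℂ))) 0 := by fun_prop
    exact this.tendsto
  have hs : ∀ r : ℂ, AnalyticAt ℂ T (r, 0) → AnalyticAt ℂ (fun s => T (r, s)) 0 := fun r hr =>
    AnalyticAt.fun_comp (g := T) (f := fun s => (r, s)) hr
      (analyticAt_const.prod analyticAt_id)
  rw [natCast_le_analyticOrderAt_iff_iteratedDeriv_eq_zero (hs 0 hT)]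
  intro i hi
  obtain ⟨D, hD, hDe⟩ := exists_iteratedDeriv_snd hT i
  have e0 : iteratedDeriv i (fun s => T (0, s)) 0 = D 0 := hDe.self_of_nhds
  rw [e0]
  have h1 : Tendsto (fun r : ℂ => D (r, 0)) (𝓝[≠] 0) (𝓝 (D 0)) :=
    (hD.continuousAt.tendsto.comp hr).mono_left nhdsWithin_le_nhds
  refine tendsto_nhds_unique h1 (tendsto_const_nhds.congr' ?_)
  filter_upwards [h, nhdsWithin_le_nhds (hr.eventually hDe),
    nhdsWithin_le_nhds (hr.eventually hT.eventually_analyticAt)] with r h2 h3 h4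
  rw [natCast_le_analyticOrderAt_iff_iteratedDeriv_eq_zero (hs r h4)] at h2
  exact (h2 i hi).symm.trans h3

lemma OrderGE.le_analyticOrderAt {N : ℕ} {g : ℂ → ℂ} (h : OrderGE ℂ N g) :
    (N : ℕ∞) ≤ analyticOrderAt g 0 := by
  rw [natCast_le_analyticOrderAt h.analyticAt]
  obtain ⟨p, hp, h0⟩ := h
  obtain ⟨B, hB, hrel, -⟩ := exists_blowup N hp h0
  have hc : AnalyticAt ℂ (fun s : ℂ => (s, (1 : ℂ))) 0 := analyticAt_id.prod analyticAt_const
  refine ⟨fun s => B (s, 1), AnalyticAt.fun_comp (g := B) (f := fun s : ℂ => (s, (1 : ℂ)))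
    (hB 1) hc, ?_⟩
  have : ∀ᶠ s in 𝓝 (0 : ℂ), g (s • (1 : ℂ)) = s ^ N • B (s, 1) :=
    hc.continuousAt.eventually (hrel 1)
  filter_upwards [this] with s hs
  simpa using hs

namespace LeviSetup

variable {n k : ℕ} (S : LeviSetup n k)

/-- The first integrals read off on the slices `r = const` do not all have order `> k`. -/
lemma frequently_order {m u : Fin n → ℂ} (hm0 : S.Ps m = 0)
    {τ : ℂ × (Fin n → ℂ) → ℂ} (hτ : AnalyticAt ℂ τ 0)
    (hτ0 : τ 0 = 0)
    (hsec : ∀ᶠ p in 𝓝 (0 : ℂ × (Fin n → ℂ)), S.Φ (p.1, (p.2, m + τ p • u)) = 0) :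
    ∃ᶠ r in 𝓝[≠] (0 : ℂ), ¬ OrderGE ℂ (k + 1) (fun Z => τ (r, r⁻¹ • Z) - τ (r, 0)) := by
  intro hcon
  obtain ⟨z₁, hz₁⟩ := S.hP.surj 1
  have ha : AnalyticAt ℂ (fun y : ℂ × ℂ => (y.1, y.2 • z₁)) 0 :=
    analyticAt_fst.prod (analyticAt_snd.fun_smul analyticAt_const)
  have hb : AnalyticAt ℂ (fun y : ℂ × ℂ => (y.1, (0 : Fin n → ℂ))) 0 :=
    analyticAt_fst.prod analyticAt_const
  have hT : AnalyticAt ℂ (fun y : ℂ × ℂ => τ (y.1, y.2 • z₁) - τ (y.1, 0)) 0 :=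
    (AnalyticAt.fun_comp_of_eq (g := τ) hτ ha (by simp)).fun_sub
      (AnalyticAt.fun_comp_of_eq (g := τ) hτ hb (by simp))
  have hord := le_order_of_eventually hT (k + 1) (by
    filter_upwards [hcon, self_mem_nhdsWithin] with r hr hr0
    have hr0 : r ≠ 0 := hr0
    have hr := (not_not.1 hr).comp_clm ((ContinuousLinearMap.toSpanSingleton ℂ (r • z₁)))
    have e : (fun s : ℂ => τ (r, r⁻¹ • (ContinuousLinearMap.toSpanSingleton ℂ (r • z₁)) s)
        - τ (r, 0)) = fun s => τ (r, s • z₁) - τ (r, 0) := by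
      funext s
      rw [ContinuousLinearMap.toSpanSingleton_apply, smul_comm s r, inv_smul_smul₀ hr0]
    rw [e] at hr
    exact hr.le_analyticOrderAt)
  have hT0 : AnalyticAt ℂ (fun s : ℂ => τ (0, s • z₁) - τ (0, 0)) 0 :=
    AnalyticAt.fun_comp (g := fun y : ℂ × ℂ => τ (y.1, y.2 • z₁) - τ (y.1, 0))
      (f := fun s => ((0 : ℂ), s)) hT (analyticAt_const.prod analyticAt_id)
  obtain ⟨q, hq, hqe⟩ := (natCast_le_analyticOrderAt hT0).1 hord
  have hcs : Tendsto (fun s : ℂ => ((0 : ℂ), s • z₁)) (𝓝 0) (𝓝 0) := by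
    have : ContinuousAt (fun s : ℂ => ((0 : ℂ), s • z₁)) 0 := by fun_prop
    rw [ContinuousAt, zero_smul] at this
    exact this
  have hh : Tendsto (fun s : ℂ => τ (0, s • z₁)) (𝓝 0) (𝓝 0) := by
    have := hτ.continuousAt.tendsto.comp hcs
    rwa [hτ0] at this
  -- `h(s) = τ(0, s z₁)` satisfies `h = O(s ^ (k + 1))` and `s ^ k + Ps (m + h u) = 0`.
  have hO : (fun s : ℂ => τ (0, s • z₁)) =O[𝓝 0] fun s => s ^ (k + 1) := by
    have h1 : (fun s : ℂ => s ^ (k + 1) * q s) =O[𝓝 0] fun s => s ^ (k + 1) * 1 :=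
      (Asymptotics.isBigO_refl _ _).mul (hq.continuousAt.isBigO_one ℂ)
    simp only [mul_one] at h1
    refine h1.congr' ?_ EventuallyEq.rfl
    filter_upwards [hqe] with s hs
    have : τ (0, 0) = 0 := hτ0
    rw [this, sub_zero, sub_zero, smul_eq_mul] at hs
    exact hs.symm
  have hPO : (fun x : ℂ => S.Ps (m + x • u)) =O[𝓝 0] fun x => x := by
    have hd : DifferentiableAt ℂ (fun x : ℂ => S.Ps (m + x • u)) 0 := by
      have h1 : DifferentiableAt ℂ (fun x : ℂ => m + x • u) 0 := by fun_prop
      exact DifferentiableAt.comp (g := S.Ps) (0 : ℂ) (S.hPs.an _).differentiableAt h1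
    have := hd.isBigO_sub
    simpa [hm0] using this
  have hk : (fun s : ℂ => s ^ k) =O[𝓝 0] fun s => s ^ (k + 1) := by
    refine Asymptotics.IsBigO.trans ?_ hO
    refine (hPO.comp_tendsto hh).neg_left.congr' ?_ EventuallyEq.rfl
    filter_upwards [hcs.eventually hsec] with s hs
    rw [S.Φ0] at hs
    simp only [S.hP.hom, hz₁, mul_one] at hs
    simp only [Function.comp]
    linear_combination -hs
  have hlt : (fun s : ℂ => s ^ (k + 1)) =o[𝓝 0] fun s => s ^ k :=
    Asymptotics.isLittleO_pow_pow (Nat.lt_succ_self k)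
  refine Asymptotics.isLittleO_irrefl ?_ (hk.trans_isLittleO hlt)
  have : ∃ᶠ s in 𝓝[≠] (0 : ℂ), s ^ k ≠ 0 :=
    Eventually.frequently (by
      filter_upwards [self_mem_nhdsWithin] with s hs using pow_ne_zero _ hs)
  exact this.filter_mono nhdsWithin_le_nhds

/-- There are holomorphic germs `f = P + …`, `g = -Ps + …` such that `f(z) = g(w)` on the
complexified hypersurface. -/
lemma exists_pair : ∃ f g : (Fin n → ℂ) → ℂ,
    OrderGE ℂ (k + 1) (fun z => f z - S.P z) ∧ OrderGE ℂ (k + 1) (fun w => g w + S.Ps w) ∧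
      ∀ ξ ∈ cone S.P S.Ps, S.Van (fun ξ => f ξ.1 - g ξ.2) ξ := by
  obtain ⟨m, hm, hm0⟩ := S.hPs.zero
  obtain ⟨u, hu⟩ : ∃ u, fderiv ℂ S.Ps m u = 1 := by
    obtain ⟨h, hh⟩ := S.hPs.reg m hm
    exact ⟨(fderiv ℂ S.Ps m h)⁻¹ • h, by rw [map_smul, smul_eq_mul, inv_mul_cancel₀ hh]⟩
  have hcone : ((0 : Fin n → ℂ), m) ∈ cone S.P S.Ps := by
    refine ⟨fun h => hm (congrArg Prod.snd h), ?_⟩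
    simp only [S.hP.apply_zero, hm0, add_zero]
  have hΦ0 : S.Φ (0, (0, m)) = 0 := by rw [S.Φ0]; exact hcone.2
  have hv : fderiv ℂ S.Φ (0, (0, m)) (0, (0, u)) = 1 := by
    rw [S.fderiv_Φ]; simp [hu]
  obtain ⟨τ, hτ, hτ0, hsec⟩ := exists_implicit (S.anΦ (0, m)) hΦ0 hv
    ((ContinuousLinearMap.fst ℂ ℂ (Fin n → ℂ)).prod
      ((ContinuousLinearMap.snd ℂ ℂ (Fin n → ℂ)).prod (0 : ℂ × (Fin n → ℂ) →L[ℂ] (Fin n → ℂ))))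
  have hsec : ∀ᶠ p in 𝓝 (0 : ℂ × (Fin n → ℂ)), S.Φ (p.1, (p.2, m + τ p • u)) = 0 := by
    filter_upwards [hsec] with p hp
    simpa using hp
  obtain ⟨r, hr, hf, hw⟩ := ((S.frequently_order hm0 hτ hτ0 hsec).and_eventually
    (S.first_integral hm hm0 hu hτ hτ0 hsec)).exists
  set f : (Fin n → ℂ) → ℂ := fun Z => τ (r, r⁻¹ • Z) with hfdef
  obtain ⟨g, hg, hV⟩ := S.second_integral hf hw
  have hfg : f 0 = g 0 := by
    have := (hV _ hcone).self_of_nhds hΦ0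
    simpa [sub_eq_zero] using this
  obtain ⟨c, h1, h2⟩ := S.leading_pair (f := fun z => f z - f 0) (g := fun w => g w - g 0)
    (hf.fun_sub analyticAt_const) (hg.fun_sub analyticAt_const) (sub_self _) (sub_self _) (by
      intro ξ hξ
      filter_upwards [hV ξ hξ] with y hy hy0
      have : f (y.1 • y.2).1 - g (y.1 • y.2).2 = 0 := hy hy0
      rw [hfg]
      linear_combination this)
  have hc : c ≠ 0 := by
    rintro rfl
    apply hr
    have e : f 0 = τ (r, 0) := by simp [hfdef]
    simpa [e] using h1
  refine ⟨fun z => c⁻¹ * (f z - f 0), fun w => c⁻¹ * (g w - g 0), ?_, ?_, ?_⟩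
  · rw [orderGE_iff] at h1 ⊢
    have e : (fun z => c⁻¹ * (f z - f 0) - S.P z) = fun z => c⁻¹ * (f z - f 0 - c * S.P z) := by
      funext z; field_simp
    rw [e]
    exact ⟨analyticAt_const.fun_mul h1.1, h1.2.const_mul_left _⟩
  · rw [orderGE_iff] at h2 ⊢
    have e : (fun z => c⁻¹ * (g z - g 0) + S.Ps z)
        = fun z => c⁻¹ * (g z - g 0 - (-c) * S.Ps z) := by
      funext z; field_simp; ring
    rw [e]
    exact ⟨analyticAt_const.fun_mul h2.1, h2.2.const_mul_left _⟩
  · intro ξ hξ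
    filter_upwards [hV ξ hξ] with y hy hy0
    have : f (y.1 • y.2).1 - g (y.1 • y.2).2 = 0 := hy hy0
    rw [hfg]
    linear_combination c⁻¹ * this

end LeviSetup

/-! ### Comparison of the two real hypersurfaces -/

/-- If a smooth real hypersurface `{a = 0}` is contained in `{b = 0}` and `a`, `b` have a common
transversal direction `v`, then the two zero sets agree locally. The inclusion may be restricted to
a set `Q` invariant under translation along `v`. -/
lemma zero_of_zero {Y : Type} [NormedAddCommGroup Y] [NormedSpace ℝ Y] [CompleteSpace Y]
    {a b : Y → ℝ} {y₀ v : Y} (ha : AnalyticAt ℝ a y₀) (hb : AnalyticAt ℝ b y₀) (ha0 : a y₀ = 0)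
    (hv : fderiv ℝ a y₀ v = 1) (hbv : fderiv ℝ b y₀ v ≠ 0) (Q : Y → Prop)
    (hQ : ∀ y (s : ℝ), Q y → Q (y + s • v)) (h : ∀ᶠ y in 𝓝 y₀, Q y → a y = 0 → b y = 0) :
    ∀ᶠ y in 𝓝 y₀, Q y → b y = 0 → a y = 0 := by
  set L := fderiv ℝ a y₀ with hL
  obtain ⟨κ, hκ, hκ0, h1, h2⟩ := exists_chart ha ha0 hL.symm hv
  have hLc : Continuous L := L.continuous
  have hac := ha.continuousAt
  set X : Y → Y := fun y => y - y₀ + (a y - L (y - y₀)) • v with hX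
  set X' : Y → Y := fun y => X y - a y • v with hX'
  have hXc : ContinuousAt X y₀ := by fun_prop
  have hX0 : X y₀ = 0 := by simp [hX, ha0]
  have hX'c : ContinuousAt X' y₀ := by fun_prop
  have hX'0 : X' y₀ = 0 := by simp [hX', hX0, ha0]
  set s : Y → ℝ := fun y => κ (X' y) - a y - κ (X y) with hs
  have hκX : ContinuousAt (fun y => κ (X y)) y₀ :=
    ContinuousAt.comp_of_eq hκ.continuousAt hXc hX0
  have hκX' : ContinuousAt (fun y => κ (X' y)) y₀ :=
    ContinuousAt.comp_of_eq hκ.continuousAt hX'c hX'0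
  have hsc : ContinuousAt s y₀ := (hκX'.sub hac).sub hκX
  have hs0 : s y₀ = 0 := by simp [hs, hX0, hX'0, ha0]
  have hy' : Tendsto (fun y => y + s y • v) (𝓝 y₀) (𝓝 y₀) := by
    have : ContinuousAt (fun y => y + s y • v) y₀ := by fun_prop
    have := this.tendsto
    simpa [hs0] using this
  have hX't : Tendsto X' (𝓝 y₀) (𝓝 0) := by
    have := hX'c.tendsto
    rwa [hX'0] at this
  have hε : 0 < |fderiv ℝ b y₀ v| / (2 * (‖v‖ + 1)) := by positivity
  have hst := (hasStrictFDerivAt_iff_isLittleO.1 hb.hasStrictFDerivAt).def hε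
  have hpair : Tendsto (fun y => (y + s y • v, y)) (𝓝 y₀) (𝓝 (y₀, y₀)) :=
    hy'.prodMk_nhds tendsto_id
  filter_upwards [h2, hX't.eventually h1, hy'.eventually h, hpair.eventually hst]
    with y e1 e2 e3 e4 hQy hby
  have ey : y₀ + X' y + κ (X' y) • v = y + s y • v := by
    have e1' : y₀ + X y + κ (X y) • v = y := e1
    have e5 : y₀ + X' y + κ (X' y) • v = (y₀ + X y + κ (X y) • v) + s y • v := by
      simp only [hX', hs]
      module
    rw [e5, e1']
  have hLX : L (X' y) = 0 := by
    simp only [hX', hX, map_sub, map_add, map_smul, hv, smul_eq_mul]; ring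
  have hay : a (y + s y • v) = 0 := by rw [← ey, e2, hLX]
  have hb' : b (y + s y • v) = 0 := e3 (hQ _ _ hQy) hay
  have hs : s y = 0 := by
    by_contra hne
    simp only [hb', hby, add_sub_cancel_left, map_smul, smul_eq_mul, sub_zero, zero_sub, norm_neg,
      norm_mul, norm_smul, Real.norm_eq_abs] at e4
    have hpos : 0 < |s y| := abs_pos.2 hne
    have hd : 0 < |fderiv ℝ b y₀ v| := abs_pos.2 hbv
    have e5 : |fderiv ℝ b y₀ v| / (2 * (‖v‖ + 1)) * (|s y| * ‖v‖)
        < |s y| * |fderiv ℝ b y₀ v| := by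
      rw [div_mul_eq_mul_div, div_lt_iff₀ (by positivity)]
      have := mul_pos hpos hd
      nlinarith [norm_nonneg v, mul_nonneg this.le (norm_nonneg v)]
    linarith
  rwa [hs, zero_smul, add_zero] at hay

namespace LeviSetup

variable {n k : ℕ} (S : LeviSetup n k)

lemma fderiv_slice {G : ℝ × (Fin n → ℂ) → ℝ} {z₀ : Fin n → ℂ} (hG : AnalyticAt ℝ G (0, z₀))
    {c : ℝ} (h : ∀ z, G (0, z) = c * (S.P z).re) (v : Fin n → ℂ) :
    fderiv ℝ G (0, z₀) (0, v) = c * (fderiv ℂ S.P z₀ v).re := by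
  have h1 : HasFDerivAt (fun x => G (0, x))
      ((fderiv ℝ G (0, z₀)).comp (ContinuousLinearMap.inr ℝ ℝ (Fin n → ℂ))) z₀ :=
    hG.differentiableAt.hasFDerivAt.comp z₀ (hasFDerivAt_prodMk_right 0 z₀)
  have h2 : HasFDerivAt (fun x => c * (S.P x).re)
      (c • (Complex.reCLM.comp ((fderiv ℂ S.P z₀).restrictScalars ℝ))) z₀ :=
    (Complex.reCLM.hasFDerivAt.comp z₀
      ((S.hP.an z₀).differentiableAt.hasFDerivAt.restrictScalars ℝ)).const_mul c
  rw [funext h] at h1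
  have := congrArg (fun L => L v) (h1.unique h2)
  simpa using this

/-- Let `f = P + O(k + 1)` be such that `Re f` vanishes at the real points of the strict transform.
Then, near a direction `z₀ ≠ 0` and off `r = 0`, the sets `{F = 0}` and `{Re f = 0}` agree: both
blow-ups restrict to a multiple of `Re P` on `r = 0`, so they have a common transversal direction. -/
lemma local_iff {f : (Fin n → ℂ) → ℂ} (hf : OrderGE ℂ (k + 1) (fun z => f z - S.P z))
    (hV : ∀ z, (z, star z) ∈ cone S.P S.Ps →
      ∀ᶠ y in 𝓝 ((0 : ℂ), (z, star z)), y.2.2 = star y.2.1 → star y.1 = y.1 → S.Φ y = 0 →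
        (f (y.1 • y.2.1)).re = 0)
    {z₀ : Fin n → ℂ} (hz₀ : z₀ ≠ 0) :
    ∀ᶠ y in 𝓝 ((0 : ℝ), z₀), y.1 ≠ 0 →
      (S.F ((y.1 : ℂ) • y.2) = 0 ↔ (f ((y.1 : ℂ) • y.2)).re = 0) := by
  obtain ⟨p, hp, hp0⟩ := hf
  obtain ⟨B, hB, hrel, -⟩ := exists_blowup (k + 1) hp hp0
  set J : ℝ × (Fin n → ℂ) →L[ℝ] ℂ × (Fin n → ℂ) × (Fin n → ℂ) :=
    (Complex.ofRealCLM.comp (ContinuousLinearMap.fst ℝ ℝ (Fin n → ℂ))).prod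
      ((iota n).comp (ContinuousLinearMap.snd ℝ ℝ (Fin n → ℂ))) with hJ
  set J₁ : ℝ × (Fin n → ℂ) →L[ℝ] ℂ × (Fin n → ℂ) :=
    (Complex.ofRealCLM.comp (ContinuousLinearMap.fst ℝ ℝ (Fin n → ℂ))).prod
      (ContinuousLinearMap.snd ℝ ℝ (Fin n → ℂ)) with hJ₁
  have hJa : ∀ y, J y = ((y.1 : ℂ), (y.2, star y.2)) := fun y => by simp [hJ, iota_apply]
  have hJ₁a : ∀ y, J₁ y = ((y.1 : ℂ), y.2) := fun y => by simp [hJ₁]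
  have hJt : Tendsto J (𝓝 (0, z₀)) (𝓝 (0, (z₀, star z₀))) := by
    have := J.continuous.tendsto (0, z₀)
    rw [hJa (0, z₀)] at this
    simpa using this
  have hJ₁t : Tendsto J₁ (𝓝 (0, z₀)) (𝓝 (0, z₀)) := by
    have := J₁.continuous.tendsto (0, z₀)
    rw [hJ₁a (0, z₀)] at this
    simpa using this
  set a : ℝ × (Fin n → ℂ) → ℝ := fun y => (S.Φ (J y)).re with ha
  set b : ℝ × (Fin n → ℂ) → ℝ := fun y => (S.P y.2 + y.1 * B (J₁ y)).re with hb
  have haa : AnalyticAt ℝ a (0, z₀) := by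
    refine (Complex.reCLM.analyticAt _).fun_comp ?_
    refine AnalyticAt.fun_comp_of_eq (g := S.Φ) (f := J) (S.anΦ (z₀, star z₀)).restrictScalars
      (J.analyticAt _) ?_
    rw [hJa]; simp
  have hba : AnalyticAt ℝ b (0, z₀) := by
    have h1 : AnalyticAt ℂ (fun y : ℂ × (Fin n → ℂ) => S.P y.2 + y.1 * B y) (0, z₀) :=
      (AnalyticAt.fun_comp (g := S.P) (f := fun y : ℂ × (Fin n → ℂ) => y.2) (S.hP.an _)
        analyticAt_snd).fun_add (analyticAt_fst.fun_mul (hB z₀))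
    have h2 : AnalyticAt ℝ (fun y => (fun y : ℂ × (Fin n → ℂ) => S.P y.2 + y.1 * B y) (J₁ y))
        (0, z₀) :=
      AnalyticAt.fun_comp_of_eq (f := J₁) h1.restrictScalars
        (J₁.analyticAt _) (by rw [hJ₁a]; simp)
    have h3 := (Complex.reCLM.analyticAt _).fun_comp h2
    refine h3.congr (Eventually.of_forall fun y => ?_)
    simp only [hb, hJ₁a, Complex.reCLM_apply]
  have ha0 : ∀ z, a (0, z) = 2 * (S.P z).re := fun z => by
    simp only [ha, hJa, Complex.ofReal_zero, S.Φ0, S.conjP, star_star]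
    simp [two_mul]
  have hb0 : ∀ z, b (0, z) = 1 * (S.P z).re := fun z => by simp [hb]
  -- Both zero conditions, rewritten off the exceptional divisor.
  have hFa : ∀ᶠ y in 𝓝 ((0 : ℝ), z₀), y.1 ≠ 0 →
      (S.F ((y.1 : ℂ) • y.2) = 0 ↔ a y = 0) ∧ (a y = 0 → S.Φ (J y) = 0) := by
    have hsm : Tendsto (fun y : ℝ × (Fin n → ℂ) => (y.1 : ℂ) • y.2) (𝓝 (0, z₀)) (𝓝 0) := by
      have : ContinuousAt (fun y : ℝ × (Fin n → ℂ) => (y.1 : ℂ) • y.2) (0, z₀) := by fun_prop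
      have := this.tendsto
      simpa using this
    filter_upwards [hsm.eventually S.real, hJt.eventually (S.rel _),
      hJt.eventually (S.Φconj _)] with y h1 h2 h3 hy
    have hc : (y.1 : ℂ) ≠ 0 := Complex.ofReal_ne_zero.2 hy
    have him : (S.Φ (J y)).im = 0 := by
      rw [hJa] at h3 ⊢
      simp only [star_star, Complex.star_def, Complex.conj_ofReal] at h3
      exact Complex.conj_eq_iff_im.1 h3.symm
    have hzero : a y = 0 → S.Φ (J y) = 0 := fun h => Complex.ext h him
    refine ⟨?_, hzero⟩
    have e : ((2 * S.F ((y.1 : ℂ) • y.2) : ℝ) : ℂ) = (y.1 : ℂ) ^ k * S.Φ (J y) := by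
      rw [← h1]
      have h2' := h2
      rw [hJa] at h2' ⊢
      rw [← h2']
      congr 1
      simp [star_smul]
    constructor
    · intro h
      rw [h] at e
      have : S.Φ (J y) = 0 := by
        have e' := e.symm
        simp only [mul_zero, Complex.ofReal_zero] at e'
        exact (mul_eq_zero.1 e').resolve_left (pow_ne_zero _ hc)
      simp [ha, this]
    · intro h
      rw [hzero h, mul_zero, Complex.ofReal_eq_zero] at e
      linarith
  have hfb : ∀ᶠ y in 𝓝 ((0 : ℝ), z₀), y.1 ≠ 0 →
      ((f ((y.1 : ℂ) • y.2)).re = 0 ↔ b y = 0) := by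
    filter_upwards [hJ₁t.eventually (hrel z₀)] with y h1 hy
    have e : f ((y.1 : ℂ) • y.2) = ((y.1 ^ k : ℝ) : ℂ) * (S.P y.2 + y.1 * B (J₁ y)) := by
      have h1' := h1
      rw [hJ₁a] at h1' ⊢
      simp only [S.hP.hom, smul_eq_mul] at h1'
      push_cast
      linear_combination h1'
    rw [e, Complex.re_ofReal_mul]
    simp only [hb, mul_eq_zero, pow_ne_zero k hy, false_or]
  suffices h : ∀ᶠ y in 𝓝 ((0 : ℝ), z₀), y.1 ≠ 0 → (a y = 0 ↔ b y = 0) by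
    filter_upwards [h, hFa, hfb] with y h1 h2 h3 hy
    rw [(h2 hy).1, h3 hy, h1 hy]
  by_cases hz : (S.P z₀).re = 0
  · have hcone : (z₀, star z₀) ∈ cone S.P S.Ps := by
      refine ⟨fun h => hz₀ (congrArg Prod.fst h), ?_⟩
      simp only [S.conjP, star_star]
      apply Complex.ext <;> simp [hz]
    have hab : ∀ᶠ y in 𝓝 ((0 : ℝ), z₀), y.1 ≠ 0 → a y = 0 → b y = 0 := by
      filter_upwards [hFa, hfb, hJt.eventually (hV z₀ hcone)] with y h1 h2 h3 hy hay
      rw [← h2 hy]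
      have := h3 (by rw [hJa]) (by rw [hJa]; simp) ((h1 hy).2 hay)
      rwa [hJa] at this
    obtain ⟨w, hw⟩ := S.hP.reg z₀ hz₀
    set v : Fin n → ℂ := (2 * fderiv ℂ S.P z₀ w)⁻¹ • w with hv
    have hPv : fderiv ℂ S.P z₀ v = ((1 / 2 : ℝ) : ℂ) := by
      rw [hv, map_smul, smul_eq_mul]
      push_cast
      field_simp
    have hba' := zero_of_zero haa hba (v := (0, v)) (by rw [ha0, hz, mul_zero])
      (by rw [S.fderiv_slice haa ha0, hPv, Complex.ofReal_re]; norm_num)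
      (by rw [S.fderiv_slice hba hb0, hPv, Complex.ofReal_re]; norm_num)
      (fun y => y.1 ≠ 0) (fun y s hy => by simpa using hy) hab
    filter_upwards [hab, hba'] with y h1 h2 hy
    exact ⟨h1 hy, h2 hy⟩
  · filter_upwards [haa.continuousAt.eventually_ne (y := 0) (by rw [ha0]; simpa using hz),
      hba.continuousAt.eventually_ne (y := 0) (by rw [hb0]; simpa using hz)] with y h1 h2 _
    exact ⟨fun h => absurd h h1, fun h => absurd h h2⟩

/-- The conclusion of the theorem for a `LeviSetup`, with `(f(z) - conj (g (conj z))) / 2` as the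
holomorphic function. The local comparison is made uniform by compactness of the unit sphere. -/
lemma conclusion (hF0 : S.F 0 = 0) : ∃ f : (Fin n → ℂ) → ℂ,
    OrderGE ℂ (k + 1) (fun z => f z - S.P z) ∧
      ∀ᶠ z in 𝓝 (0 : Fin n → ℂ), (S.F z = 0 ↔ (f z).re = 0) := by
  obtain ⟨f, g, hf, hg, hV⟩ := S.exists_pair
  set φ : (Fin n → ℂ) → ℂ := fun z => (f z - star (g (star z))) / 2 with hφ
  have hord : OrderGE ℂ (k + 1) (fun z => φ z - S.P z) := by
    rw [orderGE_iff] at hf hg ⊢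
    have h1 := analyticAt_conj_conj hg.1
    have h2 : (fun z : Fin n → ℂ => star (g (star z) + S.Ps (star z)))
        =O[𝓝 0] fun z => ‖z‖ ^ (k + 1) := by
      have ht : Tendsto (fun z : Fin n → ℂ => star z) (𝓝 0) (𝓝 0) := by
        have := (continuous_star (R := Fin n → ℂ)).tendsto 0
        rwa [star_zero] at this
      have := hg.2.comp_tendsto ht
      rw [← Asymptotics.isBigO_norm_left] at this ⊢
      refine this.congr (fun z => ?_) fun z => ?_
      · exact (norm_star _).symm
      · simp [Function.comp, norm_star]
    have e : (fun z => φ z - S.P z)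
        = fun z => (1 / 2 : ℂ) * ((f z - S.P z) - star (g (star z) + S.Ps (star z))) := by
      funext z
      rw [S.conjP, star_star, star_add, star_star]
      simp only [hφ]
      ring
    rw [e]
    exact ⟨analyticAt_const.fun_mul (hf.1.fun_sub h1), (hf.2.sub h2).const_mul_left _⟩
  have hφ0 : φ 0 = 0 := by
    obtain ⟨p, hp, h0⟩ := hord
    have e := hp.coeff_zero (fun _ => 0)
    rw [h0 0 (by omega)] at e
    simpa [S.hP.apply_zero] using e.symm
  refine ⟨φ, hord, ?_⟩
  have hVφ : ∀ z, (z, star z) ∈ cone S.P S.Ps →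
      ∀ᶠ y in 𝓝 ((0 : ℂ), (z, star z)), y.2.2 = star y.2.1 → star y.1 = y.1 → S.Φ y = 0 →
        (φ (y.1 • y.2.1)).re = 0 := by
    intro z hz
    filter_upwards [hV _ hz] with y hy h1 h2 h3
    have e : f (y.1 • y.2.1) - g (y.1 • y.2.2) = 0 := hy h3
    have e' : star (y.1 • y.2.1) = y.1 • y.2.2 := by rw [star_smul, h1, h2]
    simp only [hφ, e', sub_eq_zero.1 e]
    simp
  have hcomp := (isCompact_sphere (0 : Fin n → ℂ) 1).eventually_forall_of_forall_eventually
    (x₀ := (0 : ℝ)) (P := fun r z => r ≠ 0 →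
      (S.F ((r : ℂ) • z) = 0 ↔ (φ ((r : ℂ) • z)).re = 0)) fun z hz =>
      S.local_iff hord hVφ (ne_zero_of_mem_unit_sphere ⟨z, hz⟩)
  have hn : Tendsto (fun z : Fin n → ℂ => ‖z‖) (𝓝 0) (𝓝 0) := by
    simpa using (continuous_norm (E := Fin n → ℂ)).tendsto 0
  filter_upwards [hn.eventually hcomp] with z hz
  by_cases h0 : z = 0
  · rw [h0, hF0, hφ0]; simp
  have hne : ‖z‖ ≠ 0 := norm_ne_zero_iff.2 h0
  have hne' : ((‖z‖ : ℝ) : ℂ) ≠ 0 := Complex.ofReal_ne_zero.2 hne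
  have := hz (((‖z‖ : ℝ) : ℂ)⁻¹ • z) (by
    rw [mem_sphere_zero_iff_norm, norm_smul, norm_inv, Complex.norm_real, norm_norm,
      inv_mul_cancel₀ hne]) hne
  rwa [smul_inv_smul₀ hne'] at this

end LeviSetup

/-! ### The complexified picture of the given germ -/

/-- The complexified picture attached to the hypotheses of the theorem: `FC = P(z) + Ps(w) + 2 HC`,
with `HC` the polarization of `H`, and `Φ = P(z) + Ps(w) + 2 r B`, with `HC (r ξ) = r ^ (k + 1) B`. -/
lemma exists_leviSetup {n k : ℕ} (hn : 2 ≤ n) (hk : 0 < k) {P : MvPolynomial (Fin n) ℂ}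
    (hPhom : P.IsHomogeneous k)
    (hPsing : ∀ᶠ z in 𝓝 (0 : Fin n → ℂ),
      (∀ i, MvPolynomial.eval z (MvPolynomial.pderiv i P) = 0) → z = 0)
    {F H : (Fin n → ℂ) → ℝ} (hH : AnalyticAt ℝ H 0)
    (hFeq : ∀ᶠ z in 𝓝 (0 : Fin n → ℂ), F z = (MvPolynomial.eval z P).re + H z)
    (hHord : (fun z : Fin n → ℂ => H z) =O[𝓝 0] fun z => ‖z‖ ^ (k + 1))
    (hLF : LeviFlatGerm F) :
    ∃ S : LeviSetup n k, S.F = F ∧ S.P = fun z => MvPolynomial.eval z P := by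
  obtain ⟨HC, ⟨p, hp, hp0⟩, hreal, hconj⟩ := exists_polarization hH hHord
  obtain ⟨B, hB, hrel, -⟩ := exists_blowup (k + 1) hp hp0
  have hP := isHomSing_of_poly hn hk hPhom hPsing
  have hPs := isHomSing_conj hn hk hPhom hPsing
  set p₁ : (Fin n → ℂ) → ℂ := fun z => MvPolynomial.eval z P with hp₁
  set p₂ : (Fin n → ℂ) → ℂ := fun w => star (MvPolynomial.eval (star w) P) with hp₂
  have an1 : ∀ ξ : (Fin n → ℂ) × (Fin n → ℂ), AnalyticAt ℂ (fun ξ : _ × _ => p₁ ξ.1) ξ :=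
    fun ξ => AnalyticAt.fun_comp (g := p₁) (f := Prod.fst) (hP.an _) analyticAt_fst
  have an2 : ∀ ξ : (Fin n → ℂ) × (Fin n → ℂ), AnalyticAt ℂ (fun ξ : _ × _ => p₂ ξ.2) ξ :=
    fun ξ => AnalyticAt.fun_comp (g := p₂) (f := Prod.snd) (hPs.an _) analyticAt_snd
  have an12 := fun ξ => (an1 ξ).fun_add (an2 ξ)
  set FC : (Fin n → ℂ) × (Fin n → ℂ) → ℂ := fun ξ => p₁ ξ.1 + p₂ ξ.2 + 2 * HC ξ with hFC
  set Φ : ℂ × (Fin n → ℂ) × (Fin n → ℂ) → ℂ :=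
    fun y => p₁ y.2.1 + p₂ y.2.2 + 2 * (y.1 * B y) with hΦ
  have hrel' : ∀ ξ, ∀ᶠ y in 𝓝 ((0 : ℂ), ξ), FC (y.1 • y.2) = y.1 ^ k * Φ y := by
    intro ξ
    filter_upwards [hrel ξ] with y hy
    simp only [hFC, hΦ, hy, Prod.smul_fst, Prod.smul_snd, hP.hom, hPs.hom, smul_eq_mul]
    ring
  have hFconj : ∀ z w, FC (star w, star z) = star (FC (z, w)) := by
    intro z w
    simp only [hFC, hconj, hp₁, hp₂, star_add, star_mul', star_star, star_ofNat]
    ring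
  have hΦ0 : ∀ ξ, Φ (0, ξ) = p₁ ξ.1 + p₂ ξ.2 := fun ξ => by simp [hΦ]
  refine ⟨{
    P := p₁
    Ps := p₂
    F := F
    FC := FC
    Φ := Φ
    hP := hP
    hPs := hPs
    conjP := fun w => rfl
    anF := (an12 0).fun_add (analyticAt_const.fun_mul hp.analyticAt)
    anΦ := fun ξ => (AnalyticAt.fun_comp (f := Prod.snd)
      (g := fun ξ : (Fin n → ℂ) × (Fin n → ℂ) => p₁ ξ.1 + p₂ ξ.2) (an12 _)
      analyticAt_snd).fun_add (analyticAt_const.fun_mul (analyticAt_fst.fun_mul (hB ξ)))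
    rel := hrel'
    Φ0 := hΦ0
    Fconj := hFconj
    Φconj := ?_
    real := ?_
    levi := hLF }, rfl, rfl⟩
  · intro ξ
    have ht : Tendsto (fun y : ℂ × (Fin n → ℂ) × (Fin n → ℂ) => (star y.1, star y.2.2, star y.2.1))
        (𝓝 (0, ξ)) (𝓝 (0, (star ξ.2, star ξ.1))) := by
      have : ContinuousAt (fun y : ℂ × (Fin n → ℂ) × (Fin n → ℂ) =>
        (star y.1, star y.2.2, star y.2.1)) (0, ξ) := by fun_prop
      have := this.tendsto
      simpa using this
    filter_upwards [hrel' ξ, ht.eventually (hrel' _)] with y h1 h2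
    by_cases h0 : y.1 = 0
    · simp only [hΦ, h0, hp₁, hp₂]
      simp [add_comm]
    · have h3 := hFconj (y.1 • y.2).1 (y.1 • y.2).2
      have e : (star (y.1 • y.2).2, star (y.1 • y.2).1)
          = star y.1 • (star y.2.2, star y.2.1) := by
        simp [star_smul]
      rw [e] at h3
      simp only [Prod.mk.eta] at h3
      rw [h1, h2, star_mul', star_pow] at h3
      exact mul_left_cancel₀ (pow_ne_zero k (star_ne_zero.2 h0)) h3
  · filter_upwards [hFeq, hreal] with z h1 h2
    simp only [hFC, h2, hp₁, hp₂, star_star, h1, Complex.star_def, Complex.add_conj]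
    push_cast
    ring

/-! ### The theorem -/

open MvPolynomial in
/-- **Theorem (Fernández-Pérez).** A singular Levi-flat hypersurface
`M = {Re(P(z)) + H(z,z̄) = 0}`, with `P` homogeneous of degree `k` with isolated
singularity and `H = O(|z|^{k+1})`, is defined by the vanishing of the real part of a
holomorphic function `f(z) = P(z) + O(|z|^{k+1})`. -/
theorem stmt_12 (n : ℕ) (hn : 2 ≤ n) (k : ℕ) (hk : 0 < k)
    (P : MvPolynomial (Fin n) ℂ)
    -- `P` is a complex homogeneous polynomial of degree `k`
    (hPhom : P.IsHomogeneous k)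
    -- `P` has an isolated singularity at `0 ∈ ℂⁿ`
    (hPcrit : ∀ i, eval (0 : Fin n → ℂ) (pderiv i P) = 0)
    (hPsing : ∀ᶠ z in 𝓝 (0 : Fin n → ℂ), (∀ i, eval z (pderiv i P) = 0) → z = 0)
    (F H : (Fin n → ℂ) → ℝ)
    (hF : AnalyticAt ℝ F 0) (hH : AnalyticAt ℝ H 0)
    -- `F(z) = Re(P(z)) + H(z, z̄)` with `H = O(|z|^{k+1})`
    (hFeq : ∀ᶠ z in 𝓝 (0 : Fin n → ℂ), F z = (eval z P).re + H z)
    (hHord : (fun z : Fin n → ℂ => H z) =O[𝓝 0] fun z => ‖z‖ ^ (k + 1))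
    -- `M = {F = 0}` is a singular hypersurface at `0`
    (hF0 : F 0 = 0) (hsing : fderiv ℝ F 0 = 0)
    (hirr : IrreducibleRGerm F)
    (hLF : LeviFlatGerm F) :
    ∃ f : (Fin n → ℂ) → ℂ, AnalyticAt ℂ f 0 ∧
      -- `f(z) = P(z) + O(|z|^{k+1})`
      ((fun z : Fin n → ℂ => f z - eval z P) =O[𝓝 0] fun z => ‖z‖ ^ (k + 1)) ∧
      -- `M = {Re(f) = 0}` as germs of sets at `0`
      (∀ᶠ z in 𝓝 (0 : Fin n → ℂ), (F z = 0 ↔ (f z).re = 0)) := by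
  obtain ⟨S, hSF, hSP⟩ := exists_leviSetup hn hk hPhom hPsing hH hFeq hHord hLF
  obtain ⟨f, hf, hiff⟩ := S.conclusion (by rw [hSF]; exact hF0)
  rw [hSF] at hiff
  have hfan : AnalyticAt ℂ f 0 := by
    have h := hf.analyticAt.fun_add (S.hP.an 0)
    simpa using h
  rw [hSP] at hf
  exact ⟨f, hfan, hf.isBigO, hiff⟩
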